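/- arXiv:1802.02023 — 3 statements merged into one kernel-verified Lean document; each statement's English description precedes it below -/
import Mathlib

section
/- Let x > 0 be real. For every real q ∈ (0, e^{−π}) one has 0 < z₄(q) < 1, and the function φ(q) = F₄(x, z₄(q)) / F₄(0, z₄(q)) satisfies (q·d/dq)³ φ(q) = x³ · θ₃(q)⁸ · (1 − 2λ(q)) · (4λ(q)(1−λ(q)))^x, where (q·d/dq)³ denotes the threefold application of the operator f(q) ↦ q·f′(q). -/
open Real

/-- Jacobi theta null value `θ₂(q) = ∑_{n∈ℤ} q^{(n+1/2)²}`. -/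
noncomputable def theta2 (q : ℝ) : ℝ := ∑' n : ℤ, q ^ (((n : ℝ) + 1 / 2) ^ 2)

/-- Jacobi theta null value `θ₃(q) = ∑_{n∈ℤ} q^{n²}`. -/
noncomputable def theta3 (q : ℝ) : ℝ := ∑' n : ℤ, q ^ ((n : ℝ) ^ 2)

/-- Jacobi theta null value `θ₄(q) = ∑_{n∈ℤ} (−1)ⁿ q^{n²}`. -/
noncomputable def theta4 (q : ℝ) : ℝ := ∑' n : ℤ, (-1 : ℝ) ^ n * q ^ ((n : ℝ) ^ 2)

/-- The modular lambda function `λ(q) = θ₂(q)⁴/θ₃(q)⁴`. -/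
noncomputable def modLambda (q : ℝ) : ℝ := theta2 q ^ 4 / theta3 q ^ 4

/-- `z₄(q) = 4λ(q)(1−λ(q))`. -/
noncomputable def z4 (q : ℝ) : ℝ := 4 * modLambda q * (1 - modLambda q)

/-- `F₄(x,z) = ∑_{n=0}^∞ z^{n+x} · ((1/2+x)_n)³/((1+x)_n)³`. -/
noncomputable def F4 (x z : ℝ) : ℝ :=
  ∑' n : ℕ, z ^ ((n : ℝ) + x) *
    ((ascPochhammer ℝ n).eval (1 / 2 + x)) ^ 3 / ((ascPochhammer ℝ n).eval (1 + x)) ^ 3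

/-- The differential operator `f ↦ q·f′(q)`. -/
noncomputable def qDeriv (f : ℝ → ℝ) : ℝ → ℝ := fun q => q * deriv f q

/-- `σ₃(n)`, the sum of the cubes of the positive divisors of `n`. -/
def sigma3 (n : ℕ) : ℕ := ∑ d ∈ n.divisors, d ^ 3

/-!
Write `D = q d/dq` and `b = Dθ₃/θ₃`. The functions `θ₄⁻⁴ D log(θ₂/θ₃)` and
`(log q)² (D b - 2b² - θ₂⁴θ₄⁴/8)` are invariant under `q ↦ q²`, by the duplication formulas for the
theta null values, so each equals its limit at `q = 0`. This yields `Dλ = λ(1 - λ)θ₃⁴` and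
`D b = 2b² + λ(1 - λ)θ₃⁸/8`.

Let `ψ = F₄(x, z₄)/θ₃⁴`. Differentiating three times, with the two equations above and the
inhomogeneous hypergeometric equation of `F₄(x, ·)`, all terms except the inhomogeneity cancel, and
`D³ψ = x³θ₃⁸(1 - 2λ)z₄ˣ`. For `x = 0` this says `D³ψ = 0`; the limits of `D²ψ`, `Dψ` and `ψ` at
`q = 0` are `0`, `0` and `1`, so `ψ = 1`, that is `F₄(0, z₄) = θ₃⁴`. Thus `ψ` is the quotient
`F₄(x, z₄)/F₄(0, z₄)`. The restriction `q < e^{-π}` keeps `λ` below `1/2`, its value at the fixed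
point `e^{-π}` of the inversion, so that `z₄ < 1`.
-/

section

open Filter Set
open scoped Topology

section EulerDerivative

variable {f g : ℝ → ℝ} {f' g' q r : ℝ} {s : Set ℝ}

/-- The function `f` is differentiable at `q` with Euler derivative `q * f'(q)` equal to `f'`.
Because of the division by `q`, the notion is meaningful only for `q ≠ 0`. -/
def HasEulerDerivAt (f : ℝ → ℝ) (f' q : ℝ) : Prop := HasDerivAt f (f' / q) q

namespace HasEulerDerivAt

lemma qDeriv_eq (hf : HasEulerDerivAt f f' q) (hq : q ≠ 0) : qDeriv f q = f' := by
  rw [qDeriv, HasDerivAt.deriv hf, mul_div_cancel₀ _ hq]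

lemma congr_of_eventuallyEq (hf : HasEulerDerivAt f f' q) (h : g =ᶠ[𝓝 q] f) :
    HasEulerDerivAt g f' q :=
  HasDerivAt.congr_of_eventuallyEq hf h

lemma congr_of_eqOn (hf : HasEulerDerivAt f f' q) (hs : IsOpen s) (hq : q ∈ s)
    (h : EqOn g f s) : HasEulerDerivAt g f' q :=
  hf.congr_of_eventuallyEq (h.eventuallyEq_of_mem (hs.mem_nhds hq))

lemma eq_of_eqOn (hf : HasEulerDerivAt f f' q) (hg : HasEulerDerivAt g g' q) (hs : IsOpen s)
    (hq : q ∈ s) (hq0 : q ≠ 0) (h : EqOn f g s) : f' = g' := by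
  rw [← hf.qDeriv_eq hq0, (hg.congr_of_eqOn hs hq h).qDeriv_eq hq0]

lemma const (c q : ℝ) : HasEulerDerivAt (fun _ => c) 0 q := by
  simpa only [HasEulerDerivAt, zero_div] using hasDerivAt_const q c

lemma add (hf : HasEulerDerivAt f f' q) (hg : HasEulerDerivAt g g' q) :
    HasEulerDerivAt (fun t => f t + g t) (f' + g') q :=
  (HasDerivAt.fun_add hf hg).congr_deriv (by ring)

lemma sub (hf : HasEulerDerivAt f f' q) (hg : HasEulerDerivAt g g' q) :
    HasEulerDerivAt (fun t => f t - g t) (f' - g') q :=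
  (HasDerivAt.fun_sub hf hg).congr_deriv (by ring)

lemma mul (hf : HasEulerDerivAt f f' q) (hg : HasEulerDerivAt g g' q) :
    HasEulerDerivAt (fun t => f t * g t) (f' * g q + f q * g') q :=
  (HasDerivAt.fun_mul hf hg).congr_deriv (by ring)

lemma const_mul (c : ℝ) (hf : HasEulerDerivAt f f' q) :
    HasEulerDerivAt (fun t => c * f t) (c * f') q :=
  (HasDerivAt.const_mul c hf).congr_deriv (by ring)

lemma div (hf : HasEulerDerivAt f f' q) (hg : HasEulerDerivAt g g' q) (h : g q ≠ 0) :
    HasEulerDerivAt (fun t => f t / g t) ((f' * g q - f q * g') / g q ^ 2) q :=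
  (HasDerivAt.fun_div hf hg h).congr_deriv (by ring)

lemma pow (hf : HasEulerDerivAt f f' q) (n : ℕ) :
    HasEulerDerivAt (fun t => f t ^ n) (n * f q ^ (n - 1) * f') q :=
  (HasDerivAt.fun_pow hf n).congr_deriv (by ring)

lemma comp (hg : HasEulerDerivAt g g' (f q)) (hf : HasEulerDerivAt f (f q * f') q)
    (h : f q ≠ 0) : HasEulerDerivAt (fun t => g (f t)) (f' * g') q :=
  (HasDerivAt.comp q hg hf).congr_deriv (by field_simp)

lemma comp_sq (hf : HasEulerDerivAt f f' (q ^ 2)) (hq : q ≠ 0) :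
    HasEulerDerivAt (fun t => f (t ^ 2)) (2 * f') q := by
  refine comp (f := fun t => t ^ 2) hf ?_ (pow_ne_zero 2 hq)
  exact (hasDerivAt_pow 2 q).congr_deriv (by push_cast; field_simp)

end HasEulerDerivAt

lemma qDeriv_eqOn (hs : IsOpen s) (hs0 : (0 : ℝ) ∉ s) {f₁ : ℝ → ℝ} (h : EqOn f g s)
    (hg : ∀ q ∈ s, HasEulerDerivAt g (f₁ q) q) : EqOn (qDeriv f) f₁ s := fun q hq =>
  ((hg q hq).congr_of_eqOn hs hq h).qDeriv_eq (ne_of_mem_of_not_mem hq hs0)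

lemma eqOn_const_of_hasEulerDerivAt_zero {c : ℝ}
    (hf : ∀ q ∈ Ioo 0 r, HasEulerDerivAt f 0 q) (h0 : Tendsto f (𝓝[>] 0) (𝓝 c)) :
    ∀ q ∈ Ioo 0 r, f q = c := by
  intro q hq
  refine tendsto_nhds_unique (tendsto_const_nhds.congr' ?_) h0
  filter_upwards [Ioo_mem_nhdsGT (hq.1.trans hq.2)] with t ht
  refine isOpen_Ioo.is_const_of_deriv_eq_zero isPreconnected_Ioo
    (fun t ht => (HasDerivAt.differentiableAt (hf t ht)).differentiableWithinAt)
    (fun t ht => ?_) hq ht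
  rw [HasDerivAt.deriv (hf t ht), zero_div, Pi.zero_apply]

lemma sq_mem_Ioo_zero_one (hq : q ∈ Ioo (0 : ℝ) 1) : q ^ 2 ∈ Ioo (0 : ℝ) 1 :=
  ⟨pow_pos hq.1 2, pow_lt_one₀ hq.1.le hq.2 two_ne_zero⟩

lemma eqOn_const_of_comp_sq_eq {c : ℝ} (hf : ∀ q ∈ Ioo (0 : ℝ) 1, f q = f (q ^ 2))
    (h0 : Tendsto f (𝓝[>] 0) (𝓝 c)) : ∀ q ∈ Ioo (0 : ℝ) 1, f q = c := by
  intro q hq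
  have hiter (n : ℕ) : f (q ^ 2 ^ n) = f q := by
    induction n with
    | zero => rw [pow_zero, pow_one]
    | succ n ih =>
      rw [pow_succ, pow_mul, ← hf _ ⟨pow_pos hq.1 _, pow_lt_one₀ hq.1.le hq.2 (by positivity)⟩, ih]
  have hlim : Tendsto (fun n : ℕ => q ^ 2 ^ n) atTop (𝓝[>] 0) :=
    tendsto_nhdsWithin_iff.2
      ⟨(tendsto_pow_atTop_nhds_zero_of_lt_one hq.1.le hq.2).comp
        (tendsto_pow_atTop_atTop_of_one_lt one_lt_two), .of_forall fun n => pow_pos hq.1 _⟩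
  have hconst := h0.comp hlim
  simp only [Function.comp_def, hiter] at hconst
  exact tendsto_nhds_unique tendsto_const_nhds hconst

end EulerDerivative

section RpowSeries

variable {ι κ : Type*} {s a : ι → ℝ} {q : ℝ}

/-- The generalized power series `∑' i, a i * q ^ s i` with arbitrary real exponents `s i`. -/
noncomputable def rpowSeries (s a : ι → ℝ) (q : ℝ) : ℝ := ∑' i, a i * q ^ s i

/-- The series `∑' i, a i * q ^ s i` converges for every `q` in the open unit interval. -/
def RpowSummable (s a : ι → ℝ) : Prop := ∀ q ∈ Ioo (0 : ℝ) 1, Summable fun i => a i * q ^ s i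

lemma rpow_le_rpow_add_rpow {u v : ℝ} (t : ℝ) (hu : 0 < u) (hq : q ∈ Icc u v) :
    q ^ t ≤ u ^ t + v ^ t := by
  have hq0 := hu.trans_le hq.1
  rcases le_total 0 t with ht | ht
  · linarith [rpow_le_rpow hq0.le hq.2 ht, rpow_nonneg hu.le t]
  · linarith [rpow_le_rpow_of_nonpos hu hq.1 ht, rpow_nonneg (hq0.le.trans hq.2) t]

lemma mul_log_div_mul_rpow_le {r : ℝ} (t : ℝ) (hq : 0 < q) (hr : 0 < r) :
    t * log (r / q) * q ^ t ≤ r ^ t := by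
  have hlog : t * log (r / q) ≤ (r / q) ^ t := by
    rw [rpow_def_of_pos (div_pos hr hq), mul_comm]
    exact (le_add_of_nonneg_right zero_le_one).trans (add_one_le_exp _)
  calc t * log (r / q) * q ^ t ≤ (r / q) ^ t * q ^ t := by gcongr
    _ = r ^ t := by rw [← mul_rpow (by positivity) hq.le, div_mul_cancel₀ _ hq.ne']

lemma abs_mul_rpow_le {u v : ℝ} (t : ℝ) (hu : 0 < u) (hq : q ∈ Ioo u v) :
    |t| * q ^ t ≤ u ^ t / log (q / u) + v ^ t / log (v / q) := by
  have hq0 := hu.trans hq.1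
  have hlogu : 0 < log (q / u) := log_pos ((one_lt_div hu).2 hq.1)
  have hlogv : 0 < log (v / q) := log_pos ((one_lt_div hq0).2 hq.2)
  have hu' : -t * q ^ t ≤ u ^ t / log (q / u) := by
    rw [le_div_iff₀ hlogu]
    refine le_of_eq_of_le ?_ (mul_log_div_mul_rpow_le t hq0 hu)
    rw [← inv_div, log_inv]
    ring
  have hv' : t * q ^ t ≤ v ^ t / log (v / q) := by
    rw [le_div_iff₀ hlogv, mul_right_comm]
    exact mul_log_div_mul_rpow_le t hq0 (hq0.trans hq.2)
  have hu0 : 0 ≤ u ^ t / log (q / u) := by positivity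
  have hv0 : 0 ≤ v ^ t / log (v / q) := div_nonneg (rpow_nonneg (hq0.trans hq.2).le t) hlogv.le
  rcases abs_cases t with ⟨ht, -⟩ | ⟨ht, -⟩ <;> rw [ht] <;> linarith

lemma exists_Ioo_mem_of_mem_Ioo_zero_one (hq : q ∈ Ioo (0 : ℝ) 1) :
    ∃ u ∈ Ioo (0 : ℝ) 1, ∃ v ∈ Ioo (0 : ℝ) 1, q ∈ Ioo u v := by
  obtain ⟨u, hu0, huq⟩ := exists_between hq.1
  obtain ⟨v, hqv, hv1⟩ := exists_between hq.2
  exact ⟨u, ⟨hu0, huq.trans hq.2⟩, v, ⟨hq.1.trans hqv, hv1⟩, huq, hqv⟩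

namespace RpowSummable

lemma summable_norm (h : RpowSummable s a) (hq : q ∈ Ioo (0 : ℝ) 1) :
    Summable fun i => |a i| * q ^ s i :=
  (h q hq).abs.congr fun i => by rw [abs_mul, abs_of_pos (rpow_pos_of_pos hq.1 _)]

lemma exponent_mul (h : RpowSummable s a) : RpowSummable s (s * a) := by
  intro q hq
  obtain ⟨u, hu, v, hv, huqv⟩ := exists_Ioo_mem_of_mem_Ioo_zero_one hq
  refine .of_norm_bounded (((h.summable_norm hu).div_const (log (q / u))).add
    ((h.summable_norm hv).div_const (log (v / q)))) fun i => ?_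
  rw [Pi.mul_apply, norm_eq_abs, abs_mul, abs_mul, abs_of_pos (rpow_pos_of_pos hq.1 _)]
  linear_combination |a i| * abs_mul_rpow_le (s i) hu.1 huqv

lemma exponent_pow_mul (h : RpowSummable s a) (k : ℕ) : RpowSummable s (s ^ k * a) := by
  induction k with
  | zero => rwa [pow_zero, one_mul]
  | succ k ih => simpa only [pow_succ', mul_assoc] using ih.exponent_mul

lemma hasEulerDerivAt (h : RpowSummable s a) (hq : q ∈ Ioo (0 : ℝ) 1) :
    HasEulerDerivAt (rpowSeries s a) (rpowSeries s (s * a) q) q := by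
  obtain ⟨u, hu, v, hv, huqv⟩ := exists_Ioo_mem_of_mem_Ioo_zero_one hq
  have hsum := ((h.exponent_mul.summable_norm hu).add (h.exponent_mul.summable_norm hv)).div_const u
  have hderiv (i : ι) (y : ℝ) (hy : y ∈ Ioo u v) :
      HasDerivAt (fun y => a i * y ^ s i) ((s * a) i * y ^ s i / y) y := by
    have hy0 := hu.1.trans hy.1
    refine ((hasDerivAt_rpow_const (.inl hy0.ne')).const_mul (a i)).congr_deriv ?_
    rw [rpow_sub_one hy0.ne', Pi.mul_apply]
    ring
  have hbound (i : ι) (y : ℝ) (hy : y ∈ Ioo u v) : ‖(s * a) i * y ^ s i / y‖ ≤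
      (|(s * a) i| * u ^ s i + |(s * a) i| * v ^ s i) / u := by
    have hu0 := hu.1
    have hv0 := hv.1
    have hy0 := hu0.trans hy.1
    have hle := rpow_le_rpow_add_rpow (s i) hu0 (Ioo_subset_Icc_self hy)
    rw [norm_div, norm_mul, norm_eq_abs, norm_of_nonneg (rpow_nonneg hy0.le _),
      norm_of_nonneg hy0.le, ← mul_add]
    gcongr
    exact hy.1.le
  have htsum := hasDerivAt_tsum_of_isPreconnected hsum isOpen_Ioo isPreconnected_Ioo hderiv hbound
    huqv (h q hq) huqv
  rwa [tsum_div_const] at htsum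

end RpowSummable

lemma rpowSeries_mul_rpowSeries {s' a' : κ → ℝ} (h : RpowSummable s a) (h' : RpowSummable s' a')
    (hq : q ∈ Ioo (0 : ℝ) 1) : rpowSeries s a q * rpowSeries s' a' q =
      rpowSeries (fun p : ι × κ => s p.1 + s' p.2) (fun p => a p.1 * a' p.2) q := by
  rw [rpowSeries, rpowSeries, tsum_mul_tsum_of_summable_norm (h q hq).norm (h' q hq).norm]
  refine tsum_congr fun p => ?_
  rw [rpow_add hq.1]
  ring

lemma RpowSummable.prod {s' a' : κ → ℝ} (h : RpowSummable s a) (h' : RpowSummable s' a') :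
    RpowSummable (fun p : ι × κ => s p.1 + s' p.2) fun p => a p.1 * a' p.2 := fun q hq =>
  (summable_mul_of_summable_norm (h q hq).norm (h' q hq).norm).congr fun p => by
    rw [rpow_add hq.1]
    ring

lemma rpowSeries_sq (hq : 0 ≤ q) : rpowSeries s a (q ^ 2) = rpowSeries (2 * s) a q :=
  tsum_congr fun i => by
    rw [← rpow_natCast_mul hq, Pi.mul_apply, Pi.ofNat_apply, Nat.cast_ofNat]

lemma rpowSeries_pos (h : RpowSummable s a) (ha : ∀ i, 0 < a i) [Nonempty ι]
    (hq : q ∈ Ioo (0 : ℝ) 1) : 0 < rpowSeries s a q :=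
  let i := Classical.arbitrary ι
  (h q hq).tsum_pos (fun i => (mul_pos (ha i) (rpow_pos_of_pos hq.1 _)).le) i
    (mul_pos (ha i) (rpow_pos_of_pos hq.1 _))

lemma tendsto_rpow_neg_mul_rpowSeries {m : ℝ} (h : RpowSummable s a)
    (hm : ∀ i, a i ≠ 0 → m ≤ s i) [DecidablePred (s · = m)] :
    Tendsto (fun q => q ^ (-m) * rpowSeries s a q) (𝓝[>] 0)
      (𝓝 (∑' i, if s i = m then a i else 0)) := by
  have hterm (q : ℝ) (hq : 0 < q) (i : ι) : q ^ (-m) * (a i * q ^ s i) = a i * q ^ (s i - m) := by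
    rw [mul_left_comm, ← rpow_add hq, neg_add_eq_sub]
  have hhalf : (1 / 2 : ℝ) ∈ Ioo (0 : ℝ) 1 := by norm_num
  have hbound : Summable fun i => (1 / 2 : ℝ) ^ (-m) * (|a i| * (1 / 2) ^ s i) :=
    (h.summable_norm hhalf).mul_left _
  have hlim : Tendsto (fun q => ∑' i, a i * q ^ (s i - m)) (𝓝[>] 0)
      (𝓝 (∑' i, if s i = m then a i else 0)) := by
    refine tendsto_tsum_of_dominated_convergence hbound (fun i => ?_) ?_
    · split_ifs with hi
      · simp only [hi, sub_self, rpow_zero, mul_one, tendsto_const_nhds]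
      rcases eq_or_ne (a i) 0 with ha | ha
      · simp only [ha, zero_mul, tendsto_const_nhds]
      · have hpos : 0 < s i - m := sub_pos.2 ((hm i ha).lt_of_ne' hi)
        simpa only [zero_rpow hpos.ne', mul_zero] using
          (((continuous_rpow_const hpos.le).tendsto 0).const_mul (a i)).mono_left
            nhdsWithin_le_nhds
    · filter_upwards [Ioo_mem_nhdsGT hhalf.1] with q hq i
      rcases eq_or_ne (a i) 0 with ha | ha
      · simp only [ha, zero_mul, abs_zero, mul_zero, norm_zero, le_refl]
      · have := rpow_le_rpow hq.1.le hq.2.le (sub_nonneg.2 (hm i ha))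
        rw [mul_left_comm, ← rpow_add hhalf.1, neg_add_eq_sub, norm_mul, norm_eq_abs,
          norm_of_nonneg (rpow_nonneg hq.1.le _)]
        gcongr
  refine hlim.congr' ?_
  filter_upwards [self_mem_nhdsWithin] with q hq
  rw [rpowSeries, ← tsum_mul_left]
  exact tsum_congr fun i => (hterm q hq i).symm

lemma tendsto_log_pow_mul_rpowSeries {m : ℝ} (h : RpowSummable s a) (hm0 : 0 < m)
    (hm : ∀ i, a i ≠ 0 → m ≤ s i) (k : ℕ) :
    Tendsto (fun q => log q ^ k * rpowSeries s a q) (𝓝[>] 0) (𝓝 0) := by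
  classical
  have hlog : Tendsto (fun q => log q ^ k * q ^ m) (𝓝[>] 0) (𝓝 0) := by
    rw [tendsto_zero_iff_norm_tendsto_zero]
    have ho := isLittleO_abs_log_rpow_rpow_nhdsGT_zero k (neg_lt_zero.2 hm0)
    refine ho.tendsto_div_nhds_zero.congr' ?_
    filter_upwards [self_mem_nhdsWithin] with q hq
    rw [rpow_natCast, rpow_neg (le_of_lt hq), div_inv_eq_mul, norm_mul, norm_pow, norm_eq_abs,
      norm_of_nonneg (rpow_nonneg (le_of_lt hq) m)]
  have hmul := hlog.mul (tendsto_rpow_neg_mul_rpowSeries h hm)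
  rw [zero_mul] at hmul
  refine hmul.congr' ?_
  filter_upwards [self_mem_nhdsWithin] with q hq
  rw [mul_assoc, ← mul_assoc (q ^ m), ← rpow_add hq, add_neg_cancel, rpow_zero, one_mul]

/-- The logarithmic Euler derivative `q * f'(q) / f(q)`. -/
noncomputable def qLogDeriv (f : ℝ → ℝ) (q : ℝ) : ℝ := qDeriv f q / f q

lemma qLogDeriv_rpowSeries (h : RpowSummable s a) (hq : q ∈ Ioo (0 : ℝ) 1) :
    qLogDeriv (rpowSeries s a) q = rpowSeries s (s * a) q / rpowSeries s a q := by
  rw [qLogDeriv, (h.hasEulerDerivAt hq).qDeriv_eq hq.1.ne']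

lemma hasEulerDerivAt_rpowSeries (h : RpowSummable s a) (hq : q ∈ Ioo (0 : ℝ) 1)
    (h0 : rpowSeries s a q ≠ 0) : HasEulerDerivAt (rpowSeries s a)
      (rpowSeries s a q * qLogDeriv (rpowSeries s a) q) q := by
  rw [qLogDeriv_rpowSeries h hq, mul_div_cancel₀ _ h0]
  exact h.hasEulerDerivAt hq

lemma hasEulerDerivAt_qLogDeriv_rpowSeries (h : RpowSummable s a) (hq : q ∈ Ioo (0 : ℝ) 1)
    (h0 : rpowSeries s a q ≠ 0) : HasEulerDerivAt (qLogDeriv (rpowSeries s a))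
      (rpowSeries s (s * (s * a)) q / rpowSeries s a q - qLogDeriv (rpowSeries s a) q ^ 2) q := by
  have hdiv := ((h.exponent_mul.hasEulerDerivAt hq).div (h.hasEulerDerivAt hq) h0).congr_of_eqOn
    isOpen_Ioo hq fun t ht => qLogDeriv_rpowSeries h ht
  rw [qLogDeriv_rpowSeries h hq]
  convert hdiv using 1
  field_simp

lemma tendsto_qLogDeriv_rpowSeries {m : ℝ} (h : RpowSummable s a)
    (hm : ∀ i, a i ≠ 0 → m ≤ s i) [DecidablePred (s · = m)]
    (hlead : (∑' i, if s i = m then a i else 0) ≠ 0) :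
    Tendsto (qLogDeriv (rpowSeries s a)) (𝓝[>] 0) (𝓝 m) := by
  have hnum := tendsto_rpow_neg_mul_rpowSeries h.exponent_mul fun i hi =>
    hm i (right_ne_zero_of_mul hi)
  have hcoeff (i : ι) : (if s i = m then (s * a) i else 0) = m * if s i = m then a i else 0 := by
    split_ifs with hi
    · rw [Pi.mul_apply, hi]
    · rw [mul_zero]
  simp only [hcoeff, tsum_mul_left] at hnum
  have hdiv := hnum.div (tendsto_rpow_neg_mul_rpowSeries h hm) hlead
  rw [mul_div_cancel_right₀ _ hlead] at hdiv
  refine hdiv.congr' ?_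
  filter_upwards [Ioo_mem_nhdsGT one_pos] with q hq
  rw [Pi.div_apply, mul_div_mul_left _ _ (rpow_pos_of_pos hq.1 _).ne', qLogDeriv_rpowSeries h hq]

end RpowSeries

section Theta

variable {q c : ℝ} {ε : ℤ → ℝ}

/-- The exponents `(n + c) ^ 2` of the theta series shifted by `c`. -/
noncomputable def thetaExponent (c : ℝ) (n : ℤ) : ℝ := (n + c) ^ 2

/-- The theta series `∑ₙ ε n * q ^ (n + c) ^ 2` over the integers; the three Jacobi null values are
the cases `(c, ε n) = (1 / 2, 1), (0, 1), (0, (-1) ^ n)`. -/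
noncomputable def thetaSeries (c : ℝ) (ε : ℤ → ℝ) : ℝ → ℝ :=
  rpowSeries (thetaExponent c) ε

lemma theta2_eq_thetaSeries : theta2 = thetaSeries (1 / 2) 1 := by
  ext q
  simp only [theta2, thetaSeries, rpowSeries, thetaExponent, Pi.one_apply, one_mul]

lemma theta3_eq_thetaSeries : theta3 = thetaSeries 0 1 := by
  ext q
  simp only [theta3, thetaSeries, rpowSeries, thetaExponent, Pi.one_apply, one_mul, add_zero]

lemma theta4_eq_thetaSeries : theta4 = thetaSeries 0 ((-1) ^ ·) := by
  ext q
  simp only [theta4, thetaSeries, rpowSeries, thetaExponent, add_zero]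

lemma rpowSummable_theta (hε : ∀ n, |ε n| ≤ 1) :
    RpowSummable (thetaExponent c) ε := by
  intro q hq
  have ht : 0 < -log q / π := div_pos (neg_pos.2 (log_neg hq.1 hq.2)) pi_pos
  refine .of_norm_bounded (HurwitzKernelBounds.summable_f_int 0 c ht) fun n => ?_
  have hexp : HurwitzKernelBounds.f_int 0 c (-log q / π) n = q ^ thetaExponent c n := by
    rw [HurwitzKernelBounds.f_int, thetaExponent, pow_zero, one_mul, rpow_def_of_pos hq.1]
    congr 1
    field_simp
  rw [hexp, norm_mul, norm_of_nonneg (rpow_nonneg hq.1.le _)]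
  exact mul_le_of_le_one_left (rpow_nonneg hq.1.le _) (hε n)

lemma abs_one_apply_le_one (n : ℤ) : |(1 : ℤ → ℝ) n| ≤ 1 := by
  rw [Pi.one_apply, abs_one]

lemma abs_neg_one_zpow_le_one (n : ℤ) : |(-1 : ℝ) ^ n| ≤ 1 := by
  rw [abs_neg_one_zpow]

lemma thetaSeries_add_one : thetaSeries (c + 1) 1 = thetaSeries c 1 := by
  ext q
  refine .trans (tsum_congr fun n => ?_) ((Equiv.addRight (1 : ℤ)).tsum_eq _)
  simp only [Equiv.coe_addRight, thetaExponent, Int.cast_add, Int.cast_one, add_right_comm,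
    add_assoc, Pi.one_apply]

lemma bijective_sumElim_add_sub : Function.Bijective (Sum.elim
    (fun p : ℤ × ℤ => (p.1 + p.2, p.1 - p.2)) fun p : ℤ × ℤ => (p.1 + p.2 + 1, p.1 - p.2)) := by
  constructor
  · rintro (⟨m, n⟩ | ⟨m, n⟩) (⟨m', n'⟩ | ⟨m', n'⟩) h <;>
      simp only [Sum.elim_inl, Sum.elim_inr, Prod.mk.injEq, Sum.inl.injEq, Sum.inr.injEq,
        reduceCtorEq] at h ⊢ <;> omega
  · rintro ⟨m, n⟩
    obtain ⟨k, hk | hk⟩ := Int.even_or_odd' (m + n)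
    · exact ⟨.inl (k, m - k), Prod.ext (by simp only [Sum.elim_inl]; omega)
        (by simp only [Sum.elim_inl]; omega)⟩
    · exact ⟨.inr (k, m - k - 1), Prod.ext (by simp only [Sum.elim_inr]; omega)
        (by simp only [Sum.elim_inr]; omega)⟩

lemma tsum_int_prod_eq_add {f : ℤ × ℤ → ℝ} (hf : Summable f) :
    ∑' p, f p = ∑' p : ℤ × ℤ, f (p.1 + p.2, p.1 - p.2) +
      ∑' p : ℤ × ℤ, f (p.1 + p.2 + 1, p.1 - p.2) := by
  have hsum := (Equiv.ofBijective _ bijective_sumElim_add_sub).summable_iff.2 hf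
  rw [← (Equiv.ofBijective _ bijective_sumElim_add_sub).tsum_eq f]
  exact (hsum.comp_injective Sum.inl_injective).tsum_sum (hsum.comp_injective Sum.inr_injective)

lemma thetaSeries_sq {δ : ℝ} (hε : ∀ n, |ε n| ≤ 1) (heven : ∀ m n, ε (m + n) * ε (m - n) = 1)
    (hodd : ∀ m n, ε (m + n + 1) * ε (m - n) = δ) (hq : q ∈ Ioo (0 : ℝ) 1) :
    thetaSeries c ε q ^ 2 = thetaSeries c 1 (q ^ 2) * thetaSeries 0 1 (q ^ 2) +
      δ * (thetaSeries (c + 1 / 2) 1 (q ^ 2) * thetaSeries (1 / 2) 1 (q ^ 2)) := by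
  have hsum := rpowSummable_theta (c := c) hε
  have hq2 := sq_mem_Ioo_zero_one hq
  have hone (c : ℝ) := rpowSummable_theta (c := c) abs_one_apply_le_one
  simp only [thetaSeries]
  rw [sq (rpowSeries _ _ _), rpowSeries_mul_rpowSeries hsum hsum hq,
    rpowSeries_mul_rpowSeries (hone _) (hone _) hq2,
    rpowSeries_mul_rpowSeries (hone _) (hone _) hq2, rpowSeries_sq hq.1.le,
    rpowSeries_sq hq.1.le, rpowSeries, tsum_int_prod_eq_add (hsum.prod hsum q hq), rpowSeries,
    rpowSeries, ← tsum_mul_left]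
  congr 1 <;> refine tsum_congr fun p => ?_
  · simp only [heven, thetaExponent, Pi.mul_apply, Pi.ofNat_apply, one_mul, add_zero]
    push_cast
    ring_nf
  · simp only [hodd, thetaExponent, Pi.mul_apply, Pi.ofNat_apply, one_mul]
    push_cast
    ring_nf

lemma theta2_sq (hq : q ∈ Ioo (0 : ℝ) 1) :
    theta2 q ^ 2 = 2 * theta3 (q ^ 2) * theta2 (q ^ 2) := by
  have h := thetaSeries_sq (c := 1 / 2) (δ := 1) abs_one_apply_le_one (by simp) (by simp) hq
  have hper : thetaSeries 1 1 = thetaSeries 0 1 := by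
    simpa only [zero_add] using thetaSeries_add_one (c := 0)
  rw [add_halves, hper] at h
  rw [theta2_eq_thetaSeries, theta3_eq_thetaSeries, h]
  ring

lemma theta3_sq (hq : q ∈ Ioo (0 : ℝ) 1) :
    theta3 q ^ 2 = theta3 (q ^ 2) ^ 2 + theta2 (q ^ 2) ^ 2 := by
  have h := thetaSeries_sq (c := 0) (δ := 1) abs_one_apply_le_one (by simp) (by simp) hq
  rw [zero_add] at h
  rw [theta2_eq_thetaSeries, theta3_eq_thetaSeries, h]
  ring

lemma theta4_sq (hq : q ∈ Ioo (0 : ℝ) 1) :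
    theta4 q ^ 2 = theta3 (q ^ 2) ^ 2 - theta2 (q ^ 2) ^ 2 := by
  have heven (m n : ℤ) : (-1 : ℝ) ^ (m + n) * (-1) ^ (m - n) = 1 := by
    rw [← zpow_add₀ (by norm_num), add_add_sub_cancel, ← two_mul, zpow_mul]
    norm_num
  have hodd (m n : ℤ) : (-1 : ℝ) ^ (m + n + 1) * (-1) ^ (m - n) = -1 := by
    rw [zpow_add_one₀ (by norm_num), mul_right_comm, heven, one_mul]
  have h := thetaSeries_sq (c := 0) abs_neg_one_zpow_le_one heven hodd hq
  rw [zero_add] at h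
  rw [theta2_eq_thetaSeries, theta3_eq_thetaSeries, theta4_eq_thetaSeries, h]
  ring

lemma theta3_pow_four (hq : q ∈ Ioo (0 : ℝ) 1) : theta3 q ^ 4 = theta2 q ^ 4 + theta4 q ^ 4 := by
  have h2 := theta2_sq hq
  have h3 := theta3_sq hq
  have h4 := theta4_sq hq
  linear_combination (theta3 q ^ 2 + theta3 (q ^ 2) ^ 2 + theta2 (q ^ 2) ^ 2) * h3 -
    (theta2 q ^ 2 + 2 * theta3 (q ^ 2) * theta2 (q ^ 2)) * h2 -
    (theta4 q ^ 2 + theta3 (q ^ 2) ^ 2 - theta2 (q ^ 2) ^ 2) * h4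

lemma theta4_comp_sq_pow_four (hq : q ∈ Ioo (0 : ℝ) 1) :
    theta4 (q ^ 2) ^ 4 = theta3 q ^ 2 * theta4 q ^ 2 := by
  rw [theta3_sq hq, theta4_sq hq]
  linear_combination -theta3_pow_four (sq_mem_Ioo_zero_one hq)

lemma theta2_pos (hq : q ∈ Ioo (0 : ℝ) 1) : 0 < theta2 q := by
  rw [theta2_eq_thetaSeries]
  exact rpowSeries_pos (rpowSummable_theta abs_one_apply_le_one) (fun _ => one_pos) hq

lemma theta3_pos (hq : q ∈ Ioo (0 : ℝ) 1) : 0 < theta3 q := by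
  rw [theta3_eq_thetaSeries]
  exact rpowSeries_pos (rpowSummable_theta abs_one_apply_le_one) (fun _ => one_pos) hq

lemma evenKernel_half_eq_theta2 {t : ℝ} (ht : 0 < t) :
    HurwitzZeta.evenKernel ((1 / 2 : ℝ) : UnitAddCircle) t = theta2 (exp (-π * t)) := by
  rw [theta2, ← (HurwitzZeta.hasSum_int_evenKernel (1 / 2) ht).tsum_eq]
  refine tsum_congr fun n => ?_
  rw [← exp_mul, mul_right_comm]

lemma cosKernel_half_eq_theta4 {t : ℝ} (ht : 0 < t) :
    HurwitzZeta.cosKernel ((1 / 2 : ℝ) : UnitAddCircle) t = theta4 (exp (-π * t)) := by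
  rw [← Complex.ofReal_inj, ← (HurwitzZeta.hasSum_int_cosKernel (1 / 2) ht).tsum_eq, theta4,
    Complex.ofReal_tsum]
  refine tsum_congr fun n => ?_
  have hsign : Complex.exp (2 * π * Complex.I * (1 / 2 : ℝ) * n) = (-1) ^ n := by
    rw [← Complex.exp_pi_mul_I, ← Complex.exp_int_mul]
    congr 1
    push_cast
    ring
  rw [hsign, ← exp_mul, mul_right_comm]
  push_cast
  rfl

lemma theta2_exp_neg_pi_mul {t : ℝ} (ht : 0 < t) :
    theta2 (exp (-π * t)) = 1 / t ^ (1 / 2 : ℝ) * theta4 (exp (-π * (1 / t))) := by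
  rw [← evenKernel_half_eq_theta2 ht, ← cosKernel_half_eq_theta4 (one_div_pos.2 ht),
    HurwitzZeta.evenKernel_functional_equation]

lemma theta4_pos (hq : q ∈ Ioo (0 : ℝ) 1) : 0 < theta4 q := by
  have ht : 0 < π / -log q := div_pos pi_pos (neg_pos.2 (log_neg hq.1 hq.2))
  have hexp : exp (-π * (1 / (π / -log q))) = q := by
    rw [one_div_div, neg_mul, mul_div_cancel₀ _ pi_ne_zero, neg_neg, exp_log hq.1]
  have h := theta2_pos ⟨exp_pos (-π * (π / -log q)),
    exp_lt_one_iff.2 (mul_neg_of_neg_of_pos (neg_neg_of_pos pi_pos) ht)⟩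
  rw [theta2_exp_neg_pi_mul ht, hexp] at h
  exact pos_of_mul_pos_right h (by positivity)

lemma theta2_exp_neg_pi : theta2 (exp (-π)) = theta4 (exp (-π)) := by
  simpa only [mul_one, one_div_one, one_rpow, one_mul] using theta2_exp_neg_pi_mul one_pos

end Theta

section ThetaDerivatives

variable {q : ℝ}

lemma hasEulerDerivAt_theta2 (hq : q ∈ Ioo (0 : ℝ) 1) :
    HasEulerDerivAt theta2 (theta2 q * qLogDeriv theta2 q) q := by
  have hpos := theta2_pos hq
  rw [theta2_eq_thetaSeries] at hpos ⊢
  exact hasEulerDerivAt_rpowSeries (rpowSummable_theta abs_one_apply_le_one) hq hpos.ne'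

lemma hasEulerDerivAt_theta3 (hq : q ∈ Ioo (0 : ℝ) 1) :
    HasEulerDerivAt theta3 (theta3 q * qLogDeriv theta3 q) q := by
  have hpos := theta3_pos hq
  rw [theta3_eq_thetaSeries] at hpos ⊢
  exact hasEulerDerivAt_rpowSeries (rpowSummable_theta abs_one_apply_le_one) hq hpos.ne'

lemma tsum_ite_thetaExponent_zero (ε : ℤ → ℝ) [DecidablePred (thetaExponent 0 · = 0)] :
    (∑' n : ℤ, if thetaExponent 0 n = 0 then ε n else 0) = ε 0 := by
  rw [tsum_eq_single 0 fun n hn => if_neg (by simpa [thetaExponent] using hn),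
    if_pos (by simp [thetaExponent])]

lemma tendsto_thetaSeries_zero {ε : ℤ → ℝ} (hε : ∀ n, |ε n| ≤ 1) :
    Tendsto (thetaSeries 0 ε) (𝓝[>] 0) (𝓝 (ε 0)) := by
  classical
  have h := tendsto_rpow_neg_mul_rpowSeries (rpowSummable_theta (c := 0) hε)
    fun n _ => sq_nonneg _
  simp only [neg_zero, rpow_zero, one_mul, tsum_ite_thetaExponent_zero] at h
  exact h

lemma tendsto_theta3 : Tendsto theta3 (𝓝[>] 0) (𝓝 1) := by
  rw [theta3_eq_thetaSeries]
  exact tendsto_thetaSeries_zero abs_one_apply_le_one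

lemma tendsto_theta4 : Tendsto theta4 (𝓝[>] 0) (𝓝 1) := by
  rw [theta4_eq_thetaSeries]
  simpa only [zpow_zero] using tendsto_thetaSeries_zero abs_neg_one_zpow_le_one

lemma tendsto_qLogDeriv_theta3 : Tendsto (qLogDeriv theta3) (𝓝[>] 0) (𝓝 0) := by
  classical
  rw [theta3_eq_thetaSeries]
  refine tendsto_qLogDeriv_rpowSeries (rpowSummable_theta abs_one_apply_le_one)
    (fun n _ => sq_nonneg _) ?_
  rw [tsum_ite_thetaExponent_zero]
  exact one_ne_zero

lemma one_fourth_le_thetaExponent_half (n : ℤ) : 1 / 4 ≤ thetaExponent (1 / 2) n := by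
  have hodd : 1 ≤ (2 * n + 1) ^ 2 :=
    one_le_sq_iff_one_le_abs _ |>.2 (Int.one_le_abs (by omega))
  have hcast : (1 : ℝ) ≤ (2 * n + 1) ^ 2 := by exact_mod_cast hodd
  rw [thetaExponent]
  linear_combination hcast / 4

lemma tendsto_qLogDeriv_theta2 : Tendsto (qLogDeriv theta2) (𝓝[>] 0) (𝓝 (1 / 4)) := by
  classical
  rw [theta2_eq_thetaSeries]
  refine tendsto_qLogDeriv_rpowSeries (rpowSummable_theta abs_one_apply_le_one)
    (fun n _ => one_fourth_le_thetaExponent_half n) ?_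
  have hiff (n : ℤ) : thetaExponent (1 / 2) n = 1 / 4 ↔ n ∈ ({0, -1} : Finset ℤ) := by
    have hsub : thetaExponent (1 / 2) n - 1 / 4 = ((n * (n + 1) : ℤ) : ℝ) := by
      rw [thetaExponent]
      push_cast
      ring
    rw [← sub_eq_zero, hsub, Int.cast_eq_zero, mul_eq_zero, add_eq_zero_iff_eq_neg,
      Finset.mem_insert, Finset.mem_singleton]
  rw [tsum_eq_sum fun n hn => if_neg (mt (hiff n).1 hn), Finset.sum_pair (by decide)]
  norm_num [thetaExponent]

lemma tendsto_log_pow_mul_theta2 (k : ℕ) :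
    Tendsto (fun q => log q ^ k * theta2 q) (𝓝[>] 0) (𝓝 0) := by
  rw [theta2_eq_thetaSeries]
  exact tendsto_log_pow_mul_rpowSeries (rpowSummable_theta abs_one_apply_le_one) (by norm_num)
    (fun n _ => one_fourth_le_thetaExponent_half n) k

lemma tendsto_theta2 : Tendsto theta2 (𝓝[>] 0) (𝓝 0) := by
  simpa only [pow_zero, one_mul] using tendsto_log_pow_mul_theta2 0

lemma qLogDeriv_theta2_eq_sq (hq : q ∈ Ioo (0 : ℝ) 1) :
    qLogDeriv theta2 q = qLogDeriv theta3 (q ^ 2) + qLogDeriv theta2 (q ^ 2) := by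
  have hq2 := sq_mem_Ioo_zero_one hq
  have hleft := (hasEulerDerivAt_theta2 hq).pow 2
  have hright := (((hasEulerDerivAt_theta3 hq2).comp_sq hq.1.ne').const_mul 2).mul
    ((hasEulerDerivAt_theta2 hq2).comp_sq hq.1.ne')
  have h := hleft.eq_of_eqOn hright isOpen_Ioo hq hq.1.ne' fun t ht => theta2_sq ht
  have hpos := pow_pos (theta2_pos hq) 2
  refine mul_left_cancel₀ hpos.ne' ?_
  have := theta2_sq hq
  push_cast at h
  linear_combination h / 2 - (qLogDeriv theta3 (q ^ 2) + qLogDeriv theta2 (q ^ 2)) * this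

lemma qLogDeriv_theta3_mul_sq (hq : q ∈ Ioo (0 : ℝ) 1) :
    qLogDeriv theta3 q * theta3 q ^ 2 = 2 * (qLogDeriv theta3 (q ^ 2) * theta3 (q ^ 2) ^ 2 +
      qLogDeriv theta2 (q ^ 2) * theta2 (q ^ 2) ^ 2) := by
  have hq2 := sq_mem_Ioo_zero_one hq
  have hleft := (hasEulerDerivAt_theta3 hq).pow 2
  have hright := (((hasEulerDerivAt_theta3 hq2).comp_sq hq.1.ne').pow 2).add
    (((hasEulerDerivAt_theta2 hq2).comp_sq hq.1.ne').pow 2)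
  have h := hleft.eq_of_eqOn hright isOpen_Ioo hq hq.1.ne' fun t ht => theta3_sq ht
  push_cast at h
  linear_combination h / 2

lemma qLogDeriv_theta2_eq_add (hq : q ∈ Ioo (0 : ℝ) 1) :
    qLogDeriv theta2 q = qLogDeriv theta3 q + theta4 q ^ 4 / 4 := by
  have hinv : ∀ q ∈ Ioo (0 : ℝ) 1, (qLogDeriv theta2 q - qLogDeriv theta3 q) / theta4 q ^ 4 =
      (qLogDeriv theta2 (q ^ 2) - qLogDeriv theta3 (q ^ 2)) / theta4 (q ^ 2) ^ 4 := by
    intro q hq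
    have h3 := theta3_pos hq
    have h4 := theta4_pos hq
    rw [theta4_comp_sq_pow_four hq, div_eq_div_iff (by positivity) (by positivity),
      qLogDeriv_theta2_eq_sq hq]
    have hb := qLogDeriv_theta3_mul_sq hq
    have h3sq := theta3_sq hq
    have h4sq := theta4_sq hq
    linear_combination -theta4 q ^ 2 * hb +
      (qLogDeriv theta3 (q ^ 2) + qLogDeriv theta2 (q ^ 2)) * theta4 q ^ 2 * h3sq -
      (qLogDeriv theta2 (q ^ 2) - qLogDeriv theta3 (q ^ 2)) * theta4 q ^ 2 * h4sq
  have hlim := (tendsto_qLogDeriv_theta2.sub tendsto_qLogDeriv_theta3).div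
    (tendsto_theta4.pow 4) (by norm_num)
  rw [one_pow, div_one, sub_zero] at hlim
  have h := eqOn_const_of_comp_sq_eq hinv hlim q hq
  rw [div_eq_iff (pow_pos (theta4_pos hq) 4).ne'] at h
  linear_combination h

lemma qLogDeriv_theta3_eq_sq (hq : q ∈ Ioo (0 : ℝ) 1) : qLogDeriv theta3 q =
    2 * qLogDeriv theta3 (q ^ 2) + theta2 q ^ 4 / 8 - theta2 (q ^ 2) ^ 4 / 2 := by
  have hq2 := sq_mem_Ioo_zero_one hq
  have hb := qLogDeriv_theta3_mul_sq hq
  have hadd := qLogDeriv_theta2_eq_add hq2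
  have h2sq := theta2_sq hq
  have h3sq := theta3_sq hq
  have hjac := theta3_pow_four hq2
  refine mul_right_cancel₀ (pow_pos (theta3_pos hq) 2).ne' ?_
  linear_combination hb + 2 * theta2 (q ^ 2) ^ 2 * hadd -
    (2 * qLogDeriv theta3 (q ^ 2) + theta2 q ^ 4 / 8 - theta2 (q ^ 2) ^ 4 / 2) * h3sq -
    theta2 (q ^ 2) ^ 2 / 2 * hjac - (theta3 (q ^ 2) ^ 2 + theta2 (q ^ 2) ^ 2) / 8 *
      (theta2 q ^ 2 + 2 * theta3 (q ^ 2) * theta2 (q ^ 2)) * h2sq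

lemma hasEulerDerivAt_qLogDeriv_theta3 (hq : q ∈ Ioo (0 : ℝ) 1) :
    HasEulerDerivAt (qLogDeriv theta3) (qDeriv (qLogDeriv theta3) q) q := by
  have hsum := rpowSummable_theta (c := 0) abs_one_apply_le_one
  have h3 := theta3_pos hq
  rw [theta3_eq_thetaSeries] at h3 ⊢
  have h := hasEulerDerivAt_qLogDeriv_rpowSeries hsum hq h3.ne'
  rwa [← h.qDeriv_eq hq.1.ne'] at h

lemma qDeriv_qLogDeriv_theta3_comp_sq (hq : q ∈ Ioo (0 : ℝ) 1) :
    qDeriv (qLogDeriv theta3) q = 4 * qDeriv (qLogDeriv theta3) (q ^ 2) +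
      theta2 q ^ 4 * qLogDeriv theta2 q / 2 -
      4 * theta2 (q ^ 2) ^ 4 * qLogDeriv theta2 (q ^ 2) := by
  have hq2 := sq_mem_Ioo_zero_one hq
  have hright := ((((hasEulerDerivAt_qLogDeriv_theta3 hq2).comp_sq hq.1.ne').const_mul 2).add
    (((hasEulerDerivAt_theta2 hq).pow 4).const_mul (1 / 8))).sub
      ((((hasEulerDerivAt_theta2 hq2).comp_sq hq.1.ne').pow 4).const_mul (1 / 2))
  rw [(hright.congr_of_eqOn isOpen_Ioo hq fun t ht => ?_).qDeriv_eq hq.1.ne']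
  · push_cast
    ring
  · rw [qLogDeriv_theta3_eq_sq ht]
    ring

/-- The defect in the differential equation `q b' = 2 b² + θ₂⁴ θ₄⁴ / 8` of the logarithmic
Euler derivative `b` of `θ₃`. -/
noncomputable def thetaDefect (q : ℝ) : ℝ := qDeriv (qLogDeriv theta3) q -
  2 * qLogDeriv theta3 q ^ 2 - theta2 q ^ 4 * theta4 q ^ 4 / 8

lemma thetaDefect_eq_four_mul (hq : q ∈ Ioo (0 : ℝ) 1) :
    thetaDefect q = 4 * thetaDefect (q ^ 2) := by
  have hq2 := sq_mem_Ioo_zero_one hq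
  have hjac := theta3_pow_four hq2
  have hc : theta2 q ^ 4 = 4 * theta3 (q ^ 2) ^ 2 * theta2 (q ^ 2) ^ 2 := by
    linear_combination (theta2 q ^ 2 + 2 * theta3 (q ^ 2) * theta2 (q ^ 2)) * theta2_sq hq
  rw [thetaDefect, thetaDefect, qDeriv_qLogDeriv_theta3_comp_sq hq, qLogDeriv_theta2_eq_add hq,
    qLogDeriv_theta2_eq_add hq2, qLogDeriv_theta3_eq_sq hq, hc]
  linear_combination theta2 (q ^ 2) ^ 4 / 2 * hjac

lemma tendsto_log_pow_mul_thetaSeries_exponent_pow_mul {ε : ℤ → ℝ} (hε : ∀ n, |ε n| ≤ 1)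
    (j k : ℕ) : Tendsto (fun q => log q ^ j *
      rpowSeries (thetaExponent 0) (thetaExponent 0 ^ (k + 1) * ε) q) (𝓝[>] 0) (𝓝 0) := by
  refine tendsto_log_pow_mul_rpowSeries ((rpowSummable_theta hε).exponent_pow_mul (k + 1)) one_pos
    (fun n hn => ?_) j
  have hn0 : n ≠ 0 := by
    rintro rfl
    simp [thetaExponent] at hn
  rw [thetaExponent, add_zero]
  exact_mod_cast one_le_sq_iff_one_le_abs n |>.2 (Int.one_le_abs hn0)

lemma tendsto_log_mul_qLogDeriv_theta3 :
    Tendsto (fun q => log q * qLogDeriv theta3 q) (𝓝[>] 0) (𝓝 0) := by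
  have hlim := tendsto_log_pow_mul_thetaSeries_exponent_pow_mul abs_one_apply_le_one 1 0
  have hdiv := hlim.div tendsto_theta3 one_ne_zero
  rw [zero_div] at hdiv
  refine hdiv.congr' ?_
  filter_upwards [Ioo_mem_nhdsGT one_pos] with q hq
  rw [theta3_eq_thetaSeries, thetaSeries,
    qLogDeriv_rpowSeries (rpowSummable_theta abs_one_apply_le_one) hq, Pi.div_apply, zero_add,
    pow_one, pow_one, mul_div_assoc]

lemma tendsto_log_sq_mul_qDeriv_qLogDeriv_theta3 :
    Tendsto (fun q => log q ^ 2 * qDeriv (qLogDeriv theta3) q) (𝓝[>] 0) (𝓝 0) := by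
  have hlim := tendsto_log_pow_mul_thetaSeries_exponent_pow_mul abs_one_apply_le_one 2 1
  have hsub := (hlim.div tendsto_theta3 one_ne_zero).sub (tendsto_log_mul_qLogDeriv_theta3.pow 2)
  rw [zero_div, zero_pow two_ne_zero, sub_zero] at hsub
  refine hsub.congr' ?_
  filter_upwards [Ioo_mem_nhdsGT one_pos] with q hq
  have hpos := theta3_pos hq
  rw [theta3_eq_thetaSeries] at hpos ⊢
  have hsum := rpowSummable_theta (c := 0) abs_one_apply_le_one
  rw [thetaSeries, (hasEulerDerivAt_qLogDeriv_rpowSeries hsum hq hpos.ne').qDeriv_eq hq.1.ne',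
    Pi.div_apply, pow_two (thetaExponent 0), mul_assoc (thetaExponent 0)]
  ring

lemma tendsto_log_sq_mul_thetaDefect :
    Tendsto (fun q => log q ^ 2 * thetaDefect q) (𝓝[>] 0) (𝓝 0) := by
  have hlim := (tendsto_log_sq_mul_qDeriv_qLogDeriv_theta3.sub
    ((tendsto_log_mul_qLogDeriv_theta3.pow 2).const_mul 2)).sub
      (((tendsto_log_pow_mul_theta2 2).mul (tendsto_theta2.pow 3)).mul
        ((tendsto_theta4.pow 4).div_const 8))
  convert hlim using 1
  · ext q
    rw [thetaDefect]
    ring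
  · norm_num

lemma qDeriv_qLogDeriv_theta3 (hq : q ∈ Ioo (0 : ℝ) 1) : qDeriv (qLogDeriv theta3) q =
    2 * qLogDeriv theta3 q ^ 2 + theta2 q ^ 4 * theta4 q ^ 4 / 8 := by
  have hinv : ∀ q ∈ Ioo (0 : ℝ) 1,
      log q ^ 2 * thetaDefect q = log (q ^ 2) ^ 2 * thetaDefect (q ^ 2) := by
    intro q hq
    rw [thetaDefect_eq_four_mul hq, log_pow]
    push_cast
    ring
  have hzero := eqOn_const_of_comp_sq_eq hinv tendsto_log_sq_mul_thetaDefect q hq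
  have hlog := pow_ne_zero 2 (log_neg hq.1 hq.2).ne
  have h := (mul_eq_zero.1 hzero).resolve_left hlog
  rw [thetaDefect] at h
  linear_combination h

end ThetaDerivatives

section ModularLambda

variable {q : ℝ}

lemma hasEulerDerivAt_theta3_pow_four (hq : q ∈ Ioo (0 : ℝ) 1) :
    HasEulerDerivAt (fun t => theta3 t ^ 4) (4 * qLogDeriv theta3 q * theta3 q ^ 4) q := by
  convert (hasEulerDerivAt_theta3 hq).pow 4 using 1
  push_cast
  ring

lemma one_sub_modLambda (hq : q ∈ Ioo (0 : ℝ) 1) :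
    1 - modLambda q = theta4 q ^ 4 / theta3 q ^ 4 := by
  rw [modLambda, one_sub_div (pow_pos (theta3_pos hq) 4).ne', theta3_pow_four hq,
    add_sub_cancel_left]

lemma modLambda_pos (hq : q ∈ Ioo (0 : ℝ) 1) : 0 < modLambda q :=
  div_pos (pow_pos (theta2_pos hq) 4) (pow_pos (theta3_pos hq) 4)

lemma modLambda_lt_one (hq : q ∈ Ioo (0 : ℝ) 1) : modLambda q < 1 := by
  rw [← sub_pos, one_sub_modLambda hq]
  exact div_pos (pow_pos (theta4_pos hq) 4) (pow_pos (theta3_pos hq) 4)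

lemma hasEulerDerivAt_modLambda (hq : q ∈ Ioo (0 : ℝ) 1) :
    HasEulerDerivAt modLambda (modLambda q * (1 - modLambda q) * theta3 q ^ 4) q := by
  have h3 := (theta3_pos hq).ne'
  have hdiv : HasEulerDerivAt modLambda _ q :=
    ((hasEulerDerivAt_theta2 hq).pow 4).div (hasEulerDerivAt_theta3_pow_four hq) (pow_ne_zero 4 h3)
  convert hdiv using 1
  rw [one_sub_modLambda hq, modLambda, qLogDeriv_theta2_eq_add hq]
  field_simp
  push_cast
  ring

lemma hasEulerDerivAt_qLogDeriv_theta3_modLambda (hq : q ∈ Ioo (0 : ℝ) 1) :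
    HasEulerDerivAt (qLogDeriv theta3) (2 * qLogDeriv theta3 q ^ 2 +
      modLambda q * (1 - modLambda q) * (theta3 q ^ 4) ^ 2 / 8) q := by
  have h3 := (theta3_pos hq).ne'
  convert hasEulerDerivAt_qLogDeriv_theta3 hq using 1
  rw [qDeriv_qLogDeriv_theta3 hq, one_sub_modLambda hq, modLambda]
  field_simp

lemma hasEulerDerivAt_z4 (hq : q ∈ Ioo (0 : ℝ) 1) :
    HasEulerDerivAt z4 (z4 q * ((1 - 2 * modLambda q) * theta3 q ^ 4)) q := by
  have hlam := hasEulerDerivAt_modLambda hq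
  have hmul : HasEulerDerivAt z4 _ q :=
    (hlam.const_mul 4).mul ((HasEulerDerivAt.const 1 q).sub hlam)
  convert hmul using 1
  rw [z4]
  ring

lemma strictMonoOn_modLambda : StrictMonoOn modLambda (Ioo 0 1) := by
  have hderiv (q : ℝ) (hq : q ∈ Ioo (0 : ℝ) 1) :
      HasDerivAt modLambda (modLambda q * (1 - modLambda q) * theta3 q ^ 4 / q) q :=
    hasEulerDerivAt_modLambda hq
  refine strictMonoOn_of_deriv_pos (convex_Ioo 0 1)
    (fun q hq => (hderiv q hq).continuousAt.continuousWithinAt) fun q hq => ?_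
  rw [interior_Ioo] at hq
  rw [(hderiv q hq).deriv]
  exact div_pos (mul_pos (mul_pos (modLambda_pos hq) (sub_pos.2 (modLambda_lt_one hq)))
    (pow_pos (theta3_pos hq) 4)) hq.1

lemma exp_neg_pi_mem_Ioo : exp (-π) ∈ Ioo (0 : ℝ) 1 :=
  ⟨exp_pos _, exp_lt_one_iff.2 (neg_neg_of_pos pi_pos)⟩

lemma Ioo_zero_exp_neg_pi_subset : Ioo 0 (exp (-π)) ⊆ Ioo (0 : ℝ) 1 :=
  Ioo_subset_Ioo_right exp_neg_pi_mem_Ioo.2.le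

lemma modLambda_exp_neg_pi : modLambda (exp (-π)) = 1 / 2 := by
  have h : modLambda (exp (-π)) = 1 - modLambda (exp (-π)) := by
    rw [one_sub_modLambda exp_neg_pi_mem_Ioo, modLambda, theta2_exp_neg_pi]
  linear_combination h / 2

lemma modLambda_lt_half (hq : q ∈ Ioo 0 (exp (-π))) : modLambda q < 1 / 2 :=
  modLambda_exp_neg_pi ▸
    strictMonoOn_modLambda (Ioo_zero_exp_neg_pi_subset hq) exp_neg_pi_mem_Ioo hq.2

lemma z4_mem_Ioo (hq : q ∈ Ioo 0 (exp (-π))) : z4 q ∈ Ioo (0 : ℝ) 1 := by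
  have hpos := modLambda_pos (Ioo_zero_exp_neg_pi_subset hq)
  have hlt := modLambda_lt_half hq
  rw [z4]
  exact ⟨by nlinarith, by nlinarith⟩

lemma tendsto_modLambda : Tendsto modLambda (𝓝[>] 0) (𝓝 0) := by
  have h := (tendsto_theta2.pow 4).div (tendsto_theta3.pow 4) (by norm_num)
  rwa [zero_pow four_ne_zero, zero_div] at h

lemma tendsto_z4 : Tendsto z4 (𝓝[>] 0) (𝓝[>] 0) := by
  refine tendsto_nhdsWithin_iff.2 ⟨?_, ?_⟩
  · have h := (tendsto_modLambda.const_mul 4).mul (tendsto_modLambda.const_sub 1)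
    rwa [mul_zero, zero_mul] at h
  · filter_upwards [Ioo_mem_nhdsGT exp_neg_pi_mem_Ioo.1] with q hq
    exact (z4_mem_Ioo hq).1

end ModularLambda

section Hypergeometric

variable {x z : ℝ}

/-- The exponents `n + x` of the series `F4 x`. -/
def F4Exponent (x : ℝ) (n : ℕ) : ℝ := n + x

/-- The coefficients `(1/2 + x)ₙ³ / (1 + x)ₙ³` of the series `F4 x`. -/
noncomputable def F4Coeff (x : ℝ) (n : ℕ) : ℝ :=
  ((ascPochhammer ℝ n).eval (1 / 2 + x)) ^ 3 / ((ascPochhammer ℝ n).eval (1 + x)) ^ 3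

/-- The `k`-fold Euler derivative of `F4 x`, as a series. -/
noncomputable def F4Euler (x : ℝ) (k : ℕ) : ℝ → ℝ :=
  rpowSeries (F4Exponent x) (F4Exponent x ^ k * F4Coeff x)

lemma F4_eq_F4Euler_zero (x : ℝ) : F4 x = F4Euler x 0 := by
  ext z
  refine tsum_congr fun n => ?_
  rw [pow_zero, one_mul, F4Coeff, F4Exponent, mul_div_assoc, mul_comm]

lemma F4Exponent_zero (x : ℝ) : F4Exponent x 0 = x := by
  rw [F4Exponent, Nat.cast_zero, zero_add]

lemma F4Exponent_succ (x : ℝ) (n : ℕ) : F4Exponent x (n + 1) = F4Exponent x n + 1 := by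
  rw [F4Exponent, F4Exponent, Nat.cast_add_one, add_right_comm]

lemma F4Coeff_zero (x : ℝ) : F4Coeff x 0 = 1 := by
  simp only [F4Coeff, ascPochhammer_zero, Polynomial.eval_one, one_pow, div_one]

lemma F4Coeff_succ (x : ℝ) (n : ℕ) :
    F4Coeff x (n + 1) = F4Coeff x n * ((F4Exponent x n + 1 / 2) / (F4Exponent x n + 1)) ^ 3 := by
  rw [F4Coeff, F4Coeff, F4Exponent, ascPochhammer_succ_eval, ascPochhammer_succ_eval, div_pow,
    mul_pow, mul_pow, mul_div_mul_comm]
  ring_nf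

lemma rpowSummable_F4 (x : ℝ) : RpowSummable (F4Exponent x) (F4Coeff x) := by
  intro z hz
  refine summable_of_ratio_norm_eventually_le hz.2 ?_
  filter_upwards [eventually_ge_atTop ⌈-x⌉₊] with n hn
  have hn0 : 0 ≤ F4Exponent x n := by
    rw [F4Exponent]
    linarith [Nat.ceil_le.1 hn]
  have hratio : |(F4Exponent x n + 1 / 2) / (F4Exponent x n + 1)| ^ 3 ≤ 1 := by
    refine pow_le_one₀ (abs_nonneg _) ?_
    rw [abs_of_nonneg (by positivity), div_le_one (by positivity)]
    linarith
  have hrw : F4Coeff x (n + 1) * z ^ F4Exponent x (n + 1) =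
      z * (F4Coeff x n * z ^ F4Exponent x n) *
        ((F4Exponent x n + 1 / 2) / (F4Exponent x n + 1)) ^ 3 := by
    rw [F4Coeff_succ, F4Exponent_succ, rpow_add_one hz.1.ne']
    ring
  rw [hrw, norm_mul, norm_mul, norm_of_nonneg hz.1.le, norm_pow, norm_eq_abs (_ / _)]
  exact mul_le_of_le_one_right (by have := hz.1.le; positivity) hratio

lemma hasEulerDerivAt_F4Euler (x : ℝ) (k : ℕ) (hz : z ∈ Ioo (0 : ℝ) 1) :
    HasEulerDerivAt (F4Euler x k) (F4Euler x (k + 1) z) z := by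
  rw [F4Euler, F4Euler, pow_succ', mul_assoc]
  exact ((rpowSummable_F4 x).exponent_pow_mul k).hasEulerDerivAt hz

lemma F4Exponent_succ_pow_three_mul_F4Coeff_succ {n : ℕ} (hx : x ≠ -(n + 1)) :
    F4Exponent x (n + 1) ^ 3 * F4Coeff x (n + 1) =
      (F4Exponent x n + 1 / 2) ^ 3 * F4Coeff x n := by
  have hne : F4Exponent x n + 1 ≠ 0 := fun h => hx (by rw [F4Exponent] at h; linarith)
  rw [F4Coeff_succ, F4Exponent_succ]
  field_simp

-- This is `ϑ³F - z(ϑ + 1/2)³F = x³zˣ` for `F = F4 x` and `ϑ = z d/dz`.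
lemma F4Euler_ode (hx : ∀ n : ℕ, x ≠ -(n + 1)) (hz : z ∈ Ioo (0 : ℝ) 1) :
    F4Euler x 3 z - z * (F4Euler x 3 z + 3 / 2 * F4Euler x 2 z + 3 / 4 * F4Euler x 1 z +
      1 / 8 * F4Euler x 0 z) = x ^ 3 * z ^ x := by
  have hsum (k : ℕ) := (rpowSummable_F4 x).exponent_pow_mul k z hz
  have hright := ((((hsum 3).hasSum.add ((hsum 2).hasSum.mul_left (3 / 2))).add
    ((hsum 1).hasSum.mul_left (3 / 4))).add ((hsum 0).hasSum.mul_left (1 / 8))).mul_left z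
  rw [sub_eq_iff_eq_add]
  calc F4Euler x 3 z
    _ = x ^ 3 * z ^ x + ∑' n, (F4Exponent x ^ 3 * F4Coeff x) (n + 1) *
          z ^ F4Exponent x (n + 1) := by
        rw [F4Euler, rpowSeries, (hsum 3).tsum_eq_zero_add, Pi.mul_apply, Pi.pow_apply,
          F4Exponent_zero, F4Coeff_zero, mul_one]
    _ = _ := by
        congr 1
        refine (tsum_congr fun n => ?_).trans hright.tsum_eq
        rw [Pi.mul_apply, Pi.pow_apply, F4Exponent_succ_pow_three_mul_F4Coeff_succ (hx n),
          F4Exponent_succ, rpow_add_one hz.1.ne']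
        simp only [Pi.mul_apply, Pi.pow_apply]
        ring

lemma tendsto_rpow_neg_mul_F4Euler (x : ℝ) (k : ℕ) :
    Tendsto (fun z => z ^ (-x) * F4Euler x k z) (𝓝[>] 0) (𝓝 (x ^ k)) := by
  have hlim := tendsto_rpow_neg_mul_rpowSeries (m := x)
    ((rpowSummable_F4 x).exponent_pow_mul k) fun n _ => le_add_of_nonneg_left n.cast_nonneg
  have hlead (n : ℕ) (hn : n ≠ 0) : F4Exponent x n ≠ x :=
    (lt_add_of_pos_left x (Nat.cast_pos.2 (Nat.pos_of_ne_zero hn))).ne'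
  rwa [tsum_eq_single 0 fun n hn => if_neg (hlead n hn), if_pos (F4Exponent_zero x), Pi.mul_apply,
    Pi.pow_apply, F4Exponent_zero, F4Coeff_zero, mul_one] at hlim

lemma tendsto_F4Euler_zero (k : ℕ) : Tendsto (F4Euler 0 k) (𝓝[>] 0) (𝓝 (0 ^ k)) := by
  simpa only [neg_zero, rpow_zero, one_mul] using tendsto_rpow_neg_mul_F4Euler 0 k

end Hypergeometric

section Quotient

variable {x q : ℝ}

lemma hasEulerDerivAt_F4Euler_z4 (x : ℝ) (k : ℕ) (hq : q ∈ Ioo 0 (exp (-π))) :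
    HasEulerDerivAt (fun t => F4Euler x k (z4 t))
      ((1 - 2 * modLambda q) * theta3 q ^ 4 * F4Euler x (k + 1) (z4 q)) q :=
  (hasEulerDerivAt_F4Euler x k (z4_mem_Ioo hq)).comp
    (hasEulerDerivAt_z4 (Ioo_zero_exp_neg_pi_subset hq)) (z4_mem_Ioo hq).1.ne'

/-- The function `F₄(x, z₄) / θ₃⁴`, which turns out to be the quotient `F₄(x, z₄) / F₄(0, z₄)`. -/
noncomputable def F4Quot (x q : ℝ) : ℝ := F4Euler x 0 (z4 q) / theta3 q ^ 4

/-- The first Euler derivative of `F4Quot x`, in closed form. -/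
noncomputable def F4Quot₁ (x q : ℝ) : ℝ :=
  (1 - 2 * modLambda q) * F4Euler x 1 (z4 q) -
    4 * qLogDeriv theta3 q * (F4Euler x 0 (z4 q) / theta3 q ^ 4)

/-- The second Euler derivative of `F4Quot x`, in closed form. -/
noncomputable def F4Quot₂ (x q : ℝ) : ℝ :=
  (1 - 2 * modLambda q) ^ 2 * theta3 q ^ 4 * F4Euler x 2 (z4 q) -
    (2 * modLambda q * (1 - modLambda q) * theta3 q ^ 4 +
      4 * qLogDeriv theta3 q * (1 - 2 * modLambda q)) * F4Euler x 1 (z4 q) +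
    (8 * (qLogDeriv theta3 q ^ 2 / theta3 q ^ 4) -
      modLambda q * (1 - modLambda q) * theta3 q ^ 4 / 2) * F4Euler x 0 (z4 q)

lemma hasEulerDerivAt_F4Quot (x : ℝ) (hq : q ∈ Ioo 0 (exp (-π))) :
    HasEulerDerivAt (F4Quot x) (F4Quot₁ x q) q := by
  have hq1 := Ioo_zero_exp_neg_pi_subset hq
  have hT0 := pow_ne_zero 4 (theta3_pos hq1).ne'
  have hdiv : HasEulerDerivAt (F4Quot x) _ q :=
    (hasEulerDerivAt_F4Euler_z4 x 0 hq).div (hasEulerDerivAt_theta3_pow_four hq1) hT0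
  convert hdiv using 1
  rw [F4Quot₁]
  generalize theta3 q ^ 4 = T at hT0 ⊢
  field_simp

lemma hasEulerDerivAt_F4Quot₁ (x : ℝ) (hq : q ∈ Ioo 0 (exp (-π))) :
    HasEulerDerivAt (F4Quot₁ x) (F4Quot₂ x q) q := by
  have hq1 := Ioo_zero_exp_neg_pi_subset hq
  have hT0 := pow_ne_zero 4 (theta3_pos hq1).ne'
  have hlam := hasEulerDerivAt_modLambda hq1
  have hlogDeriv := hasEulerDerivAt_qLogDeriv_theta3_modLambda hq1
  have hderiv : HasEulerDerivAt (F4Quot₁ x) _ q :=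
    (((HasEulerDerivAt.const 1 q).sub (hlam.const_mul 2)).mul
      (hasEulerDerivAt_F4Euler_z4 x 1 hq)).sub
        ((hlogDeriv.const_mul 4).mul (hasEulerDerivAt_F4Quot x hq))
  convert hderiv using 1
  rw [F4Quot₁, F4Quot₂]
  generalize theta3 q ^ 4 = T at hT0 ⊢
  field_simp
  ring

lemma hasEulerDerivAt_F4Quot₂ (hx : ∀ n : ℕ, x ≠ -(n + 1)) (hq : q ∈ Ioo 0 (exp (-π))) :
    HasEulerDerivAt (F4Quot₂ x)
      (x ^ 3 * theta3 q ^ 8 * (1 - 2 * modLambda q) * z4 q ^ x) q := by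
  have hq1 := Ioo_zero_exp_neg_pi_subset hq
  have hT0 := pow_ne_zero 4 (theta3_pos hq1).ne'
  have hT := hasEulerDerivAt_theta3_pow_four hq1
  have hlam := hasEulerDerivAt_modLambda hq1
  have hlogDeriv := hasEulerDerivAt_qLogDeriv_theta3_modLambda hq1
  have hone_sub_lam := (HasEulerDerivAt.const 1 q).sub hlam
  have hone_sub_two_lam := (HasEulerDerivAt.const 1 q).sub (hlam.const_mul 2)
  have hcoeff₂ := (hone_sub_two_lam.pow 2).mul hT
  have hcoeff₁ := (((hlam.const_mul 2).mul hone_sub_lam).mul hT).add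
    ((hlogDeriv.const_mul 4).mul hone_sub_two_lam)
  have hcoeff₀ := (((hlogDeriv.pow 2).div hT hT0).const_mul 8).sub
    (((hlam.mul hone_sub_lam).mul hT).div (HasEulerDerivAt.const 2 q) two_ne_zero)
  have hderiv : HasEulerDerivAt (F4Quot₂ x) _ q :=
    ((hcoeff₂.mul (hasEulerDerivAt_F4Euler_z4 x 2 hq)).sub
      (hcoeff₁.mul (hasEulerDerivAt_F4Euler_z4 x 1 hq))).add
        (hcoeff₀.mul (hasEulerDerivAt_F4Euler_z4 x 0 hq))
  have hfactor : x ^ 3 * theta3 q ^ 8 * (1 - 2 * modLambda q) * z4 q ^ x =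
      x ^ 3 * z4 q ^ x * ((theta3 q ^ 4) ^ 2 * (1 - 2 * modLambda q)) := by ring
  convert hderiv using 1
  rw [hfactor, ← F4Euler_ode hx (z4_mem_Ioo hq)]
  generalize F4Euler x 0 (z4 q) = u₀
  generalize F4Euler x 1 (z4 q) = u₁
  generalize F4Euler x 2 (z4 q) = u₂
  generalize F4Euler x 3 (z4 q) = u₃
  rw [z4]
  generalize theta3 q ^ 4 = T at hT0 ⊢
  push_cast
  field_simp
  ring

lemma tendsto_F4Euler_zero_z4 (k : ℕ) :
    Tendsto (fun q => F4Euler 0 k (z4 q)) (𝓝[>] 0) (𝓝 (0 ^ k)) :=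
  (tendsto_F4Euler_zero k).comp tendsto_z4

lemma tendsto_F4Quot_zero : Tendsto (F4Quot 0) (𝓝[>] 0) (𝓝 1) := by
  have h := (tendsto_F4Euler_zero_z4 0).div (tendsto_theta3.pow 4) (by norm_num)
  rwa [pow_zero, one_pow, div_one] at h

lemma tendsto_F4Quot₁_zero : Tendsto (F4Quot₁ 0) (𝓝[>] 0) (𝓝 0) := by
  have hone_sub_two_lam := (tendsto_modLambda.const_mul 2).const_sub 1
  have h : Tendsto (F4Quot₁ 0) _ (𝓝 _) := (hone_sub_two_lam.mul (tendsto_F4Euler_zero_z4 1)).sub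
    ((tendsto_qLogDeriv_theta3.const_mul 4).mul tendsto_F4Quot_zero)
  simpa using h

lemma tendsto_F4Quot₂_zero : Tendsto (F4Quot₂ 0) (𝓝[>] 0) (𝓝 0) := by
  have hT := tendsto_theta3.pow 4
  have hone_sub_lam := tendsto_modLambda.const_sub 1
  have hone_sub_two_lam := (tendsto_modLambda.const_mul 2).const_sub 1
  have hcoeff₁ := (((tendsto_modLambda.const_mul 2).mul hone_sub_lam).mul hT).add
    ((tendsto_qLogDeriv_theta3.const_mul 4).mul hone_sub_two_lam)
  have hcoeff₀ := (((tendsto_qLogDeriv_theta3.pow 2).div hT (by norm_num)).const_mul 8).sub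
    (((tendsto_modLambda.mul hone_sub_lam).mul hT).div_const 2)
  have h : Tendsto (F4Quot₂ 0) _ (𝓝 _) :=
    ((((hone_sub_two_lam.pow 2).mul hT).mul (tendsto_F4Euler_zero_z4 2)).sub
      (hcoeff₁.mul (tendsto_F4Euler_zero_z4 1))).add (hcoeff₀.mul (tendsto_F4Euler_zero_z4 0))
  simpa using h

lemma F4Quot_zero (hq : q ∈ Ioo 0 (exp (-π))) : F4Quot 0 q = 1 := by
  have hF₂ : ∀ q ∈ Ioo 0 (exp (-π)), F4Quot₂ 0 q = 0 := by
    refine eqOn_const_of_hasEulerDerivAt_zero (fun q hq => ?_) tendsto_F4Quot₂_zero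
    convert hasEulerDerivAt_F4Quot₂ (fun n => (neg_neg_of_pos n.cast_add_one_pos).ne') hq using 1
    ring
  have hF₁ : ∀ q ∈ Ioo 0 (exp (-π)), F4Quot₁ 0 q = 0 :=
    eqOn_const_of_hasEulerDerivAt_zero
      (fun q hq => by simpa only [hF₂ q hq] using hasEulerDerivAt_F4Quot₁ 0 hq)
      tendsto_F4Quot₁_zero
  exact eqOn_const_of_hasEulerDerivAt_zero
    (fun q hq => by simpa only [hF₁ q hq] using hasEulerDerivAt_F4Quot 0 hq)
    tendsto_F4Quot_zero q hq

lemma F4_zero_z4 (hq : q ∈ Ioo 0 (exp (-π))) : F4 0 (z4 q) = theta3 q ^ 4 := by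
  have hT0 := pow_ne_zero 4 (theta3_pos (Ioo_zero_exp_neg_pi_subset hq)).ne'
  rw [F4_eq_F4Euler_zero]
  exact (div_eq_one_iff_eq hT0).1 (F4Quot_zero hq)

lemma F4_div_F4_zero_eqOn_F4Quot (x : ℝ) :
    EqOn (fun q => F4 x (z4 q) / F4 0 (z4 q)) (F4Quot x) (Ioo 0 (exp (-π))) := fun q hq => by
  simp only [F4_zero_z4 hq, F4_eq_F4Euler_zero, F4Quot]

end Quotient

theorem stmt_1_general (x : ℝ) (hx : ∀ n : ℕ, x ≠ -(n + 1)) :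
    ∀ q ∈ Ioo (0 : ℝ) (exp (-π)),
      (0 < z4 q ∧ z4 q < 1) ∧
      qDeriv (qDeriv (qDeriv (fun t => F4 x (z4 t) / F4 0 (z4 t)))) q =
        x ^ 3 * theta3 q ^ 8 * (1 - 2 * modLambda q) *
          (4 * modLambda q * (1 - modLambda q)) ^ x := by
  have h0 : (0 : ℝ) ∉ Ioo 0 (exp (-π)) := left_notMem_Ioo
  have h₁ := qDeriv_eqOn isOpen_Ioo h0 (F4_div_F4_zero_eqOn_F4Quot x)
    fun q hq => hasEulerDerivAt_F4Quot x hq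
  have h₂ := qDeriv_eqOn isOpen_Ioo h0 h₁ fun q hq => hasEulerDerivAt_F4Quot₁ x hq
  have h₃ := qDeriv_eqOn isOpen_Ioo h0 h₂ fun q hq => hasEulerDerivAt_F4Quot₂ hx hq
  exact fun q hq => ⟨z4_mem_Ioo hq, h₃ hq⟩

end

theorem stmt_1 (x : ℝ) (hx : 0 < x) :
    ∀ q ∈ Set.Ioo (0 : ℝ) (Real.exp (-π)),
      (0 < z4 q ∧ z4 q < 1) ∧
      qDeriv (qDeriv (qDeriv (fun t => F4 x (z4 t) / F4 0 (z4 t)))) q =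
        x ^ 3 * theta3 q ^ 8 * (1 - 2 * modLambda q) *
          (4 * modLambda q * (1 - modLambda q)) ^ x :=
  stmt_1_general x fun n => ((neg_neg_of_pos n.cast_add_one_pos).trans hx).ne'
end

section
/- For every real q ∈ (0, 1): (1/4) · θ₂(q)² θ₄(q)² (θ₄(q)⁴ − θ₂(q)⁴) = √q · ∑_{n=0}^∞ σ₃(2n+1) (−q)ⁿ. -/
open Real

/-!
Half the sum of the eighth powers of `θ₂`, `θ₃`, `θ₄`, as a function of `τ` with `q = exp(πiτ)`, is
a modular form of weight four and level one with value `1` at infinity. As there is no cusp form of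
that weight, it is the Eisenstein series `1 + 240 ∑ σ₃(n) exp(2πinτ)`. Subtracting its translate by
a half-period keeps the odd `n` only, while the duplication formulas turn the difference into
`120 θ₂² θ₃² (θ₂⁴ + θ₃⁴)` at `4τ`. Finally `τ ↦ τ + 1` exchanges `θ₃` and `θ₄` and multiplies `θ₂²`
by `i`.
-/

lemma hasSum_int_prod_of_parity {M : Type*} [AddCommMonoid M] [TopologicalSpace M] [ContinuousAdd M]
    {f : ℤ × ℤ → M} {s t : M}
    (heven : HasSum (fun p : ℤ × ℤ ↦ f (p.1 + p.2, p.1 - p.2)) s)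
    (hodd : HasSum (fun p : ℤ × ℤ ↦ f (p.1 + p.2 + 1, p.1 - p.2)) t) : HasSum f (s + t) := by
  have hinj_even : Function.Injective fun p : ℤ × ℤ ↦ (p.1 + p.2, p.1 - p.2) := by
    intro p q h
    grind
  have hinj_odd : Function.Injective fun p : ℤ × ℤ ↦ (p.1 + p.2 + 1, p.1 - p.2) := by
    intro p q h
    grind
  refine (hinj_even.hasSum_range_iff.2 heven).add_isCompl ⟨?_, ?_⟩
    (hinj_odd.hasSum_range_iff.2 hodd)
  · rw [Set.disjoint_left]
    rintro _ ⟨p, rfl⟩ ⟨q, hq⟩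
    grind
  · refine codisjoint_iff.mpr <| Set.eq_univ_iff_forall.mpr fun ⟨m, n⟩ ↦ ?_
    obtain ⟨k, hk⟩ | ⟨k, hk⟩ := Int.even_or_odd (m + n)
    · exact .inl ⟨(k, k - n), by grind⟩
    · exact .inr ⟨(k, k - n), by grind⟩

section ThetaConstants

open Complex Filter Topology

/-- The theta constant `∑ₙ exp(πi(n + a)²τ)` with characteristic `a`. The classical `θ₂` and `θ₃`
are the cases `a = 1/2` and `a = 0`; `θ₄` is Mathlib's `jacobiTheta₂ (1 / 2)`. -/
noncomputable def thetaConst (a τ : ℂ) : ℂ := ∑' n : ℤ, cexp (π * I * (n + a) ^ 2 * τ)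

local notation "θ₂" => thetaConst (1 / 2)
local notation "θ₃" => thetaConst 0
local notation "θ₄" => jacobiTheta₂ (1 / 2)

lemma cexp_sq_mul_eq_jacobiTheta₂_term (a τ : ℂ) (n : ℤ) :
    cexp (π * I * (n + a) ^ 2 * τ) =
      cexp (π * I * a ^ 2 * τ) * jacobiTheta₂_term n (a * τ) τ := by
  rw [jacobiTheta₂_term, ← Complex.exp_add]
  ring_nf

lemma thetaConst_eq_jacobiTheta₂ (a τ : ℂ) :
    thetaConst a τ = cexp (π * I * a ^ 2 * τ) * jacobiTheta₂ (a * τ) τ := by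
  simp only [thetaConst, cexp_sq_mul_eq_jacobiTheta₂_term, tsum_mul_left, jacobiTheta₂]

lemma thetaConst_zero (τ : ℂ) : θ₃ τ = jacobiTheta τ := by
  simp only [thetaConst, jacobiTheta, add_zero]

lemma hasSum_thetaConst (a : ℂ) {τ : ℂ} (hτ : 0 < τ.im) :
    HasSum (fun n : ℤ ↦ cexp (π * I * (n + a) ^ 2 * τ)) (thetaConst a τ) := by
  simpa only [cexp_sq_mul_eq_jacobiTheta₂_term, thetaConst_eq_jacobiTheta₂]
    using (hasSum_jacobiTheta₂_term (a * τ) hτ).mul_left _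

lemma differentiableAt_thetaConst (a : ℂ) {τ : ℂ} (hτ : 0 < τ.im) :
    DifferentiableAt ℂ (thetaConst a) τ := by
  rw [funext (thetaConst_eq_jacobiTheta₂ a)]
  have hline : DifferentiableAt ℂ (fun σ : ℂ ↦ (a * σ, σ)) τ := by fun_prop
  have hθ : DifferentiableAt ℂ (fun σ ↦ jacobiTheta₂ (a * σ) σ) τ :=
    (hasFDerivAt_jacobiTheta₂ (a * τ) hτ).differentiableAt.comp
      (f := fun σ : ℂ ↦ (a * σ, σ)) τ hline
  fun_prop

lemma cexp_add_int_mul_int_add_one_mul_pi_mul_I (z : ℂ) (n : ℤ) :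
    cexp (z + n * (n + 1) * (π * I)) = cexp z := by
  obtain ⟨k, hk⟩ := Int.even_mul_succ_self n
  replace hk : (n * (n + 1) : ℂ) = k + k := mod_cast hk
  rw [Complex.exp_eq_exp_iff_exists_int]
  exact ⟨k, by rw [hk]; ring⟩

lemma thetaConst_add_one_left (a τ : ℂ) : thetaConst (a + 1) τ = thetaConst a τ := by
  refine (tsum_congr fun n ↦ ?_).trans
    ((Equiv.addRight (1 : ℤ)).tsum_eq fun n : ℤ ↦ cexp (π * I * (n + a) ^ 2 * τ))
  simp only [Equiv.coe_addRight, Int.cast_add, Int.cast_one, add_assoc, add_comm a]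

lemma thetaConst_half_add_one (τ : ℂ) : θ₂ (τ + 1) = cexp (π * I / 4) * θ₂ τ := by
  simp only [thetaConst, ← tsum_mul_left, ← Complex.exp_add]
  refine tsum_congr fun n ↦ ?_
  refine Eq.trans ?_ (cexp_add_int_mul_int_add_one_mul_pi_mul_I _ n)
  ring_nf

lemma thetaConst_zero_add_one (τ : ℂ) : θ₃ (τ + 1) = θ₄ τ := by
  refine tsum_congr fun n ↦ ?_
  refine Eq.trans ?_ (cexp_add_int_mul_int_add_one_mul_pi_mul_I _ (n - 1))
  push_cast
  ring_nf

lemma jacobiTheta₂_half_add_one (τ : ℂ) : θ₄ (τ + 1) = θ₃ τ := by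
  rw [← thetaConst_zero_add_one, thetaConst_zero, thetaConst_zero, ← jacobiTheta_two_add τ]
  ring_nf

lemma thetaConst_half_add_one_sq (τ : ℂ) : θ₂ (τ + 1) ^ 2 = I * θ₂ τ ^ 2 := by
  have hexp : cexp (π * I / 4) ^ 2 = I := by
    rw [← Complex.exp_nat_mul, show ((2 : ℕ) : ℂ) * (π * I / 4) = π / 2 * I by push_cast; ring,
      Complex.exp_pi_div_two_mul_I]
  rw [thetaConst_half_add_one, mul_pow, hexp]

lemma thetaConst_half_add_one_pow_four (τ : ℂ) : θ₂ (τ + 1) ^ 4 = -θ₂ τ ^ 4 := by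
  rw [show 4 = 2 * 2 by rfl, pow_mul, thetaConst_half_add_one_sq, mul_pow, I_sq, neg_one_mul,
    ← pow_mul]

lemma thetaConst_half_add_one_pow_eight (τ : ℂ) : θ₂ (τ + 1) ^ 8 = θ₂ τ ^ 8 := by
  rw [show 8 = 4 * 2 by rfl, pow_mul, thetaConst_half_add_one_pow_four, neg_sq, ← pow_mul]

lemma jacobiTheta₂_neg_one_div {τ : ℂ} (hτ : τ ≠ 0) (a : ℂ) :
    jacobiTheta₂ a (-1 / τ) = (-I * τ) ^ (1 / 2 : ℂ) * thetaConst a τ := by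
  have hcpow : (-I * τ) ^ (1 / 2 : ℂ) ≠ 0 := by simp [cpow_eq_zero_iff, hτ]
  have hexp : cexp (π * I * a ^ 2 * τ) * cexp (-π * I * (a * τ) ^ 2 / τ) = 1 := by
    rw [← Complex.exp_add, Complex.exp_eq_one_iff]
    exact ⟨0, by field_simp; simp⟩
  rw [thetaConst_eq_jacobiTheta₂, jacobiTheta₂_functional_equation (a * τ) τ,
    mul_div_cancel_right₀ _ hτ]
  calc _ = ((-I * τ) ^ (1 / 2 : ℂ) * (1 / (-I * τ) ^ (1 / 2 : ℂ)))
        * (cexp (π * I * a ^ 2 * τ) * cexp (-π * I * (a * τ) ^ 2 / τ))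
        * jacobiTheta₂ a (-1 / τ) := by rw [hexp, mul_one_div_cancel hcpow, one_mul, one_mul]
    _ = _ := by ring

lemma jacobiTheta₂_neg_one_div_pow_eight {τ : ℂ} (hτ : τ ≠ 0) (a : ℂ) :
    jacobiTheta₂ a (-1 / τ) ^ 8 = τ ^ 4 * thetaConst a τ ^ 8 := by
  have hcpow : ((-I * τ) ^ (1 / 2 : ℂ)) ^ 8 = τ ^ 4 := by
    rw [← cpow_nat_mul, show ((8 : ℕ) : ℂ) * (1 / 2) = (4 : ℕ) by norm_num, cpow_natCast, mul_pow,
      neg_pow, I_pow_four]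
    norm_num
  rw [jacobiTheta₂_neg_one_div hτ, mul_pow, hcpow]

lemma thetaConst_zero_neg_one_div_pow_eight {τ : ℂ} (hτ : τ ≠ 0) :
    θ₃ (-1 / τ) ^ 8 = τ ^ 4 * θ₃ τ ^ 8 := by
  rw [← jacobiTheta₂_neg_one_div_pow_eight hτ, thetaConst_zero, jacobiTheta_eq_jacobiTheta₂]

lemma thetaConst_half_neg_one_div_pow_eight {τ : ℂ} (hτ : τ ≠ 0) :
    θ₂ (-1 / τ) ^ 8 = τ ^ 4 * θ₄ τ ^ 8 := by
  have hinv := jacobiTheta₂_neg_one_div_pow_eight (τ := -1 / τ) (by simpa using hτ) (1 / 2)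
  rw [show -1 / (-1 / τ) = τ by field_simp] at hinv
  rw [hinv]
  field_simp

lemma hasSum_thetaConst_mul (a b : ℂ) {τ : ℂ} (hτ : 0 < τ.im) :
    HasSum (fun p : ℤ × ℤ ↦ cexp (π * I * (p.1 + a) ^ 2 * τ) * cexp (π * I * (p.2 + b) ^ 2 * τ))
      (thetaConst a τ * thetaConst b τ) := by
  have ha := hasSum_thetaConst a hτ
  have hb := hasSum_thetaConst b hτ
  have hprod := ha.mul hb (ha.summable.norm.mul_norm hb.summable.norm).of_norm
  exact hprod

theorem thetaConst_mul_thetaConst (a b : ℂ) {τ : ℂ} (hτ : 0 < τ.im) :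
    thetaConst a τ * thetaConst b τ =
      thetaConst ((a + b) / 2) (2 * τ) * thetaConst ((a - b) / 2) (2 * τ) +
        thetaConst ((a + b + 1) / 2) (2 * τ) * thetaConst ((a - b + 1) / 2) (2 * τ) := by
  have h2τ : 0 < (2 * τ).im := by simpa using hτ
  refine (hasSum_thetaConst_mul a b hτ).unique (hasSum_int_prod_of_parity ?_ ?_)
  all_goals
    convert hasSum_thetaConst_mul _ _ h2τ using 2 with p
    rw [← Complex.exp_add, ← Complex.exp_add]
    push_cast
    ring_nf

section Duplication

variable {τ : ℂ} (hτ : 0 < τ.im)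
include hτ

lemma thetaConst_zero_sq : θ₃ τ ^ 2 = θ₃ (2 * τ) ^ 2 + θ₂ (2 * τ) ^ 2 := by
  simpa only [sq, zero_add, sub_self, zero_div] using thetaConst_mul_thetaConst 0 0 hτ

lemma thetaConst_half_sq : θ₂ τ ^ 2 = 2 * θ₂ (2 * τ) * θ₃ (2 * τ) := by
  have hone : thetaConst ((1 + 1) / 2) (2 * τ) = θ₃ (2 * τ) := by
    rw [← thetaConst_add_one_left 0, zero_add, add_self_div_two]
  have hmul := thetaConst_mul_thetaConst (1 / 2) (1 / 2) hτ
  rw [add_halves, sub_self, zero_div, zero_add, hone] at hmul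
  linear_combination hmul

lemma jacobiTheta₂_half_sq : θ₄ τ ^ 2 = θ₃ (2 * τ) ^ 2 - θ₂ (2 * τ) ^ 2 := by
  have hτ' : 0 < (τ + 1).im := by simpa using hτ
  rw [← thetaConst_zero_add_one, thetaConst_zero_sq hτ', show 2 * (τ + 1) = 2 * τ + 1 + 1 by ring,
    thetaConst_half_add_one_sq, thetaConst_half_add_one_sq, thetaConst_zero_add_one,
    jacobiTheta₂_half_add_one]
  linear_combination θ₂ (2 * τ) ^ 2 * I_sq

lemma thetaConst_zero_pow_four : θ₃ τ ^ 4 = θ₂ τ ^ 4 + θ₄ τ ^ 4 := by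
  linear_combination (θ₃ τ ^ 2 + θ₃ (2 * τ) ^ 2 + θ₂ (2 * τ) ^ 2) * thetaConst_zero_sq hτ
    - (θ₂ τ ^ 2 + 2 * θ₂ (2 * τ) * θ₃ (2 * τ)) * thetaConst_half_sq hτ
    - (θ₄ τ ^ 2 + θ₃ (2 * τ) ^ 2 - θ₂ (2 * τ) ^ 2) * jacobiTheta₂_half_sq hτ

end Duplication

open UpperHalfPlane hiding I
open ModularForm SlashInvariantForm EisensteinSeries MatrixGroups

lemma modularForm_eq_of_coeff_zero_eq {k : ℤ} (hk : k < 12) {f g : ModularForm 𝒮ℒ k}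
    (h : (qExpansion 1 f).coeff 0 = (qExpansion 1 g).coeff 0) : f = g := by
  have hcoeff : (qExpansion 1 ⇑(f - g)).coeff 0 = 0 := by
    rw [FunLike.coe_sub, ModularForm.qExpansion_sub one_pos one_mem_strictPeriods_SL, map_sub, h,
      sub_self]
  have hcusp : toCuspForm (f - g) hcoeff = 0 :=
    rank_zero_iff_forall_zero.mp (CuspForm.rank_eq_zero_of_weight_lt_twelve hk) _
  refine sub_eq_zero.mp (DFunLike.ext _ _ fun τ ↦ ?_)
  exact DFunLike.congr_fun hcusp τ

/-- Half the sum of the eighth powers of the three theta constants: the theta series of the `E₈`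
lattice. -/
noncomputable def thetaE8 (τ : ℂ) : ℂ := (θ₂ τ ^ 8 + θ₃ τ ^ 8 + θ₄ τ ^ 8) / 2

lemma differentiableAt_thetaE8 {τ : ℂ} (hτ : 0 < τ.im) : DifferentiableAt ℂ thetaE8 τ := by
  have h₂ := differentiableAt_thetaConst (1 / 2) hτ
  have h₃ := differentiableAt_thetaConst 0 hτ
  have h₄ := differentiableAt_jacobiTheta₂_snd (1 / 2) hτ
  unfold thetaE8
  fun_prop

lemma thetaE8_add_one (τ : ℂ) : thetaE8 (τ + 1) = thetaE8 τ := by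
  rw [thetaE8, thetaConst_half_add_one_pow_eight, thetaConst_zero_add_one,
    jacobiTheta₂_half_add_one, thetaE8]
  ring

lemma thetaE8_neg_one_div {τ : ℂ} (hτ : τ ≠ 0) : thetaE8 (-1 / τ) = τ ^ 4 * thetaE8 τ := by
  rw [thetaE8, thetaConst_half_neg_one_div_pow_eight hτ, thetaConst_zero_neg_one_div_pow_eight hτ,
    jacobiTheta₂_neg_one_div_pow_eight hτ, thetaE8]
  ring

lemma tendsto_thetaConst_zero_comap_im :
    Tendsto θ₃ (comap Complex.im atTop) (𝓝 1) := by
  have hexp : Tendsto (fun τ : ℂ ↦ Real.exp (-π * τ.im)) (comap Complex.im atTop) (𝓝 0) :=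
    Real.tendsto_exp_atBot.comp (tendsto_comap.const_mul_atTop_of_neg (neg_lt_zero.mpr pi_pos))
  rw [funext thetaConst_zero, ← tendsto_sub_nhds_zero_iff]
  exact isBigO_at_im_infty_jacobiTheta_sub_one.trans_tendsto hexp

lemma tendsto_thetaE8_comap_im : Tendsto thetaE8 (comap Complex.im atTop) (𝓝 1) := by
  have h₃ := tendsto_thetaConst_zero_comap_im
  have hhalf : Tendsto (fun τ : ℂ ↦ τ / 2) (comap Complex.im atTop) (comap Complex.im atTop) := by
    simpa [tendsto_comap_iff, Function.comp_def] using
      (tendsto_comap (f := Complex.im)).atTop_div_const two_pos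
  have hshift : Tendsto (fun τ : ℂ ↦ τ + 1) (comap Complex.im atTop) (comap Complex.im atTop) := by
    simpa [tendsto_comap_iff, Function.comp_def] using tendsto_comap
  have h₄ : Tendsto θ₄ (comap Complex.im atTop) (𝓝 1) := by
    simpa only [Function.comp_def, thetaConst_zero_add_one] using h₃.comp hshift
  have h₂ : Tendsto (fun τ ↦ θ₂ τ ^ 2) (comap Complex.im atTop) (𝓝 0) := by
    have hsub := ((h₃.comp hhalf).pow 2).sub (h₃.pow 2)
    rw [one_pow, sub_self] at hsub
    refine hsub.congr' ?_
    filter_upwards [preimage_mem_comap (Ioi_mem_atTop 0)] with τ hτ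
    rw [Function.comp_apply, thetaConst_zero_sq (by simpa using hτ), mul_div_cancel₀ τ two_ne_zero]
    ring
  have hsum := (((h₂.pow 4).add (h₃.pow 8)).add (h₄.pow 8)).div_const 2
  simp only [← pow_mul] at hsum
  convert hsum using 2
  · rfl
  · norm_num

lemma thetaE8_slash_T :
    (fun τ : ℍ ↦ thetaE8 τ) ∣[(4 : ℤ)] ModularGroup.T = fun τ : ℍ ↦ thetaE8 τ := by
  ext τ
  have hdenom : denom ModularGroup.T τ = 1 := by
    rw [ModularGroup.denom_apply]
    simp [ModularGroup.T]
  rw [SL_slash_apply, modular_T_smul, hdenom, one_zpow, mul_one, coe_vadd, ofReal_one, add_comm,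
    thetaE8_add_one]

lemma thetaE8_slash_S :
    (fun τ : ℍ ↦ thetaE8 τ) ∣[(4 : ℤ)] ModularGroup.S = fun τ : ℍ ↦ thetaE8 τ := by
  ext τ
  have hpow : (τ : ℂ) ^ (4 : ℤ) ≠ 0 := zpow_ne_zero 4 τ.ne_zero
  have hinv : (-τ : ℂ)⁻¹ = -1 / τ := by rw [neg_div, one_div, inv_neg]
  rw [SL_slash_apply, modular_S_smul, ModularGroup.denom_S, zpow_neg, mul_inv_eq_iff_eq_mul₀ hpow,
    UpperHalfPlane.coe_mk, hinv, thetaE8_neg_one_div τ.ne_zero, zpow_ofNat, mul_comm]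

/-- `thetaE8` as a modular form of weight four and level one. -/
noncomputable def thetaE8ModularForm : ModularForm 𝒮ℒ 4 where
  toFun τ := thetaE8 τ
  slash_action_eq' A hA := by
    obtain ⟨A, rfl⟩ := hA
    exact slash_action_generators_SL2Z thetaE8_slash_S thetaE8_slash_T A
  holo' := by
    rw [UpperHalfPlane.mdifferentiable_iff]
    refine .congr (fun τ hτ ↦ (differentiableAt_thetaE8 hτ).differentiableWithinAt) fun τ hτ ↦ ?_
    simp [ofComplex_apply_of_im_pos hτ]
  bdd_at_cusps' hc := by
    rw [Subgroup.IsArithmetic.isCusp_iff_isCusp_SL2Z] at hc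
    rw [OnePoint.isBoundedAt_iff_forall_SL2Z hc]
    intro γ _
    rw [slash_action_generators_SL2Z thetaE8_slash_S thetaE8_slash_T]
    exact (tendsto_thetaE8_comap_im.comp tendsto_coe_atImInfty).isBigO_one ℝ

theorem E₄_eq_thetaE8 (τ : ℍ) : E₄ τ = thetaE8 τ := by
  have hval : valueAtInfty thetaE8ModularForm = 1 :=
    (tendsto_thetaE8_comap_im.comp tendsto_coe_atImInfty).limUnder_eq
  have heq : E₄ = thetaE8ModularForm := modularForm_eq_of_coeff_zero_eq (by norm_num) <| by
    rw [E_qExpansion_coeff_zero _ (by decide), qExpansion_coeff_zero one_pos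
      (ModularFormClass.analyticAt_cuspFunction_zero _ one_pos one_mem_strictPeriods_SL)
      (SlashInvariantFormClass.periodic_comp_ofComplex _ one_mem_strictPeriods_SL), hval]
  exact DFunLike.congr_fun heq τ

lemma thetaE8_eq_two_mul {τ : ℂ} (hτ : 0 < τ.im) :
    thetaE8 τ = θ₂ (2 * τ) ^ 8 + 14 * θ₂ (2 * τ) ^ 4 * θ₃ (2 * τ) ^ 4 + θ₃ (2 * τ) ^ 8 := by
  have hpow (x : ℂ) : x ^ 8 = (x ^ 2) ^ 4 := by ring
  rw [thetaE8, hpow (θ₂ τ), hpow (θ₃ τ), hpow (θ₄ τ), thetaConst_half_sq hτ, thetaConst_zero_sq hτ,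
    jacobiTheta₂_half_sq hτ]
  ring

lemma thetaE8_add_half {τ : ℂ} (hτ : 0 < τ.im) :
    thetaE8 (τ + 1 / 2) =
      θ₂ (2 * τ) ^ 8 - 14 * θ₂ (2 * τ) ^ 4 * θ₄ (2 * τ) ^ 4 + θ₄ (2 * τ) ^ 8 := by
  have hτ' : 0 < (τ + 1 / 2).im := by simpa using hτ
  rw [thetaE8_eq_two_mul hτ', show 2 * (τ + 1 / 2) = 2 * τ + 1 by ring, thetaConst_zero_add_one,
    thetaConst_half_add_one_pow_four, thetaConst_half_add_one_pow_eight]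
  ring

theorem thetaE8_sub_thetaE8_add_half {τ : ℂ} (hτ : 0 < τ.im) :
    thetaE8 τ - thetaE8 (τ + 1 / 2) =
      120 * θ₂ (4 * τ) ^ 2 * θ₃ (4 * τ) ^ 2 * (θ₂ (4 * τ) ^ 4 + θ₃ (4 * τ) ^ 4) := by
  have h2τ : 0 < (2 * τ).im := by simpa using hτ
  have hθ₂ := thetaConst_half_sq h2τ
  have hθ₃ := thetaConst_zero_sq h2τ
  have hθ₄ := jacobiTheta₂_half_sq h2τ
  rw [show 2 * (2 * τ) = 4 * τ by ring] at hθ₂ hθ₃ hθ₄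
  have hpow (x : ℂ) : x ^ 4 = (x ^ 2) ^ 2 := by ring
  calc thetaE8 τ - thetaE8 (τ + 1 / 2)
      = 15 * θ₂ (2 * τ) ^ 4 * (θ₃ (2 * τ) ^ 4 + θ₄ (2 * τ) ^ 4) := by
        rw [thetaE8_eq_two_mul hτ, thetaE8_add_half hτ]
        linear_combination (θ₃ (2 * τ) ^ 4 + θ₄ (2 * τ) ^ 4) * thetaConst_zero_pow_four h2τ
    _ = _ := by
        rw [hpow (θ₂ (2 * τ)), hpow (θ₃ (2 * τ)), hpow (θ₄ (2 * τ)), hθ₂, hθ₃, hθ₄]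
        ring

lemma hasSum_thetaE8_sub_one {τ : ℂ} (hτ : 0 < τ.im) :
    HasSum (fun n : ℕ ↦ 240 * (sigma3 n * cexp (2 * π * I * τ) ^ n)) (thetaE8 τ - 1) := by
  lift τ to ℍ using hτ
  have hsigma (n : ℕ) : ArithmeticFunction.sigma 3 n = sigma3 n := ArithmeticFunction.sigma_apply
  have hsum := summable_sigma_mul_cexp_pow (k := 4) (by norm_num) τ
  have hE₄ := q_expansion_bernoulli (k := 4) (by norm_num) (by decide) τ
  rw [E₄_eq_thetaE8, show bernoulli 4 = -1 / 30 by decide +kernel] at hE₄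
  simp only [zpow_natCast, Nat.add_one_sub_one, hsigma] at hsum hE₄
  have hθ : thetaE8 τ - 1 = 240 * ∑' n : ℕ, sigma3 n * cexp (2 * π * I * τ) ^ n := by
    rw [hE₄, ← tsum_zero_pnat_eq_tsum_nat hsum]
    norm_num [sigma3]
  rw [hθ]
  exact hsum.hasSum.mul_left 240

lemma hasSum_thetaE8_sub_thetaE8_add_half {τ : ℂ} (hτ : 0 < τ.im) :
    HasSum (fun n : ℕ ↦ 480 * (sigma3 (2 * n + 1) * cexp (2 * π * I * τ) ^ (2 * n + 1)))
      (thetaE8 τ - thetaE8 (τ + 1 / 2)) := by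
  have hτ' : 0 < (τ + 1 / 2).im := by simpa using hτ
  have hneg : cexp (2 * π * I * (τ + 1 / 2)) = -cexp (2 * π * I * τ) := by
    rw [mul_add, Complex.exp_add, show 2 * π * I * (1 / 2) = π * I by ring, Complex.exp_pi_mul_I,
      mul_neg_one]
  have hsub := (hasSum_thetaE8_sub_one hτ).sub (hasSum_thetaE8_sub_one hτ')
  rw [sub_sub_sub_cancel_right, hneg] at hsub
  have hodd : Function.Injective fun n : ℕ ↦ 2 * n + 1 := fun m n h ↦ by grind
  rw [← hodd.hasSum_iff] at hsub
  · refine hsub.congr_fun fun n ↦ ?_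
    rw [Function.comp_apply, Odd.neg_pow ⟨n, rfl⟩]
    ring
  · intro n hn
    have heven : Even n := by
      by_contra h
      obtain ⟨k, rfl⟩ := Nat.not_even_iff_odd.mp h
      exact hn ⟨k, rfl⟩
    rw [heven.neg_pow, sub_self]

theorem thetaConst_half_sq_mul_thetaConst_zero_sq_mul {τ : ℂ} (hτ : 0 < τ.im) :
    1 / 4 * θ₂ τ ^ 2 * θ₃ τ ^ 2 * (θ₂ τ ^ 4 + θ₃ τ ^ 4) =
      cexp (π * I * τ / 2) * ∑' n : ℕ, sigma3 (2 * n + 1) * cexp (π * I * τ) ^ n := by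
  have hτ' : 0 < (τ / 4).im := by simpa using hτ
  have hdiff := thetaE8_sub_thetaE8_add_half hτ'
  rw [show 4 * (τ / 4) = τ by ring] at hdiff
  have hterm (n : ℕ) : cexp (2 * π * I * (τ / 4)) ^ (2 * n + 1) =
      cexp (π * I * τ / 2) * cexp (π * I * τ) ^ n := by
    rw [← Complex.exp_nat_mul, ← Complex.exp_nat_mul, ← Complex.exp_add]
    push_cast
    ring_nf
  have hsum := (hasSum_thetaE8_sub_thetaE8_add_half hτ').tsum_eq
  simp only [hterm, tsum_mul_left, mul_left_comm (Nat.cast _)] at hsum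
  linear_combination -(hdiff + hsum) / 480

section RealNome

open Function.Periodic

lemma ofReal_rpow_eq_cexp {q : ℝ} (hq : 0 < q) (r : ℝ) :
    ((q ^ r : ℝ) : ℂ) = cexp (π * I * r * invQParam 2 q) := by
  rw [ofReal_cpow hq.le, cpow_def_of_ne_zero (ofReal_ne_zero.mpr hq.ne'), invQParam]
  push_cast
  field_simp

lemma ofReal_theta2 {q : ℝ} (hq : 0 < q) : (theta2 q : ℂ) = θ₂ (invQParam 2 q) := by
  rw [theta2, ofReal_tsum, thetaConst]
  refine tsum_congr fun n ↦ ?_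
  rw [ofReal_rpow_eq_cexp hq]
  push_cast
  rfl

lemma ofReal_theta4 {q : ℝ} (hq : 0 < q) : (theta4 q : ℂ) = θ₄ (invQParam 2 q) := by
  rw [theta4, ofReal_tsum, jacobiTheta₂]
  refine tsum_congr fun n ↦ ?_
  rw [ofReal_mul, ofReal_rpow_eq_cexp hq, jacobiTheta₂_term, Complex.exp_add, ofReal_zpow,
    ofReal_neg, ofReal_one, ← Complex.exp_pi_mul_I, ← Complex.exp_int_mul]
  push_cast
  ring_nf

lemma ofReal_sqrt_eq_cexp {q : ℝ} (hq : 0 < q) : (√q : ℂ) = cexp (π * I * invQParam 2 q / 2) := by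
  rw [Real.sqrt_eq_rpow, ofReal_rpow_eq_cexp hq]
  push_cast
  ring_nf

lemma ofReal_eq_cexp {q : ℝ} (hq : 0 < q) : (q : ℂ) = cexp (π * I * invQParam 2 q) := by
  simpa using ofReal_rpow_eq_cexp hq 1

lemma im_invQParam_two_pos {q : ℝ} (hq : q ∈ Set.Ioo 0 1) : 0 < (invQParam 2 q).im :=
  im_invQParam_pos_of_norm_lt_one two_pos (by simpa [abs_of_pos hq.1] using hq.2)
    (ofReal_ne_zero.mpr hq.1.ne')

end RealNome

theorem stmt_3_general {τ : ℂ} (hτ : 0 < τ.im) :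
    1 / 4 * θ₂ τ ^ 2 * θ₄ τ ^ 2 * (θ₄ τ ^ 4 - θ₂ τ ^ 4) =
      cexp (π * I * τ / 2) * ∑' n : ℕ, sigma3 (2 * n + 1) * (-cexp (π * I * τ)) ^ n := by
  have hτ' : 0 < (τ + 1).im := by simpa using hτ
  have h := thetaConst_half_sq_mul_thetaConst_zero_sq_mul hτ'
  have hexp : cexp (π * I * (τ + 1)) = -cexp (π * I * τ) := by
    rw [mul_add, Complex.exp_add, mul_one, Complex.exp_pi_mul_I, mul_neg_one]
  have hexp' : cexp (π * I * (τ + 1) / 2) = I * cexp (π * I * τ / 2) := by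
    rw [show π * I * (τ + 1) / 2 = π / 2 * I + π * I * τ / 2 by ring, Complex.exp_add,
      Complex.exp_pi_div_two_mul_I]
  rw [hexp, hexp', thetaConst_half_add_one_sq, thetaConst_half_add_one_pow_four,
    thetaConst_zero_add_one] at h
  refine mul_left_cancel₀ I_ne_zero ?_
  linear_combination h

end ThetaConstants

theorem stmt_3 :
    ∀ q ∈ Set.Ioo (0 : ℝ) 1,
      (1 / 4) * theta2 q ^ 2 * theta4 q ^ 2 * (theta4 q ^ 4 - theta2 q ^ 4) =
        Real.sqrt q * ∑' n : ℕ, (sigma3 (2 * n + 1) : ℝ) * (-q) ^ n := by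
  intro q hq
  have h := stmt_3_general (im_invQParam_two_pos hq)
  rw [← ofReal_theta2 hq.1, ← ofReal_theta4 hq.1, ← ofReal_sqrt_eq_cexp hq.1,
    ← ofReal_eq_cexp hq.1] at h
  apply Complex.ofReal_injective
  push_cast
  exact h
end

section
/- For every real q ∈ (0, e^{−π}) one has 0 < z₄(q) < 1 and F₄(1/2, z₄(q)) = F₄(0, z₄(q)) · 8√q · ∑_{n=0}^∞ σ₃(2n+1) (−q)ⁿ / (2n+1)³. -/
open Real

/-!
In the variable `s = log q`, the quotient `y = F₄(x, z₄) / θ₃⁴` satisfies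
`y''' = x³ z₄ˣ (θ₄⁴ - θ₂⁴) θ₃⁴`. As `s → -∞`, its first two derivatives tend to `0`, and `y` tends
to `1` if `x = 0` and to `0` if `x > 0`. For `x = 0` this forces `F₄(0, z₄) = θ₃⁴`. For `x = 1/2`
the right-hand side is `θ₂² θ₄² (θ₄⁴ - θ₂⁴) / 4`, which equals `√q ∑ σ₃(2n+1) (-q)ⁿ` because
`θ₂⁸ + θ₃⁸ + θ₄⁸` is twice the Eisenstein series `E₄`; integrating three times gives the claim.

The hypergeometric equation turns into this equation by the derivative formulas for the theta
functions. These follow from the duplication formulas, because a function that is invariant under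
`q ↦ q²` and has a limit at `q = 0` is constant. The bound `e^(-π)` is the nome of `τ = i`, the
fixed point of `τ ↦ -1/τ`, where `θ₂ = θ₄` and so `z₄ = 1`.
-/

section LacunarySeries

lemma summable_pow_of_natAbs_le {e : ℤ → ℕ} (he : ∀ n, n.natAbs ≤ e n + 1) {r : ℝ}
    (hr₀ : 0 ≤ r) (hr₁ : r < 1) : Summable fun n : ℤ => r ^ e n := by
  obtain ⟨s, hrs, hs₁⟩ := exists_between hr₁
  have hs₀ : 0 < s := hr₀.trans_lt hrs
  have hgeom : Summable fun n : ℤ => s ^ n.natAbs :=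
    .of_nat_of_neg (by simpa using summable_geometric_of_lt_one hs₀.le hs₁)
      (by simpa using summable_geometric_of_lt_one hs₀.le hs₁)
  refine (hgeom.mul_left s⁻¹).of_nonneg_of_le (fun n => by positivity) fun n => ?_
  calc r ^ e n ≤ s ^ e n := by gcongr
    _ = s⁻¹ * s ^ (e n + 1) := by rw [pow_succ']; field_simp
    _ ≤ s⁻¹ * s ^ n.natAbs :=
      mul_le_mul_of_nonneg_left (pow_le_pow_of_le_one hs₀.le hs₁.le (he n)) (by positivity)

lemma natAbs_le_natAbs_sq_add_one (n : ℤ) : n.natAbs ≤ n.natAbs ^ 2 + 1 := by nlinarith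

/-- The product `n(n+1)` of consecutive integers, as a natural number. -/
def pronic (n : ℤ) : ℕ := (n * (n + 1)).toNat

lemma pronic_nonneg (n : ℤ) : 0 ≤ n * (n + 1) := by
  rcases le_or_gt 0 n with h | h
  · positivity
  · nlinarith

lemma natCast_pronic (n : ℤ) : (pronic n : ℤ) = n * (n + 1) :=
  Int.toNat_of_nonneg (pronic_nonneg n)

lemma even_pronic (n : ℤ) : Even (pronic n) := by
  rw [← Int.even_coe_nat, natCast_pronic]
  exact Int.even_mul_succ_self n

lemma natAbs_le_pronic_add_one (n : ℤ) : n.natAbs ≤ pronic n + 1 := by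
  zify
  rw [natCast_pronic]
  cases abs_cases n <;> nlinarith

variable {𝕜 : Type*} [NormedField 𝕜]

lemma summable_norm_pow_of_natAbs_le {e : ℤ → ℕ} (he : ∀ n, n.natAbs ≤ e n + 1) {q : 𝕜}
    (hq : ‖q‖ < 1) : Summable fun n : ℤ => ‖q ^ e n‖ := by
  simpa only [norm_pow] using summable_pow_of_natAbs_le he (norm_nonneg q) hq

lemma tsum_eq_tsum_add_tsum_of_bijective {α β γ E : Type*} [NormedAddCommGroup E] [CompleteSpace E]
    {f : γ → E} (hf : Summable f) {i : α → γ} {j : β → γ}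
    (h : Function.Bijective (Sum.elim i j)) :
    ∑' c, f c = ∑' a, f (i a) + ∑' b, f (j b) := by
  rw [← (Equiv.ofBijective _ h).tsum_eq f]
  exact ((hf.comp_injective (h.1.comp Sum.inl_injective)).hasSum.sum
    (hf.comp_injective (h.1.comp Sum.inr_injective)).hasSum).tsum_eq

/-- The two parts are the `(m, n)` with `m + n` even and those with `m + n` odd. -/
lemma bijective_rotation_sum_shift : Function.Bijective
    (Sum.elim (fun p : ℤ × ℤ => (p.1 + p.2, p.1 - p.2))
      (fun p : ℤ × ℤ => (p.1 + p.2 + 1, p.1 - p.2))) := by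
  constructor
  · rintro (⟨a, b⟩ | ⟨a, b⟩) (⟨c, d⟩ | ⟨c, d⟩) h <;>
    simp only [Sum.elim_inl, Sum.elim_inr, Prod.mk.injEq, Sum.inl.injEq, Sum.inr.injEq,
      reduceCtorEq] at h ⊢ <;> omega
  · rintro ⟨m, n⟩
    obtain ⟨k, hk | hk⟩ := Int.even_or_odd' (m + n)
    · exact ⟨.inl (k, m - k), by simp only [Sum.elim_inl, Prod.mk.injEq]; omega⟩
    · exact ⟨.inr (k, m - k - 1), by simp only [Sum.elim_inr, Prod.mk.injEq]; omega⟩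

lemma bijective_rotation_sum_reflection : Function.Bijective
    (Sum.elim (fun p : ℤ × ℤ => (p.1 + p.2, p.1 - p.2))
      (fun p : ℤ × ℤ => (p.1 + p.2, -1 - (p.1 - p.2)))) := by
  constructor
  · rintro (⟨a, b⟩ | ⟨a, b⟩) (⟨c, d⟩ | ⟨c, d⟩) h <;>
    simp only [Sum.elim_inl, Sum.elim_inr, Prod.mk.injEq, Sum.inl.injEq, Sum.inr.injEq,
      reduceCtorEq] at h ⊢ <;> omega
  · rintro ⟨m, n⟩
    obtain ⟨k, hk | hk⟩ := Int.even_or_odd' (m + n)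
    · exact ⟨.inl (k, m - k), by simp only [Sum.elim_inl, Prod.mk.injEq]; omega⟩
    · exact ⟨.inr (m - k - 1, k + 1), by simp only [Sum.elim_inr, Prod.mk.injEq]; omega⟩

/-- `∑ q^(n²)`, Jacobi's `θ₃(q)`, as a power series over any normed field; `θ₄(q)` is its value
at `-q`. -/
noncomputable def squareTheta (q : 𝕜) : 𝕜 := ∑' n : ℤ, q ^ n.natAbs ^ 2

/-- `∑ q^(n(n+1))`, a power series over any normed field with `θ₂(q) = q^(1/4) * pronicTheta q`. -/
noncomputable def pronicTheta (q : 𝕜) : 𝕜 := ∑' n : ℤ, q ^ pronic n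

lemma squareTheta_zero : squareTheta (0 : 𝕜) = 1 := by
  rw [squareTheta, tsum_eq_single 0 fun n hn => zero_pow (by simpa using hn)]
  simp

lemma pronicTheta_zero : pronicTheta (0 : 𝕜) = 2 := by
  rw [pronicTheta, tsum_eq_sum (s := {0, -1})]
  · norm_num [pronic]
  · intro n hn
    have := natCast_pronic n
    refine zero_pow fun h => hn ?_
    have : n = 0 ∨ n + 1 = 0 := by simpa [h] using this
    simp only [Finset.mem_insert, Finset.mem_singleton]
    omega

lemma pronicTheta_neg (q : 𝕜) : pronicTheta (-q) = pronicTheta q :=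
  tsum_congr fun n => (even_pronic n).neg_pow q

variable [CompleteSpace 𝕜] {q : 𝕜}

lemma summable_pow_natAbs_sq (hq : ‖q‖ < 1) : Summable fun n : ℤ => q ^ n.natAbs ^ 2 :=
  (summable_norm_pow_of_natAbs_le natAbs_le_natAbs_sq_add_one hq).of_norm

lemma summable_pow_pronic (hq : ‖q‖ < 1) : Summable fun n : ℤ => q ^ pronic n :=
  (summable_norm_pow_of_natAbs_le natAbs_le_pronic_add_one hq).of_norm

lemma hasSum_pow_add_of_natAbs_le {e e' : ℤ → ℕ} (he : ∀ n, n.natAbs ≤ e n + 1)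
    (he' : ∀ n, n.natAbs ≤ e' n + 1) (hq : ‖q‖ < 1) :
    HasSum (fun p : ℤ × ℤ => q ^ (e p.1 + e' p.2)) ((∑' n, q ^ e n) * ∑' n, q ^ e' n) := by
  have hn := summable_norm_pow_of_natAbs_le he hq
  have hn' := summable_norm_pow_of_natAbs_le he' hq
  simp only [pow_add]
  rw [tsum_mul_tsum_of_summable_norm hn hn']
  exact (summable_mul_of_summable_norm hn hn').hasSum

lemma squareTheta_sq (hq : ‖q‖ < 1) :
    squareTheta q ^ 2 = squareTheta (q ^ 2) ^ 2 + q * pronicTheta (q ^ 2) ^ 2 := by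
  have hq2 : ‖q ^ 2‖ < 1 := by simpa using pow_lt_one₀ (norm_nonneg q) hq two_ne_zero
  have hs {q : 𝕜} (hq : ‖q‖ < 1) :=
    hasSum_pow_add_of_natAbs_le natAbs_le_natAbs_sq_add_one natAbs_le_natAbs_sq_add_one hq
  have hp := hasSum_pow_add_of_natAbs_le natAbs_le_pronic_add_one natAbs_le_pronic_add_one hq2
  rw [sq (squareTheta q), sq (squareTheta (q ^ 2)), sq (pronicTheta (q ^ 2))]
  simp only [squareTheta, pronicTheta]
  rw [← (hs hq).tsum_eq, ← (hs hq2).tsum_eq, ← hp.tsum_eq, ← tsum_mul_left,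
    tsum_eq_tsum_add_tsum_of_bijective (hs hq).summable bijective_rotation_sum_shift]
  congr 1 <;> refine tsum_congr fun p => ?_
  · rw [← pow_mul]
    congr 1
    zify
    simp only [sq_abs]
    ring
  · rw [← pow_mul, ← pow_succ']
    congr 1
    zify
    simp only [sq_abs, natCast_pronic]
    ring

lemma pronicTheta_sq (hq : ‖q‖ < 1) :
    pronicTheta q ^ 2 = 2 * pronicTheta (q ^ 2) * squareTheta (q ^ 2) := by
  have hq2 : ‖q ^ 2‖ < 1 := by simpa using pow_lt_one₀ (norm_nonneg q) hq two_ne_zero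
  have hpp := hasSum_pow_add_of_natAbs_le natAbs_le_pronic_add_one natAbs_le_pronic_add_one hq
  have hps := hasSum_pow_add_of_natAbs_le natAbs_le_pronic_add_one natAbs_le_natAbs_sq_add_one hq2
  rw [sq (pronicTheta q), mul_assoc, squareTheta]
  simp only [pronicTheta]
  rw [← hpp.tsum_eq, ← hps.tsum_eq,
    tsum_eq_tsum_add_tsum_of_bijective hpp.summable bijective_rotation_sum_reflection, two_mul]
  congr 1 <;>
  · refine tsum_congr fun p => ?_
    rw [← pow_mul]
    congr 1
    zify
    simp only [sq_abs, natCast_pronic]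
    ring

lemma squareTheta_neg_sq (hq : ‖q‖ < 1) :
    squareTheta (-q) ^ 2 = squareTheta (q ^ 2) ^ 2 - q * pronicTheta (q ^ 2) ^ 2 := by
  rw [squareTheta_sq (by rwa [norm_neg]), neg_sq]
  ring

lemma squareTheta_pow_four (hq : ‖q‖ < 1) :
    squareTheta q ^ 4 = q * pronicTheta q ^ 4 + squareTheta (-q) ^ 4 := by
  have hs := squareTheta_sq hq
  have hn := squareTheta_neg_sq hq
  have hp := pronicTheta_sq hq
  grind

end LacunarySeries

lemma squareTheta_pos {q : ℝ} (hq₀ : 0 ≤ q) (hq₁ : q < 1) : 0 < squareTheta q := by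
  have hsum := summable_pow_natAbs_sq (q := q) (by rwa [Real.norm_of_nonneg hq₀])
  exact hsum.tsum_pos (fun n => by positivity) 0 (by simp)

lemma pronicTheta_pos {q : ℝ} (hq₀ : 0 ≤ q) (hq₁ : q < 1) : 0 < pronicTheta q := by
  have hsum := summable_pow_pronic (q := q) (by rwa [Real.norm_of_nonneg hq₀])
  exact hsum.tsum_pos (fun n => by positivity) 0 (by simp [pronic])

lemma squareTheta_ofReal (q : ℝ) : squareTheta (q : ℂ) = (squareTheta q : ℝ) := by
  simp [squareTheta, Complex.ofReal_tsum]

lemma pronicTheta_ofReal (q : ℝ) : pronicTheta (q : ℂ) = (pronicTheta q : ℝ) := by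
  simp [pronicTheta, Complex.ofReal_tsum]

lemma differentiableOn_tsum_pow_of_natAbs_le {e : ℤ → ℕ} (he : ∀ n, n.natAbs ≤ e n + 1) :
    DifferentiableOn ℂ (fun q : ℂ => ∑' n : ℤ, q ^ e n) (Metric.ball 0 1) := by
  intro q hq
  obtain ⟨r, hqr, hr⟩ := exists_between (mem_ball_zero_iff.mp hq)
  have hball : DifferentiableOn ℂ (fun q : ℂ => ∑' n : ℤ, q ^ e n) (Metric.ball 0 r) := by
    refine Complex.differentiableOn_tsum_of_summable_norm
      (summable_pow_of_natAbs_le he ((norm_nonneg q).trans hqr.le) hr) (fun n => by fun_prop)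
      Metric.isOpen_ball fun n w hw => ?_
    rw [norm_pow]
    gcongr
    exact (mem_ball_zero_iff.mp hw).le
  exact (hball.differentiableAt
    (Metric.isOpen_ball.mem_nhds (mem_ball_zero_iff.mpr hqr))).differentiableWithinAt

lemma differentiableOn_squareTheta :
    DifferentiableOn ℂ (squareTheta : ℂ → ℂ) (Metric.ball 0 1) :=
  differentiableOn_tsum_pow_of_natAbs_le natAbs_le_natAbs_sq_add_one

lemma differentiableOn_pronicTheta :
    DifferentiableOn ℂ (pronicTheta : ℂ → ℂ) (Metric.ball 0 1) :=
  differentiableOn_tsum_pow_of_natAbs_le natAbs_le_pronic_add_one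

lemma analyticAt_re_comp_ofReal {f : ℂ → ℂ} (hf : DifferentiableOn ℂ f (Metric.ball 0 1)) {q : ℝ}
    (hq : |q| < 1) : AnalyticAt ℝ (fun x : ℝ => (f x).re) q :=
  (hf.analyticAt (Metric.isOpen_ball.mem_nhds
    (by rwa [mem_ball_zero_iff, Complex.norm_real]))).re_ofReal

lemma analyticAt_squareTheta {q : ℝ} (hq : |q| < 1) : AnalyticAt ℝ squareTheta q := by
  simpa only [squareTheta_ofReal, Complex.ofReal_re] using
    analyticAt_re_comp_ofReal differentiableOn_squareTheta hq

lemma analyticAt_pronicTheta {q : ℝ} (hq : |q| < 1) : AnalyticAt ℝ pronicTheta q := by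
  simpa only [pronicTheta_ofReal, Complex.ofReal_re] using
    analyticAt_re_comp_ofReal differentiableOn_pronicTheta hq

section WeightFour

open UpperHalfPlane ModularForm Filter Topology MatrixGroups
open Function.Periodic (qParam invQParam norm_qParam_lt_one)

lemma qParam_two (τ : ℂ) : qParam 2 τ = Complex.exp (π * Complex.I * τ) := by
  rw [qParam]
  push_cast
  ring_nf

lemma qParam_two_add_one (τ : ℂ) : qParam 2 (τ + 1) = -qParam 2 τ := by
  rw [qParam_two, qParam_two, mul_add, Complex.exp_add, mul_one, Complex.exp_pi_mul_I]
  ring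

lemma jacobiTheta₂_zero_left (τ : ℂ) : jacobiTheta₂ 0 τ = squareTheta (qParam 2 τ) := by
  refine tsum_congr fun n => ?_
  rw [jacobiTheta₂_term, qParam_two, ← Complex.exp_nat_mul, Nat.cast_pow, Nat.cast_natAbs,
    ← Int.cast_pow |n|, sq_abs, Int.cast_pow]
  ring_nf

lemma jacobiTheta₂_half_period (τ : ℂ) : jacobiTheta₂ (τ / 2) τ = pronicTheta (qParam 2 τ) := by
  refine tsum_congr fun n => ?_
  rw [jacobiTheta₂_term, qParam_two, ← Complex.exp_nat_mul, ← Int.cast_natCast (pronic n),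
    natCast_pronic]
  push_cast
  ring_nf

lemma jacobiTheta₂_one_half (τ : ℂ) : jacobiTheta₂ (1 / 2) τ = squareTheta (-qParam 2 τ) := by
  rw [← qParam_two_add_one, ← jacobiTheta₂_zero_left]
  refine tsum_congr fun n => ?_
  rw [jacobiTheta₂_term, jacobiTheta₂_term, Complex.exp_eq_exp_iff_exists_int]
  obtain ⟨k, hk⟩ := Int.even_mul_pred_self n
  have hk' : (n : ℂ) * (n - 1) = k + k := by exact_mod_cast congrArg (Int.cast : ℤ → ℂ) hk
  refine ⟨-k, ?_⟩
  push_cast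
  linear_combination (-π * Complex.I) * hk'

lemma cpow_one_half_neg_I_mul_pow_eight (τ : ℂ) :
    ((-Complex.I * τ) ^ (1 / 2 : ℂ)) ^ 8 = τ ^ 4 := by
  rw [← Complex.cpow_nat_mul, show ((8 : ℕ) : ℂ) * (1 / 2) = (4 : ℕ) by norm_num,
    Complex.cpow_natCast, mul_pow, Even.neg_pow (by decide), Complex.I_pow_four, one_mul]

lemma squareTheta_pow_eight_S {τ : ℂ} (hτ : τ ≠ 0) :
    squareTheta (qParam 2 (-1 / τ)) ^ 8 = τ ^ 4 * squareTheta (qParam 2 τ) ^ 8 := by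
  have h := jacobiTheta₂_functional_equation 0 τ
  rw [zero_div, jacobiTheta₂_zero_left, jacobiTheta₂_zero_left] at h
  rw [h, mul_pow, mul_pow, div_pow, cpow_one_half_neg_I_mul_pow_eight]
  field_simp
  simp

lemma pronicTheta_pow_eight_S {τ : ℂ} (hτ : τ ≠ 0) :
    qParam 2 (-1 / τ) ^ 2 * pronicTheta (qParam 2 (-1 / τ)) ^ 8 =
      τ ^ 4 * squareTheta (-qParam 2 τ) ^ 8 := by
  have h := jacobiTheta₂_functional_equation (1 / 2) τ
  have hexp : Complex.exp (-π * Complex.I * (1 / 2) ^ 2 / τ) ^ 8 = qParam 2 (-1 / τ) ^ 2 := by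
    rw [qParam_two, ← Complex.exp_nat_mul, ← Complex.exp_nat_mul]
    push_cast
    ring_nf
  rw [show (1 / 2 / τ : ℂ) = -((-1 / τ) / 2) by ring, jacobiTheta₂_neg_left,
    jacobiTheta₂_one_half, jacobiTheta₂_half_period] at h
  rw [h, mul_pow, mul_pow, div_pow, cpow_one_half_neg_I_mul_pow_eight, hexp]
  field_simp

/-- The sum `θ₂⁸ + θ₃⁸ + θ₄⁸` as a function of the nome. -/
noncomputable def thetaEight (q : ℂ) : ℂ :=
  q ^ 2 * pronicTheta q ^ 8 + squareTheta q ^ 8 + squareTheta (-q) ^ 8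

lemma thetaEight_neg (q : ℂ) : thetaEight (-q) = thetaEight q := by
  rw [thetaEight, thetaEight, neg_neg, pronicTheta_neg]
  ring

lemma thetaEight_S {τ : ℂ} (hτ : τ ≠ 0) :
    thetaEight (qParam 2 (-1 / τ)) = τ ^ 4 * thetaEight (qParam 2 τ) := by
  have hneg := pronicTheta_pow_eight_S (τ := -1 / τ) (by simp [hτ])
  rw [show -1 / (-1 / τ) = τ by field_simp] at hneg
  rw [thetaEight, thetaEight, pronicTheta_pow_eight_S hτ, squareTheta_pow_eight_S hτ, hneg]
  field_simp
  ring

lemma differentiableOn_thetaEight : DifferentiableOn ℂ thetaEight (Metric.ball 0 1) :=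
  (((differentiableOn_id.pow 2).mul (differentiableOn_pronicTheta.pow 8)).add
    (differentiableOn_squareTheta.pow 8)).add
    ((differentiableOn_squareTheta.comp differentiableOn_id.neg
      fun q hq => by simpa using hq).pow 8)

lemma thetaEight_zero : thetaEight 0 = 2 := by
  norm_num [thetaEight, squareTheta_zero]

lemma thetaEight_slash_S :
    (fun τ : ℍ => thetaEight (qParam 2 τ)) ∣[(4 : ℤ)] ModularGroup.S =
      fun τ : ℍ => thetaEight (qParam 2 τ) := by
  ext τ
  have hτ : (τ : ℂ) ≠ 0 := UpperHalfPlane.ne_zero τ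
  rw [SL_slash_apply, UpperHalfPlane.modular_S_smul, ModularGroup.denom_S, UpperHalfPlane.coe_mk,
    show (-(τ : ℂ))⁻¹ = -1 / τ by rw [inv_neg, neg_div, one_div], thetaEight_S hτ, zpow_neg]
  field_simp

lemma thetaEight_slash_T :
    (fun τ : ℍ => thetaEight (qParam 2 τ)) ∣[(4 : ℤ)] ModularGroup.T =
      fun τ : ℍ => thetaEight (qParam 2 τ) := by
  ext τ
  rw [SL_slash_apply, modular_T_smul, ModularGroup.denom_apply, coe_vadd, Complex.ofReal_one,
    add_comm, qParam_two_add_one, thetaEight_neg]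
  simp [ModularGroup.T]

lemma tendsto_thetaEight_atImInfty :
    Tendsto (fun τ : ℍ => thetaEight (qParam 2 τ)) atImInfty (𝓝 2) := by
  have hcont : ContinuousAt thetaEight 0 :=
    (differentiableOn_thetaEight.differentiableAt (Metric.ball_mem_nhds 0 one_pos)).continuousAt
  rw [← thetaEight_zero]
  exact hcont.tendsto.comp (qParam_tendsto_atImInfty two_pos)

/-- The level one modular form `θ₂⁸ + θ₃⁸ + θ₄⁸` of weight `4`. -/
noncomputable def thetaEightForm : ModularForm 𝒮ℒ 4 where
  toFun τ := thetaEight (qParam 2 τ)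
  slash_action_eq' A hA := by
    obtain ⟨γ, rfl⟩ := hA
    exact SlashInvariantForm.slash_action_generators_SL2Z thetaEight_slash_S thetaEight_slash_T γ
  holo' := by
    rw [UpperHalfPlane.mdifferentiable_iff]
    refine (differentiableOn_thetaEight.comp
      (Function.Periodic.differentiable_qParam (h := 2)).differentiableOn
      fun τ hτ => ?_).congr fun τ hτ => ?_
    · exact mem_ball_zero_iff.mpr (norm_qParam_lt_one two_pos hτ)
    · simp [ofComplex_apply_of_im_pos hτ]
  bdd_at_cusps' hc := by
    rw [Subgroup.IsArithmetic.isCusp_iff_isCusp_SL2Z] at hc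
    rw [OnePoint.isBoundedAt_iff_forall_SL2Z hc]
    intro γ _
    rw [SlashInvariantForm.slash_action_generators_SL2Z thetaEight_slash_S thetaEight_slash_T]
    exact tendsto_thetaEight_atImInfty.isBigO_one ℝ

lemma thetaEightForm_apply (τ : ℍ) : thetaEightForm τ = thetaEight (qParam 2 τ) := rfl

lemma qExpansion_thetaEightForm_coeff_zero : (qExpansion 1 thetaEightForm).coeff 0 = 2 := by
  rw [UpperHalfPlane.qExpansion_coeff_zero one_pos
    (ModularFormClass.analyticAt_cuspFunction_zero thetaEightForm one_pos one_mem_strictPeriods_SL)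
    (SlashInvariantFormClass.periodic_comp_ofComplex thetaEightForm one_mem_strictPeriods_SL)]
  exact tendsto_thetaEight_atImInfty.limUnder_eq

lemma thetaEightForm_eq : thetaEightForm = (2 : ℂ) • E₄ := by
  obtain ⟨c, hc⟩ := (finrank_eq_one_iff_of_nonzero' E₄
    (EisensteinSeries.E_ne_zero (by norm_num) ⟨2, rfl⟩)).mp
    (Module.rank_eq_one_iff_finrank_eq_one.mp levelOne_weight_four_rank_one) thetaEightForm
  have hcoeff := ModularForm.qExpansion_smul one_pos one_mem_strictPeriods_SL c E₄
  have hc2 : c = 2 := by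
    rw [← qExpansion_thetaEightForm_coeff_zero, ← hc, FunLike.coe_smul, hcoeff]
    simp [-PowerSeries.coeff_zero_eq_constantCoeff,
      EisensteinSeries.E_qExpansion_coeff_zero _ ⟨2, rfl⟩]
  rw [← hc, hc2]

lemma E₄_qExpansion_coeff_succ (m : ℕ) :
    (qExpansion 1 E₄).coeff (m + 1) = 240 * (sigma3 (m + 1) : ℂ) := by
  have hsigma : ArithmeticFunction.sigma 3 (m + 1) = sigma3 (m + 1) :=
    ArithmeticFunction.sigma_apply
  norm_num [EisensteinSeries.E_qExpansion_coeff _ ⟨2, rfl⟩, hsigma,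
    show bernoulli 4 = -1 / 30 by decide +kernel]

lemma hasSum_thetaEight {q : ℂ} (hq₀ : q ≠ 0) (hq₁ : ‖q‖ < 1) :
    HasSum (fun m : ℕ => 2 * (qExpansion 1 E₄).coeff m * (q ^ 2) ^ m) (thetaEight q) := by
  have him : 0 < (invQParam 2 q).im := by
    rw [Function.Periodic.im_invQParam]
    exact mul_pos_of_neg_of_neg (div_neg_of_neg_of_pos (by norm_num) (by positivity))
      (Real.log_neg (norm_pos_iff.mpr hq₀) hq₁)
  have hq : qParam 2 (invQParam 2 q) = q := Function.Periodic.qParam_right_inv two_ne_zero hq₀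
  have hq2 : qParam 1 (invQParam 2 q) = q ^ 2 := by
    nth_rw 2 [← hq]
    rw [qParam_two, ← Complex.exp_nat_mul, qParam]
    push_cast
    ring_nf
  have hE := ModularForm.hasSum_qExpansion E₄ one_pos one_mem_strictPeriods_SL ⟨_, him⟩
  have hval : thetaEight q = 2 * E₄ ⟨_, him⟩ := by
    have h := DFunLike.congr_fun thetaEightForm_eq ⟨invQParam 2 q, him⟩
    rwa [thetaEightForm_apply, UpperHalfPlane.coe_mk, hq] at h
  rw [hval]
  simpa only [UpperHalfPlane.coe_mk, hq2, smul_eq_mul, mul_assoc] using hE.mul_left 2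

lemma thetaEight_eq {q : ℂ} (hq : ‖q‖ < 1) :
    thetaEight q = 2 * squareTheta (q ^ 2) ^ 8 +
      28 * q ^ 2 * pronicTheta (q ^ 2) ^ 4 * squareTheta (q ^ 2) ^ 4 +
      2 * (q ^ 2) ^ 2 * pronicTheta (q ^ 2) ^ 8 := by
  have hpow (z : ℂ) : z ^ 8 = (z ^ 2) ^ 4 := by ring
  rw [thetaEight, hpow (pronicTheta q), hpow (squareTheta q), hpow (squareTheta (-q)),
    squareTheta_sq hq, squareTheta_neg_sq hq, pronicTheta_sq hq]
  ring

lemma thetaEight_sub_thetaEight {p p' x : ℂ} (hp : ‖p‖ < 1) (hp' : ‖p'‖ < 1) (hx : p ^ 2 = x)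
    (hx' : p' ^ 2 = -x) :
    thetaEight p - thetaEight p' = 240 * x * (pronicTheta (x ^ 2) ^ 2 * squareTheta (x ^ 2) ^ 2 *
      (squareTheta (x ^ 2) ^ 4 + x ^ 2 * pronicTheta (x ^ 2) ^ 4)) := by
  have hx₁ : ‖x‖ < 1 := by
    rw [← hx, norm_pow]
    exact pow_lt_one₀ (norm_nonneg p) hp two_ne_zero
  have hpow4 (z : ℂ) : z ^ 4 = (z ^ 2) ^ 2 := by ring
  have hpow8 (z : ℂ) : z ^ 8 = (z ^ 2) ^ 4 := by ring
  rw [thetaEight_eq hp, thetaEight_eq hp', hx, hx', pronicTheta_neg, hpow8 (pronicTheta x),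
    hpow8 (squareTheta x), hpow8 (squareTheta (-x)), hpow4 (pronicTheta x),
    hpow4 (squareTheta x), hpow4 (squareTheta (-x)), squareTheta_sq hx₁, squareTheta_neg_sq hx₁,
    pronicTheta_sq hx₁]
  ring

/-- The odd part of the `q`-expansion of `E₄`, evaluated at a square root `x` of `-q`. -/
lemma hasSum_sigma3_odd {q : ℂ} (hq₀ : q ≠ 0) (hq₁ : ‖q‖ < 1) :
    HasSum (fun n : ℕ => (sigma3 (2 * n + 1) : ℂ) * (-q) ^ n)
      (pronicTheta q ^ 2 * squareTheta (-q) ^ 2 *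
        (squareTheta (-q) ^ 4 - q * pronicTheta q ^ 4) / 4) := by
  have hroot (z : ℂ) (hz₀ : z ≠ 0) (hz₁ : ‖z‖ < 1) : ∃ w ≠ 0, ‖w‖ < 1 ∧ w ^ 2 = z := by
    obtain ⟨w, rfl⟩ := IsAlgClosed.exists_pow_nat_eq z two_pos
    exact ⟨w, pow_ne_zero_iff two_ne_zero |>.mp hz₀,
      (pow_lt_one_iff_of_nonneg (norm_nonneg w) two_ne_zero).mp (norm_pow w 2 ▸ hz₁), rfl⟩
  obtain ⟨x, hx₀, hx₁, hx⟩ := hroot (-q) (neg_ne_zero.mpr hq₀) (by rwa [norm_neg])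
  obtain ⟨p, hp₀, hp₁, hp⟩ := hroot x hx₀ hx₁
  obtain ⟨p', hp₀', hp₁', hp'⟩ := hroot (-x) (neg_ne_zero.mpr hx₀) (by rwa [norm_neg])
  have hdiff := (hasSum_thetaEight hp₀ hp₁).sub (hasSum_thetaEight hp₀' hp₁')
  rw [thetaEight_sub_thetaEight hp₁ hp₁' hp hp', hp, hp', hx, pronicTheta_neg] at hdiff
  have hinj : Function.Injective fun n : ℕ => 2 * n + 1 := fun a b h => by simpa using h
  rw [← hinj.hasSum_iff fun m hm => ?even] at hdiff
  case even =>
    have heven : Even m := Nat.not_odd_iff_even.mp fun ⟨k, hk⟩ => hm ⟨k, hk.symm⟩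
    rw [heven.neg_pow, sub_self]
  have hval : 1 / (960 * x) * (240 * x * (pronicTheta q ^ 2 * squareTheta (-q) ^ 2 *
      (squareTheta (-q) ^ 4 + -q * pronicTheta q ^ 4))) =
      pronicTheta q ^ 2 * squareTheta (-q) ^ 2 *
        (squareTheta (-q) ^ 4 - q * pronicTheta q ^ 4) / 4 := by
    field_simp
    ring
  rw [← hval]
  refine (hdiff.mul_left _).congr_fun fun n => ?_
  rw [Function.comp_apply, E₄_qExpansion_coeff_succ, Odd.neg_pow ⟨n, rfl⟩, pow_succ, pow_mul, hx]
  field_simp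
  ring

end WeightFour

section Doubling

open Filter Topology

lemma of_doubling {P : ℝ → Prop} (hdouble : ∀ s < 0, P (2 * s) → P s)
    (hbot : ∀ᶠ s in atBot, P s) {s : ℝ} (hs : s < 0) : P s := by
  have htendsto : Tendsto (fun n : ℕ => 2 ^ n * s) atTop atBot :=
    (tendsto_pow_atTop_atTop_of_one_lt one_lt_two).atTop_mul_const_of_neg hs
  obtain ⟨n, hn⟩ := (htendsto.eventually hbot).exists
  induction n with
  | zero => simpa using hn
  | succ n ih =>
    refine ih (hdouble _ (mul_neg_of_pos_of_neg (by positivity) hs) ?_)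
    rwa [← mul_assoc, ← pow_succ']

lemma eq_of_eq_comp_two_mul {f : ℝ → ℝ} {l : ℝ} (hf : ∀ s < 0, f s = f (2 * s))
    (hl : Tendsto f atBot (𝓝 l)) {s : ℝ} (hs : s < 0) : f s = l := by
  refine eq_of_forall_dist_le fun ε hε => ?_
  refine of_doubling (P := fun s => dist (f s) l ≤ ε) (fun s hs h => ?_)
    (hl.eventually (Metric.closedBall_mem_nhds l hε)) hs
  rwa [hf s hs]

lemma eq_zero_of_eq_four_mul_comp_two_mul {f : ℝ → ℝ} (hf : ∀ s < 0, f s = 4 * f (2 * s))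
    (hlim : Tendsto (fun s => s ^ 2 * f s) atBot (𝓝 0)) {s : ℝ} (hs : s < 0) : f s = 0 := by
  have hsq := eq_of_eq_comp_two_mul (f := fun s => s ^ 2 * f s)
    (fun s hs => by rw [hf s hs]; ring) hlim hs
  simpa [hs.ne] using hsq

lemma hasDerivAt_comp_const_mul {f : ℝ → ℝ} {f' c s : ℝ} (hf : HasDerivAt f f' (c * s)) :
    HasDerivAt (fun t => f (c * t)) (f' * c) s :=
  hf.comp s (by simpa using (hasDerivAt_id s).const_mul c)

end Doubling

section ExponentialVariable

open Filter Topology Asymptotics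

lemma hasDerivAt_mul_logDeriv {f : ℝ → ℝ} {s : ℝ} (hf : DifferentiableAt ℝ f s) (h0 : f s ≠ 0) :
    HasDerivAt f (f s * logDeriv f s) s := by
  rw [logDeriv_apply, mul_div_cancel₀ _ h0]
  exact hf.hasDerivAt

lemma analyticAt_logDeriv {f : ℝ → ℝ} {x : ℝ} (hf : AnalyticAt ℝ f x) (h0 : f x ≠ 0) :
    AnalyticAt ℝ (logDeriv f) x :=
  hf.deriv.div hf h0

lemma logDeriv_comp_exp {f : ℝ → ℝ} {s : ℝ} (hf : DifferentiableAt ℝ f (exp s)) :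
    logDeriv (fun t => f (exp t)) s = exp s * logDeriv f (exp s) := by
  rw [mul_comm]
  simpa [Function.comp_def] using logDeriv_comp hf Real.differentiableAt_exp

lemma tendsto_comp_exp_atBot {f : ℝ → ℝ} (hf : ContinuousAt f 0) :
    Tendsto (fun s => f (exp s)) atBot (𝓝 (f 0)) :=
  hf.tendsto.comp Real.tendsto_exp_atBot

lemma eventually_comp_exp_atBot {P : ℝ → Prop} (hP : ∀ᶠ x in 𝓝 0, P x) :
    ∀ᶠ s in atBot, P (exp s) :=
  Real.tendsto_exp_atBot.eventually hP

lemma deriv_comp_exp_isBigO {f : ℝ → ℝ} (hf : AnalyticAt ℝ f 0) :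
    (deriv fun s => f (exp s)) =O[atBot] exp := by
  have hbdd := (tendsto_comp_exp_atBot hf.deriv.continuousAt).isBigO_one ℝ
  refine (hbdd.mul (isBigO_refl exp atBot)).congr' ?_ (.of_eq (by simp))
  filter_upwards [eventually_comp_exp_atBot hf.eventually_analyticAt] with s hs
  exact (hs.differentiableAt.hasDerivAt.comp s (Real.hasDerivAt_exp s)).deriv.symm

lemma logDeriv_comp_exp_eventuallyEq {f : ℝ → ℝ} (hf : AnalyticAt ℝ f 0) :
    logDeriv (fun s => f (exp s)) =ᶠ[atBot] fun s => exp s * logDeriv f (exp s) := by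
  filter_upwards [eventually_comp_exp_atBot hf.eventually_analyticAt] with s hs
  exact logDeriv_comp_exp hs.differentiableAt

lemma analyticAt_mul_logDeriv {f : ℝ → ℝ} {x : ℝ} (hf : AnalyticAt ℝ f x) (h0 : f x ≠ 0) :
    AnalyticAt ℝ (fun x => x * logDeriv f x) x :=
  analyticAt_id.mul (analyticAt_logDeriv hf h0)

lemma logDeriv_comp_exp_isBigO {f : ℝ → ℝ} (hf : AnalyticAt ℝ f 0) (h0 : f 0 ≠ 0) :
    (logDeriv fun s => f (exp s)) =O[atBot] exp := by
  have hbdd := (tendsto_comp_exp_atBot (analyticAt_logDeriv hf h0).continuousAt).isBigO_one ℝ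
  refine ((isBigO_refl exp atBot).mul hbdd).congr' ?_ (.of_eq (by simp))
  exact (logDeriv_comp_exp_eventuallyEq hf).symm

lemma deriv_logDeriv_comp_exp_isBigO {f : ℝ → ℝ} (hf : AnalyticAt ℝ f 0) (h0 : f 0 ≠ 0) :
    deriv (logDeriv fun s => f (exp s)) =O[atBot] exp := by
  refine (deriv_comp_exp_isBigO (analyticAt_mul_logDeriv hf h0)).congr' ?_ .rfl
  obtain ⟨a, ha⟩ := eventually_atBot.mp (logDeriv_comp_exp_eventuallyEq hf)
  filter_upwards [eventually_lt_atBot a] with s hs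
  refine Filter.EventuallyEq.deriv_eq ?_
  filter_upwards [Iio_mem_nhds hs] with t ht using (ha t ht.le).symm

lemma tendsto_sq_mul_of_isBigO_exp {f : ℝ → ℝ} (hf : f =O[atBot] exp) :
    Tendsto (fun s => s ^ 2 * f s) atBot (𝓝 0) := by
  refine ((isBigO_refl (fun s : ℝ => s ^ 2) atBot).mul hf).trans_tendsto ?_
  simpa [Function.comp_def] using
    (Real.tendsto_pow_mul_exp_neg_atTop_nhds_zero 2).comp tendsto_neg_atBot_atTop

end ExponentialVariable

section LogVariable

open Filter Topology Asymptotics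

/-- `θ₂(eˢ)`: the theta null value in the variable `s = log q`, in which `q d/dq` is `d/ds` and
`q ↦ q²` is `s ↦ 2 * s`. -/
noncomputable def ϑ₂ (s : ℝ) : ℝ := theta2 (exp s)

/-- `θ₃(eˢ)`. -/
noncomputable def ϑ₃ (s : ℝ) : ℝ := theta3 (exp s)

/-- `θ₄(eˢ)`. -/
noncomputable def ϑ₄ (s : ℝ) : ℝ := theta4 (exp s)

lemma ϑ₂_eq : ϑ₂ = fun s => exp (s / 4) * pronicTheta (exp s) := by
  ext s
  rw [ϑ₂, theta2, pronicTheta, ← tsum_mul_left]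
  refine tsum_congr fun n => ?_
  have hn : (pronic n : ℝ) = n * (n + 1) := mod_cast natCast_pronic n
  rw [← Real.exp_mul, ← Real.exp_nat_mul, ← Real.exp_add, hn]
  ring_nf

lemma exp_rpow_intCast_sq (s : ℝ) (n : ℤ) : exp s ^ ((n : ℝ) ^ 2) = exp s ^ n.natAbs ^ 2 := by
  rw [← Int.cast_pow, ← Int.natAbs_sq, Int.cast_pow, Int.cast_natCast]
  exact_mod_cast Real.rpow_natCast _ _

lemma ϑ₃_eq : ϑ₃ = fun s => squareTheta (exp s) := by
  ext s
  simp only [ϑ₃, theta3, squareTheta, exp_rpow_intCast_sq]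

lemma ϑ₄_eq : ϑ₄ = fun s => squareTheta (-exp s) := by
  ext s
  refine tsum_congr fun n => ?_
  rw [exp_rpow_intCast_sq, neg_pow (exp s)]
  congr 1
  rcases Int.even_or_odd n with hn | hn
  · rw [hn.neg_one_zpow, ((Int.natAbs_even.mpr hn).pow_of_ne_zero two_ne_zero).neg_one_pow]
  · rw [hn.neg_one_zpow, (Int.natAbs_odd.mpr hn).pow.neg_one_pow]

variable {s : ℝ}

lemma abs_exp_lt_one (hs : s < 0) : |exp s| < 1 := by
  rwa [Real.abs_exp, Real.exp_lt_one_iff]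

lemma ϑ₂_pos (hs : s < 0) : 0 < ϑ₂ s := by
  rw [ϑ₂_eq]
  exact mul_pos (Real.exp_pos _) (pronicTheta_pos (Real.exp_pos s).le (Real.exp_lt_one_iff.mpr hs))

lemma ϑ₃_pos (hs : s < 0) : 0 < ϑ₃ s := by
  rw [ϑ₃_eq]
  exact squareTheta_pos (Real.exp_pos s).le (Real.exp_lt_one_iff.mpr hs)

lemma ϑ₂_pow_four (s : ℝ) : ϑ₂ s ^ 4 = exp s * pronicTheta (exp s) ^ 4 := by
  rw [ϑ₂_eq, mul_pow, ← Real.exp_nat_mul]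
  ring_nf

lemma exp_two_mul_eq_sq (s : ℝ) : exp (2 * s) = exp s ^ 2 := by
  rw [two_mul, Real.exp_add, sq]

lemma ϑ₂_two_mul_sq (s : ℝ) : ϑ₂ (2 * s) ^ 2 = exp s * pronicTheta (exp s ^ 2) ^ 2 := by
  rw [ϑ₂_eq, mul_pow, ← Real.exp_nat_mul, ← Real.exp_nat_mul]
  ring_nf

lemma ϑ₂_sq (hs : s < 0) : ϑ₂ s ^ 2 = 2 * ϑ₂ (2 * s) * ϑ₃ (2 * s) := by
  rw [ϑ₂_eq, ϑ₃_eq, mul_pow, pronicTheta_sq (abs_exp_lt_one hs), ← Real.exp_nat_mul,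
    ← Real.exp_nat_mul]
  ring_nf

lemma ϑ₃_sq (hs : s < 0) : ϑ₃ s ^ 2 = ϑ₃ (2 * s) ^ 2 + ϑ₂ (2 * s) ^ 2 := by
  simpa only [ϑ₂_two_mul_sq, ϑ₃_eq, exp_two_mul_eq_sq] using squareTheta_sq (abs_exp_lt_one hs)

lemma ϑ₄_sq (hs : s < 0) : ϑ₄ s ^ 2 = ϑ₃ (2 * s) ^ 2 - ϑ₂ (2 * s) ^ 2 := by
  simpa only [ϑ₂_two_mul_sq, ϑ₃_eq, ϑ₄_eq, exp_two_mul_eq_sq] using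
    squareTheta_neg_sq (abs_exp_lt_one hs)

lemma ϑ₃_pow_four (hs : s < 0) : ϑ₃ s ^ 4 = ϑ₂ s ^ 4 + ϑ₄ s ^ 4 := by
  rw [ϑ₂_pow_four, ϑ₃_eq, ϑ₄_eq, squareTheta_pow_four (abs_exp_lt_one hs)]

lemma ϑ₄_two_mul_pow_four (hs : s < 0) : ϑ₄ (2 * s) ^ 4 = ϑ₃ s ^ 2 * ϑ₄ s ^ 2 := by
  have h := ϑ₃_pow_four (s := 2 * s) (by linarith)
  rw [ϑ₃_sq hs, ϑ₄_sq hs]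
  linear_combination -h

lemma tendsto_ϑ₂ : Tendsto ϑ₂ atBot (𝓝 0) := by
  have hexp : Tendsto (fun s : ℝ => exp (s / 4)) atBot (𝓝 0) :=
    Real.tendsto_exp_atBot.comp (tendsto_id.atBot_div_const (by norm_num))
  have hlim := hexp.mul
    (tendsto_comp_exp_atBot (analyticAt_pronicTheta (q := 0) (by simp)).continuousAt)
  rwa [zero_mul, ← ϑ₂_eq] at hlim

lemma tendsto_ϑ₃ : Tendsto ϑ₃ atBot (𝓝 1) := by
  have hlim := tendsto_comp_exp_atBot (analyticAt_squareTheta (q := 0) (by simp)).continuousAt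
  rwa [squareTheta_zero, ← ϑ₃_eq] at hlim

lemma tendsto_ϑ₄ : Tendsto ϑ₄ atBot (𝓝 1) := by
  have hneg : ContinuousAt (fun q : ℝ => squareTheta (-q)) 0 :=
    ContinuousAt.comp (g := squareTheta) (by simpa using
      (analyticAt_squareTheta (q := 0) (by simp)).continuousAt) continuousAt_neg
  have hlim := tendsto_comp_exp_atBot hneg
  rwa [neg_zero, squareTheta_zero, ← ϑ₄_eq] at hlim

lemma ϑ₄_ne_zero (hs : s < 0) : ϑ₄ s ≠ 0 := by
  refine of_doubling (P := fun s => ϑ₄ s ≠ 0) (fun s hs h h0 => h ?_)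
    (tendsto_ϑ₄.eventually_ne one_ne_zero) hs
  simpa [h0] using ϑ₄_two_mul_pow_four hs

lemma analyticAt_ϑ₂ (hs : s < 0) : AnalyticAt ℝ ϑ₂ s := by
  rw [ϑ₂_eq]
  have hexp : AnalyticAt ℝ (fun t : ℝ => exp (t / 4)) s := by fun_prop
  exact hexp.mul ((analyticAt_pronicTheta (abs_exp_lt_one hs)).fun_comp analyticAt_rexp)

lemma analyticAt_ϑ₃ (hs : s < 0) : AnalyticAt ℝ ϑ₃ s := by
  rw [ϑ₃_eq]
  exact (analyticAt_squareTheta (abs_exp_lt_one hs)).fun_comp analyticAt_rexp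

lemma analyticAt_ϑ₄ (hs : s < 0) : AnalyticAt ℝ ϑ₄ s := by
  rw [ϑ₄_eq]
  exact (analyticAt_squareTheta (q := -exp s) (by rw [abs_neg]; exact abs_exp_lt_one hs)).fun_comp
    (f := fun t => -exp t) analyticAt_rexp.neg

lemma analyticAt_logDeriv_ϑ₃ (hs : s < 0) : AnalyticAt ℝ (logDeriv ϑ₃) s :=
  analyticAt_logDeriv (analyticAt_ϑ₃ hs) (ϑ₃_pos hs).ne'

lemma logDeriv_ϑ₃_isBigO : logDeriv ϑ₃ =O[atBot] exp := by
  rw [ϑ₃_eq]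
  exact logDeriv_comp_exp_isBigO (analyticAt_squareTheta (by simp)) (by simp [squareTheta_zero])

lemma deriv_logDeriv_ϑ₃_isBigO : deriv (logDeriv ϑ₃) =O[atBot] exp := by
  rw [ϑ₃_eq]
  exact deriv_logDeriv_comp_exp_isBigO (analyticAt_squareTheta (by simp))
    (by simp [squareTheta_zero])

lemma tendsto_logDeriv_ϑ₃ : Tendsto (logDeriv ϑ₃) atBot (𝓝 0) :=
  logDeriv_ϑ₃_isBigO.trans_tendsto Real.tendsto_exp_atBot

lemma logDeriv_ϑ₂_eq (hs : s < 0) :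
    logDeriv ϑ₂ s = 1 / 4 + logDeriv (fun t => pronicTheta (exp t)) s := by
  have hne := (pronicTheta_pos (Real.exp_pos s).le (Real.exp_lt_one_iff.mpr hs)).ne'
  have hexp : HasDerivAt (fun t : ℝ => exp (t / 4)) (exp (s / 4) * (1 / 4)) s :=
    ((hasDerivAt_id s).div_const 4).exp
  rw [ϑ₂_eq, logDeriv_mul (f := fun t => exp (t / 4)) s (Real.exp_ne_zero _) hne
    hexp.differentiableAt
    ((analyticAt_pronicTheta (abs_exp_lt_one hs)).fun_comp analyticAt_rexp).differentiableAt,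
    logDeriv_apply, hexp.deriv, mul_div_cancel_left₀ _ (Real.exp_ne_zero _)]

lemma tendsto_logDeriv_ϑ₂ : Tendsto (logDeriv ϑ₂) atBot (𝓝 (1 / 4)) := by
  have hlim := (logDeriv_comp_exp_isBigO (analyticAt_pronicTheta (q := 0) (by simp))
    (by simp [pronicTheta_zero])).trans_tendsto Real.tendsto_exp_atBot
  rw [← add_zero (1 / 4 : ℝ)]
  refine (hlim.const_add _).congr' ?_
  filter_upwards [eventually_lt_atBot 0] with s hs using (logDeriv_ϑ₂_eq hs).symm

end LogVariable

section ThetaDerivatives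

open Filter Topology Asymptotics

variable {s : ℝ}

lemma logDeriv_ϑ₂_eq_add (hs : s < 0) :
    logDeriv ϑ₂ s = logDeriv ϑ₂ (2 * s) + logDeriv ϑ₃ (2 * s) := by
  have h2 : 2 * s < 0 := by linarith
  have hleft := (hasDerivAt_mul_logDeriv (analyticAt_ϑ₂ hs).differentiableAt (ϑ₂_pos hs).ne').pow 2
  have hright := ((hasDerivAt_comp_const_mul
    (hasDerivAt_mul_logDeriv (analyticAt_ϑ₂ h2).differentiableAt (ϑ₂_pos h2).ne')).const_mul 2).mul
    (hasDerivAt_comp_const_mul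
      (hasDerivAt_mul_logDeriv (analyticAt_ϑ₃ h2).differentiableAt (ϑ₃_pos h2).ne'))
  have heq : (fun t => ϑ₂ t ^ 2) =ᶠ[𝓝 s] fun t => 2 * ϑ₂ (2 * t) * ϑ₃ (2 * t) := by
    filter_upwards [Iio_mem_nhds hs] with t ht using ϑ₂_sq ht
  have huniq := hleft.unique (hright.congr_of_eventuallyEq heq)
  have hpos : 2 * ϑ₂ s ^ 2 ≠ 0 := mul_ne_zero two_ne_zero (pow_ne_zero 2 (ϑ₂_pos hs).ne')
  apply mul_left_cancel₀ hpos
  push_cast at huniq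
  linear_combination huniq - 2 * (logDeriv ϑ₂ (2 * s) + logDeriv ϑ₃ (2 * s)) * ϑ₂_sq hs

lemma ϑ₃_sq_mul_logDeriv (hs : s < 0) : ϑ₃ s ^ 2 * logDeriv ϑ₃ s =
    2 * (ϑ₃ (2 * s) ^ 2 * logDeriv ϑ₃ (2 * s) + ϑ₂ (2 * s) ^ 2 * logDeriv ϑ₂ (2 * s)) := by
  have h2 : 2 * s < 0 := by linarith
  have hleft := (hasDerivAt_mul_logDeriv (analyticAt_ϑ₃ hs).differentiableAt (ϑ₃_pos hs).ne').pow 2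
  have hright := ((hasDerivAt_comp_const_mul
    (hasDerivAt_mul_logDeriv (analyticAt_ϑ₃ h2).differentiableAt (ϑ₃_pos h2).ne')).pow 2).add
    ((hasDerivAt_comp_const_mul
      (hasDerivAt_mul_logDeriv (analyticAt_ϑ₂ h2).differentiableAt (ϑ₂_pos h2).ne')).pow 2)
  have heq : (fun t => ϑ₃ t ^ 2) =ᶠ[𝓝 s] fun t => ϑ₃ (2 * t) ^ 2 + ϑ₂ (2 * t) ^ 2 := by
    filter_upwards [Iio_mem_nhds hs] with t ht using ϑ₃_sq ht
  have huniq := hleft.unique (hright.congr_of_eventuallyEq heq)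
  push_cast at huniq
  linear_combination huniq / 2

lemma ϑ₃_sq_mul_logDeriv_sub (hs : s < 0) : ϑ₃ s ^ 2 * (logDeriv ϑ₂ s - logDeriv ϑ₃ s) =
    ϑ₄ s ^ 2 * (logDeriv ϑ₂ (2 * s) - logDeriv ϑ₃ (2 * s)) := by
  rw [mul_sub, ϑ₃_sq_mul_logDeriv hs, logDeriv_ϑ₂_eq_add hs, ϑ₃_sq hs, ϑ₄_sq hs]
  ring

lemma logDeriv_ϑ₂ (hs : s < 0) : logDeriv ϑ₂ s = logDeriv ϑ₃ s + ϑ₄ s ^ 4 / 4 := by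
  have hinv : ∀ t < 0, (logDeriv ϑ₂ t - logDeriv ϑ₃ t) / ϑ₄ t ^ 4 =
      (logDeriv ϑ₂ (2 * t) - logDeriv ϑ₃ (2 * t)) / ϑ₄ (2 * t) ^ 4 := fun t ht => by
    have h3 := (ϑ₃_pos ht).ne'
    have h4 := ϑ₄_ne_zero ht
    rw [ϑ₄_two_mul_pow_four ht, div_eq_div_iff (by positivity) (by positivity)]
    linear_combination ϑ₄ t ^ 2 * ϑ₃_sq_mul_logDeriv_sub ht
  have hlim : Tendsto (fun t => (logDeriv ϑ₂ t - logDeriv ϑ₃ t) / ϑ₄ t ^ 4) atBot (𝓝 (1 / 4)) := by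
    simpa [Pi.div_def] using
      (tendsto_logDeriv_ϑ₂.sub tendsto_logDeriv_ϑ₃).div (tendsto_ϑ₄.pow 4) (by norm_num)
  have h4 := ϑ₄_ne_zero hs
  have hval := eq_of_eq_comp_two_mul hinv hlim hs
  rw [div_eq_iff (by positivity)] at hval
  linear_combination hval

lemma hasDerivAt_ϑ₂ (hs : s < 0) :
    HasDerivAt ϑ₂ (ϑ₂ s * (logDeriv ϑ₃ s + ϑ₄ s ^ 4 / 4)) s := by
  rw [← logDeriv_ϑ₂ hs]
  exact hasDerivAt_mul_logDeriv (analyticAt_ϑ₂ hs).differentiableAt (ϑ₂_pos hs).ne'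

lemma hasDerivAt_ϑ₃ (hs : s < 0) : HasDerivAt ϑ₃ (ϑ₃ s * logDeriv ϑ₃ s) s :=
  hasDerivAt_mul_logDeriv (analyticAt_ϑ₃ hs).differentiableAt (ϑ₃_pos hs).ne'

lemma hasDerivAt_ϑ₄ (hs : s < 0) :
    HasDerivAt ϑ₄ (ϑ₄ s * (logDeriv ϑ₃ s - ϑ₂ s ^ 4 / 4)) s := by
  have hderiv := (analyticAt_ϑ₄ hs).differentiableAt.hasDerivAt
  have heq : (fun t => ϑ₄ t ^ 4) =ᶠ[𝓝 s] fun t => ϑ₃ t ^ 4 - ϑ₂ t ^ 4 := by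
    filter_upwards [Iio_mem_nhds hs] with t ht using eq_sub_of_add_eq' (ϑ₃_pow_four ht).symm
  have huniq := (hderiv.pow 4).unique
    ((((hasDerivAt_ϑ₃ hs).pow 4).sub ((hasDerivAt_ϑ₂ hs).pow 4)).congr_of_eventuallyEq heq)
  push_cast at huniq
  refine hderiv.congr_deriv (mul_left_cancel₀
    (mul_ne_zero four_ne_zero (pow_ne_zero 3 (ϑ₄_ne_zero hs))) ?_)
  linear_combination huniq + 4 * logDeriv ϑ₃ s * ϑ₃_pow_four hs

lemma logDeriv_ϑ₃_eq_two_mul (hs : s < 0) : logDeriv ϑ₃ s = 2 * logDeriv ϑ₃ (2 * s) +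
    (ϑ₂ (2 * s) ^ 2 * ϑ₃ (2 * s) ^ 2 - ϑ₂ (2 * s) ^ 4) / 2 := by
  have h2 : 2 * s < 0 := by linarith
  have hmul := ϑ₃_sq_mul_logDeriv hs
  apply mul_left_cancel₀ (pow_ne_zero 2 (ϑ₃_pos hs).ne')
  rw [hmul, logDeriv_ϑ₂ h2, ϑ₃_sq hs]
  linear_combination -ϑ₂ (2 * s) ^ 2 / 2 * ϑ₃_pow_four h2

/-- The difference of the two sides of the Riccati equation for `logDeriv ϑ₃`, i.e. of Ramanujan's
differential equation for the weight two Eisenstein series. It scales with weight four under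
doubling. -/
noncomputable def riccatiDefect (s : ℝ) : ℝ :=
  deriv (logDeriv ϑ₃) s - (2 * logDeriv ϑ₃ s ^ 2 + ϑ₂ s ^ 4 * ϑ₄ s ^ 4 / 8)

lemma riccatiDefect_eq_four_mul (hs : s < 0) : riccatiDefect s = 4 * riccatiDefect (2 * s) := by
  have h2 : 2 * s < 0 := by linarith
  have hd₂ := hasDerivAt_comp_const_mul (hasDerivAt_ϑ₂ h2)
  have hd₃ := hasDerivAt_comp_const_mul (hasDerivAt_ϑ₃ h2)
  have hd := hasDerivAt_comp_const_mul (analyticAt_logDeriv_ϑ₃ h2).differentiableAt.hasDerivAt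
  have heq : logDeriv ϑ₃ =ᶠ[𝓝 s] fun t => 2 * logDeriv ϑ₃ (2 * t) +
      (ϑ₂ (2 * t) ^ 2 * ϑ₃ (2 * t) ^ 2 - ϑ₂ (2 * t) ^ 4) / 2 := by
    filter_upwards [Iio_mem_nhds hs] with t ht using logDeriv_ϑ₃_eq_two_mul ht
  have hderiv := (((hd.const_mul 2).add
    ((((hd₂.pow 2).mul (hd₃.pow 2)).sub (hd₂.pow 4)).div_const 2)).congr_of_eventuallyEq heq).deriv
  have h4 : ϑ₄ (2 * s) ^ 4 = ϑ₃ (2 * s) ^ 4 - ϑ₂ (2 * s) ^ 4 := by rw [ϑ₃_pow_four h2]; ring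
  simp only [Pi.pow_apply] at hderiv
  push_cast at hderiv
  rw [riccatiDefect, hderiv, logDeriv_ϑ₃_eq_two_mul hs, pow_mul (ϑ₂ s) 2 2, pow_mul (ϑ₄ s) 2 2,
    ϑ₂_sq hs, ϑ₄_sq hs, riccatiDefect, h4]
  ring

lemma riccatiDefect_isBigO : riccatiDefect =O[atBot] exp := by
  have hsq : (fun s => logDeriv ϑ₃ s ^ 2) =O[atBot] exp := by
    simpa [sq] using logDeriv_ϑ₃_isBigO.mul (tendsto_logDeriv_ϑ₃.isBigO_one ℝ)
  have hbdd := (((tendsto_comp_exp_atBot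
    (analyticAt_pronicTheta (q := 0) (by simp)).continuousAt).pow 4).mul
      (tendsto_ϑ₄.pow 4)).isBigO_one ℝ
  have hprod : (fun s => ϑ₂ s ^ 4 * ϑ₄ s ^ 4) =O[atBot] exp := by
    simpa [ϑ₂_pow_four, mul_assoc] using (isBigO_refl exp atBot).mul hbdd
  refine deriv_logDeriv_ϑ₃_isBigO.sub ((hsq.const_mul_left 2).add ?_)
  simpa [div_eq_inv_mul] using hprod.const_mul_left 8⁻¹

lemma hasDerivAt_logDeriv_ϑ₃ (hs : s < 0) :
    HasDerivAt (logDeriv ϑ₃) (2 * logDeriv ϑ₃ s ^ 2 + ϑ₂ s ^ 4 * ϑ₄ s ^ 4 / 8) s := by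
  have hzero : riccatiDefect s = 0 := eq_zero_of_eq_four_mul_comp_two_mul (f := riccatiDefect)
    (fun t ht => riccatiDefect_eq_four_mul ht)
    (tendsto_sq_mul_of_isBigO_exp riccatiDefect_isBigO) hs
  exact (analyticAt_logDeriv_ϑ₃ hs).differentiableAt.hasDerivAt.congr_deriv (sub_eq_zero.mp hzero)

end ThetaDerivatives

section FrobeniusSeries

open Filter Topology Asymptotics

/-- Polynomial growth of a real sequence, which makes `∑ c n * q ^ n` and all its derivatives
converge for `|q| < 1`. -/
def HasPolynomialGrowth (c : ℕ → ℝ) : Prop :=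
  ∃ k : ℕ, c =O[atTop] fun n => ((n ^ k : ℕ) : ℝ)

/-- The `k`-th derivative in `r` of `∑ c n * exp ((n + x) * r)`, which is a Frobenius series
`∑ c n * z ^ (n + x)` in the variable `r = log z`. -/
noncomputable def frobeniusSeries (c : ℕ → ℝ) (x : ℝ) (k : ℕ) (r : ℝ) : ℝ :=
  ∑' n : ℕ, (n + x) ^ k * c n * exp ((n + x) * r)

lemma HasPolynomialGrowth.of_isBigO_one {c : ℕ → ℝ} (hc : c =O[atTop] fun _ => (1 : ℝ)) :
    HasPolynomialGrowth c :=
  ⟨0, by simpa using hc⟩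

variable {c : ℕ → ℝ} {x r : ℝ}

lemma HasPolynomialGrowth.pow_mul (hc : HasPolynomialGrowth c) (x : ℝ) (k : ℕ) :
    HasPolynomialGrowth fun n => (n + x) ^ k * c n := by
  obtain ⟨l, hl⟩ := hc
  have hx : (fun n : ℕ => (n : ℝ) + x) =O[atTop] fun n : ℕ => (n : ℝ) :=
    (isBigO_refl _ _).add (isLittleO_const_left.mpr (Or.inr (by
      simpa using tendsto_norm_atTop_atTop.comp (tendsto_natCast_atTop_atTop (R := ℝ))))).isBigO
  exact ⟨k + l, by simpa [pow_add] using (hx.pow k).mul hl⟩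

lemma norm_frobeniusSeries_term (a : ℝ) (n : ℕ) :
    ‖a * exp ((n + x) * r)‖ = exp (x * r) * ‖a * exp r ^ n‖ := by
  rw [norm_mul, norm_mul, ← Real.exp_nat_mul, Real.norm_eq_abs (exp _), Real.norm_eq_abs (exp _),
    Real.abs_exp, Real.abs_exp, mul_left_comm, ← Real.exp_add]
  ring_nf

lemma summable_norm_frobeniusSeries (hc : HasPolynomialGrowth c) (x : ℝ) (k : ℕ) (hr : r < 0) :
    Summable fun n : ℕ => ‖(n + x) ^ k * c n * exp ((n + x) * r)‖ := by
  obtain ⟨l, hl⟩ := hc.pow_mul x k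
  simp only [norm_frobeniusSeries_term]
  exact (summable_norm_mul_geometric_of_norm_lt_one' (by simpa using hr) hl).mul_left _

lemma hasSum_frobeniusSeries (hc : HasPolynomialGrowth c) (x : ℝ) (k : ℕ) (hr : r < 0) :
    HasSum (fun n : ℕ => (n + x) ^ k * c n * exp ((n + x) * r)) (frobeniusSeries c x k r) :=
  (summable_norm_frobeniusSeries hc x k hr).of_norm.hasSum

lemma norm_frobeniusSeries_term_le (a : ℝ) (hx : 0 ≤ x) {r₀ : ℝ} (hr : r ≤ r₀) (n : ℕ) :
    ‖a * exp ((n + x) * r)‖ ≤ ‖a * exp ((n + x) * r₀)‖ := by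
  simp only [norm_mul, Real.norm_eq_abs, Real.abs_exp]
  gcongr

lemma hasDerivAt_frobeniusSeries (hc : HasPolynomialGrowth c) (hx : 0 ≤ x) (k : ℕ) (hr : r < 0) :
    HasDerivAt (frobeniusSeries c x k) (frobeniusSeries c x (k + 1) r) r := by
  obtain ⟨r₀, hrr₀, hr₀⟩ := exists_between hr
  refine hasDerivAt_tsum_of_isPreconnected (t := Set.Iio r₀)
    (summable_norm_frobeniusSeries hc x (k + 1) hr₀) isOpen_Iio isPreconnected_Iio
    (fun n t _ => ?_) (fun n t ht => norm_frobeniusSeries_term_le _ hx (le_of_lt ht) n)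
    hrr₀ (summable_norm_frobeniusSeries hc x k hr).of_norm hrr₀
  have hlin : HasDerivAt (fun t : ℝ => (n + x) * t) (n + x) t := by
    simpa using (hasDerivAt_id t).const_mul ((n : ℝ) + x)
  exact (hlin.exp.const_mul ((n + x) ^ k * c n)).congr_deriv (by ring)

lemma tendsto_frobeniusSeries_atBot (hc : HasPolynomialGrowth c) (hx : 0 ≤ x) (k : ℕ) :
    Tendsto (frobeniusSeries c x k) atBot (𝓝 (if x = 0 ∧ k = 0 then c 0 else 0)) := by
  rw [← tsum_ite_eq 0 fun _ : ℕ => if x = 0 ∧ k = 0 then c 0 else 0]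
  refine tendsto_tsum_of_dominated_convergence
    (summable_norm_frobeniusSeries hc x k neg_one_lt_zero) (fun n => ?_) ?_
  · by_cases hnx : (n : ℝ) + x = 0
    · obtain ⟨hn, rfl⟩ := (add_eq_zero_iff_of_nonneg n.cast_nonneg hx).mp hnx
      obtain rfl : n = 0 := mod_cast hn
      rcases eq_or_ne k 0 with rfl | hk <;> simp [*]
    · have hpos : 0 < (n : ℝ) + x := by positivity
      have hlim := (Real.tendsto_exp_atBot.comp
        (tendsto_id.const_mul_atBot hpos)).const_mul ((n + x) ^ k * c n)
      have hval : (if n = 0 then if x = 0 ∧ k = 0 then c 0 else 0 else 0) = 0 := by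
        refine ite_eq_right_iff.mpr fun hn => if_neg fun hx => hnx ?_
        simp [hn, hx.1]
      simpa [hval] using hlim
  · filter_upwards [eventually_le_atBot (-1)] with r hr n
      using norm_frobeniusSeries_term_le _ hx hr n

end FrobeniusSeries

section Hypergeometric

open Asymptotics

/-- The coefficients `((1/2 + x)_n / (1 + x)_n)³` of `F4 x`. -/
noncomputable def hypCoeff (x : ℝ) (n : ℕ) : ℝ :=
  ((ascPochhammer ℝ n).eval (1 / 2 + x)) ^ 3 / ((ascPochhammer ℝ n).eval (1 + x)) ^ 3

lemma F4_eq_frobeniusSeries {z : ℝ} (x : ℝ) (hz : 0 < z) :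
    F4 x z = frobeniusSeries (hypCoeff x) x 0 (log z) := by
  refine tsum_congr fun n => ?_
  rw [Real.rpow_def_of_pos hz, mul_comm (log z), hypCoeff]
  ring

lemma hypCoeff_zero (x : ℝ) : hypCoeff x 0 = 1 := by simp [hypCoeff]

variable {x r : ℝ}

lemma hypCoeff_succ (hx : 0 ≤ x) (n : ℕ) :
    (n + 1 + x) ^ 3 * hypCoeff x (n + 1) = (n + 1 / 2 + x) ^ 3 * hypCoeff x n := by
  have hpos : 0 < (ascPochhammer ℝ n).eval (1 + x) := ascPochhammer_pos n _ (by positivity)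
  have hn : (n : ℝ) + 1 + x = 1 + x + n := by ring
  rw [hypCoeff, hypCoeff, ascPochhammer_succ_eval, ascPochhammer_succ_eval, hn]
  field_simp
  ring

lemma hypCoeff_nonneg (hx : 0 ≤ x) (n : ℕ) : 0 ≤ hypCoeff x n := by
  have hnum : 0 < (ascPochhammer ℝ n).eval (1 / 2 + x) := ascPochhammer_pos n _ (by positivity)
  have hden : 0 < (ascPochhammer ℝ n).eval (1 + x) := ascPochhammer_pos n _ (by positivity)
  rw [hypCoeff]
  positivity

lemma hypCoeff_le_one (hx : 0 ≤ x) (n : ℕ) : hypCoeff x n ≤ 1 := by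
  induction n with
  | zero => rw [hypCoeff_zero]
  | succ n ih =>
    refine le_of_mul_le_mul_left ?_ (by positivity : (0 : ℝ) < (n + 1 + x) ^ 3)
    rw [hypCoeff_succ hx]
    gcongr
    · exact hypCoeff_nonneg hx n
    · norm_num

lemma hasPolynomialGrowth_hypCoeff (hx : 0 ≤ x) : HasPolynomialGrowth (hypCoeff x) :=
  HasPolynomialGrowth.of_isBigO_one <| isBigO_of_le _ fun n => by
    simpa [abs_of_nonneg (hypCoeff_nonneg hx n)] using hypCoeff_le_one hx n

/-- With `D = d/dr`, this is `(D³ - eʳ(D + 1/2)³) F = x³ e^(xr)`. -/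
lemma frobeniusSeries_hypCoeff_three (hx : 0 ≤ x) (hr : r < 0) :
    frobeniusSeries (hypCoeff x) x 3 r = x ^ 3 * exp (x * r) + exp r *
      (frobeniusSeries (hypCoeff x) x 3 r + 3 / 2 * frobeniusSeries (hypCoeff x) x 2 r +
        3 / 4 * frobeniusSeries (hypCoeff x) x 1 r +
        1 / 8 * frobeniusSeries (hypCoeff x) x 0 r) := by
  have hsum (k : ℕ) := hasSum_frobeniusSeries (hasPolynomialGrowth_hypCoeff hx) x k hr
  have hshift := ((((hsum 3).add ((hsum 2).mul_left (3 / 2))).add ((hsum 1).mul_left (3 / 4))).add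
    ((hsum 0).mul_left (1 / 8))).mul_left (exp r)
  rw [← hshift.tsum_eq, ← (hsum 3).tsum_eq, (hsum 3).summable.tsum_eq_zero_add]
  congr 1
  · simp [hypCoeff_zero]
  · refine tsum_congr fun n => ?_
    have hexp : exp (((n + 1 : ℕ) + x) * r) = exp r * exp ((n + x) * r) := by
      rw [← Real.exp_add]
      push_cast
      ring_nf
    rw [hexp]
    push_cast
    linear_combination exp r * exp ((n + x) * r) * hypCoeff_succ hx n

end Hypergeometric

section OddSigma

open Filter Asymptotics

/-- The coefficients of `8 √q ∑ σ₃(2n+1) (-q)ⁿ / (2n+1)³ = ∑ oddSigmaCoeff n * q ^ (n + 1/2)`. -/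
noncomputable def oddSigmaCoeff (n : ℕ) : ℝ :=
  8 * (sigma3 (2 * n + 1) * (-1) ^ n / (2 * n + 1) ^ 3)

lemma sigma3_le_pow_four (n : ℕ) : sigma3 n ≤ n ^ 4 := by
  rw [sigma3, ← ArithmeticFunction.sigma_apply]
  exact ArithmeticFunction.sigma_le_pow_succ 3 n

lemma abs_oddSigmaCoeff_le (n : ℕ) : |oddSigmaCoeff n| ≤ 8 * (2 * n + 1) := by
  have hσ : (sigma3 (2 * n + 1) : ℝ) ≤ (2 * n + 1) ^ 4 := mod_cast sigma3_le_pow_four (2 * n + 1)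
  have hpos : (0 : ℝ) < 2 * n + 1 := by positivity
  rw [oddSigmaCoeff, abs_mul, abs_div, abs_mul, abs_pow, abs_neg, abs_one, one_pow, mul_one,
    Nat.abs_cast, abs_pow, abs_of_pos hpos, Nat.abs_ofNat]
  gcongr
  rw [div_le_iff₀ (by positivity)]
  exact hσ.trans_eq (by ring)

lemma hasPolynomialGrowth_oddSigmaCoeff : HasPolynomialGrowth oddSigmaCoeff := by
  refine ⟨1, IsBigO.of_bound 24 ?_⟩
  filter_upwards [eventually_ge_atTop 1] with n hn
  have hn' : (1 : ℝ) ≤ n := mod_cast hn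
  rw [pow_one, Real.norm_eq_abs, Real.norm_natCast]
  linarith [abs_oddSigmaCoeff_le n]

lemma hasSum_sigma3_odd_exp {s : ℝ} (hs : s < 0) :
    HasSum (fun n : ℕ => (sigma3 (2 * n + 1) : ℝ) * (-exp s) ^ n)
      (pronicTheta (exp s) ^ 2 * squareTheta (-exp s) ^ 2 *
        (squareTheta (-exp s) ^ 4 - exp s * pronicTheta (exp s) ^ 4) / 4) := by
  have hsum := hasSum_sigma3_odd (q := (exp s : ℝ)) (mod_cast Real.exp_ne_zero s)
    (by rw [Complex.norm_real]; exact abs_exp_lt_one hs)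
  rw [← Complex.ofReal_neg, pronicTheta_ofReal, squareTheta_ofReal] at hsum
  exact mod_cast hsum

lemma exp_natCast_add_half_mul (n : ℕ) (s : ℝ) :
    exp ((n + 1 / 2) * s) = exp (s / 2) * exp s ^ n := by
  rw [← Real.exp_nat_mul, ← Real.exp_add]
  ring_nf

lemma frobeniusSeries_oddSigmaCoeff_three {s : ℝ} (hs : s < 0) :
    frobeniusSeries oddSigmaCoeff (1 / 2) 3 s =
      ϑ₂ s ^ 2 * ϑ₄ s ^ 2 * (ϑ₄ s ^ 4 - ϑ₂ s ^ 4) / 4 := by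
  have h2 : ϑ₂ s ^ 2 = exp (s / 2) * pronicTheta (exp s) ^ 2 := by
    rw [ϑ₂_eq, mul_pow, ← Real.exp_nat_mul]
    ring_nf
  have hsum := ((hasSum_sigma3_odd_exp hs).mul_left (exp (s / 2))).tsum_eq
  rw [h2, ϑ₂_pow_four, ϑ₄_eq, mul_assoc (exp (s / 2)), mul_assoc (exp (s / 2)), mul_div_assoc,
    ← hsum]
  refine tsum_congr fun n => ?_
  rw [exp_natCast_add_half_mul, oddSigmaCoeff, neg_pow (exp s)]
  field_simp
  ring

end OddSigma

section NomeModulus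

open Filter Topology

/-- `θ₄⁴ - θ₂⁴`, the logarithmic derivative `q d/dq` of `z₄`. -/
noncomputable def quarticGap (s : ℝ) : ℝ := ϑ₄ s ^ 4 - ϑ₂ s ^ 4

/-- `log z₄(eˢ)`. -/
noncomputable def logZ4 (s : ℝ) : ℝ := log (z4 (exp s))

variable {s : ℝ}

lemma z4_exp (hs : s < 0) : z4 (exp s) = 4 * ϑ₂ s ^ 4 * ϑ₄ s ^ 4 / ϑ₃ s ^ 8 := by
  have h3 := (ϑ₃_pos hs).ne'
  have h4 : ϑ₄ s ^ 4 = ϑ₃ s ^ 4 - ϑ₂ s ^ 4 := eq_sub_of_add_eq' (ϑ₃_pow_four hs).symm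
  rw [z4, modLambda, ← ϑ₂, ← ϑ₃, h4]
  field_simp

lemma z4_exp_pos (hs : s < 0) : 0 < z4 (exp s) := by
  have h2 := ϑ₂_pos hs
  have h3 := ϑ₃_pos hs
  have h4 := ϑ₄_ne_zero hs
  rw [z4_exp hs]
  positivity

lemma ϑ₃_pow_eight_mul_one_sub_z4 (hs : s < 0) :
    ϑ₃ s ^ 8 * (1 - z4 (exp s)) = quarticGap s ^ 2 := by
  have h3 := (ϑ₃_pos hs).ne'
  rw [z4_exp hs, mul_sub, mul_div_cancel₀ _ (pow_ne_zero 8 h3), pow_mul (ϑ₃ s) 4 2, ϑ₃_pow_four hs,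
    quarticGap]
  ring

/-- The imaginary quadratic point `τ = i` is fixed by `τ ↦ -1/τ`. -/
lemma ϑ₂_neg_pi_pow_four : ϑ₂ (-π) ^ 4 = ϑ₄ (-π) ^ 4 := by
  have hS := pronicTheta_pow_eight_S (τ := Complex.I) (by simp)
  have hq : Function.Periodic.qParam 2 Complex.I = (exp (-π) : ℝ) := by
    rw [qParam_two, mul_assoc, Complex.I_mul_I]
    push_cast
    ring_nf
  have hτ : -1 / Complex.I = Complex.I := by simp
  rw [hτ, hq, Complex.I_pow_four, one_mul, ← Complex.ofReal_neg, pronicTheta_ofReal,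
    squareTheta_ofReal] at hS
  have hS' : exp (-π) ^ 2 * pronicTheta (exp (-π)) ^ 8 = squareTheta (-exp (-π)) ^ 8 :=
    mod_cast hS
  rw [← sq_eq_sq₀ (by positivity) (by positivity), ϑ₂_pow_four, ϑ₄_eq, mul_pow, ← pow_mul,
    ← pow_mul, hS']

lemma hasDerivAt_ϑ₂_div_ϑ₄_pow_four (hs : s < 0) : HasDerivAt (fun s => ϑ₂ s ^ 4 / ϑ₄ s ^ 4)
    (ϑ₂ s ^ 4 / ϑ₄ s ^ 4 * (ϑ₂ s ^ 4 + ϑ₄ s ^ 4)) s := by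
  have h4 := ϑ₄_ne_zero hs
  refine (((hasDerivAt_ϑ₂ hs).pow 4).div ((hasDerivAt_ϑ₄ hs).pow 4)
    (pow_ne_zero 4 h4)).congr_deriv ?_
  simp only [Pi.pow_apply]
  field_simp
  ring

lemma strictMonoOn_ϑ₂_div_ϑ₄_pow_four :
    StrictMonoOn (fun s => ϑ₂ s ^ 4 / ϑ₄ s ^ 4) (Set.Iio 0) := by
  refine strictMonoOn_of_deriv_pos (convex_Iio 0)
    (fun t ht => (hasDerivAt_ϑ₂_div_ϑ₄_pow_four ht).continuousAt.continuousWithinAt) ?_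
  rw [interior_Iio]
  intro t ht
  have h2 := ϑ₂_pos ht
  have h4 := ϑ₄_ne_zero ht
  rw [(hasDerivAt_ϑ₂_div_ϑ₄_pow_four ht).deriv]
  positivity

lemma neg_of_lt_neg_pi (hs : s < -π) : s < 0 := hs.trans (neg_neg_of_pos Real.pi_pos)

lemma quarticGap_pos (hs : s < -π) : 0 < quarticGap s := by
  have h0 := neg_of_lt_neg_pi hs
  have hπ : -π < 0 := neg_neg_of_pos Real.pi_pos
  have h4 := ϑ₄_ne_zero h0
  have h4π := ϑ₄_ne_zero hπ
  have hlt := strictMonoOn_ϑ₂_div_ϑ₄_pow_four h0 hπ hs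
  simp only [ϑ₂_neg_pi_pow_four] at hlt
  rw [div_self (by positivity), div_lt_one (by positivity)] at hlt
  exact sub_pos.mpr hlt

lemma z4_exp_lt_one (hs : s < -π) : z4 (exp s) < 1 := by
  have h0 := neg_of_lt_neg_pi hs
  have h3 := ϑ₃_pos h0
  have hprod : 0 < ϑ₃ s ^ 8 * (1 - z4 (exp s)) := by
    rw [ϑ₃_pow_eight_mul_one_sub_z4 h0]
    exact pow_pos (quarticGap_pos hs) 2
  exact sub_pos.mp (pos_of_mul_pos_right hprod (by positivity))

lemma hasDerivAt_z4_exp (hs : s < 0) :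
    HasDerivAt (fun s => z4 (exp s)) (z4 (exp s) * quarticGap s) s := by
  have h3 := (ϑ₃_pos hs).ne'
  have heq : (fun t => z4 (exp t)) =ᶠ[𝓝 s] fun t => 4 * ϑ₂ t ^ 4 * ϑ₄ t ^ 4 / ϑ₃ t ^ 8 := by
    filter_upwards [Iio_mem_nhds hs] with t ht using z4_exp ht
  refine (((((hasDerivAt_ϑ₂ hs).pow 4).const_mul 4).mul ((hasDerivAt_ϑ₄ hs).pow 4)).div
    ((hasDerivAt_ϑ₃ hs).pow 8) (pow_ne_zero 8 h3)).congr_of_eventuallyEq heq |>.congr_deriv ?_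
  simp only [Pi.pow_apply, Pi.mul_apply]
  rw [z4_exp hs, quarticGap]
  field_simp
  ring

lemma hasDerivAt_logZ4 (hs : s < 0) : HasDerivAt logZ4 (quarticGap s) s :=
  ((hasDerivAt_z4_exp hs).log (z4_exp_pos hs).ne').congr_deriv
    (mul_div_cancel_left₀ _ (z4_exp_pos hs).ne')

lemma logZ4_neg (hs : s < -π) : logZ4 s < 0 :=
  Real.log_neg (z4_exp_pos (neg_of_lt_neg_pi hs)) (z4_exp_lt_one hs)

lemma exp_half_mul_logZ4 (hs : s < 0) :
    exp (1 / 2 * logZ4 s) = 2 * ϑ₂ s ^ 2 * ϑ₄ s ^ 2 / ϑ₃ s ^ 4 := by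
  have h2 := ϑ₂_pos hs
  have h3 := ϑ₃_pos hs
  rw [← sq_eq_sq₀ (Real.exp_pos _).le (by positivity), ← Real.exp_nat_mul, Nat.cast_ofNat,
    ← mul_assoc, mul_one_div_cancel two_ne_zero, one_mul, logZ4, Real.exp_log (z4_exp_pos hs),
    z4_exp hs]
  ring

lemma tendsto_quarticGap : Tendsto quarticGap atBot (𝓝 1) := by
  simpa [Pi.sub_def] using! (tendsto_ϑ₄.pow 4).sub (tendsto_ϑ₂.pow 4)

lemma tendsto_z4_exp : Tendsto (fun s => z4 (exp s)) atBot (𝓝 0) := by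
  have hlim : Tendsto (fun s => 4 * ϑ₂ s ^ 4 * ϑ₄ s ^ 4 / ϑ₃ s ^ 8) atBot (𝓝 0) := by
    simpa [Pi.div_def] using (((tendsto_ϑ₂.pow 4).const_mul 4).mul (tendsto_ϑ₄.pow 4)).div
      (tendsto_ϑ₃.pow 8) (by norm_num)
  refine hlim.congr' ?_
  filter_upwards [eventually_lt_atBot 0] with s hs using (z4_exp hs).symm

lemma tendsto_logZ4 : Tendsto logZ4 atBot atBot := by
  refine Real.tendsto_log_nhdsGT_zero.comp (tendsto_nhdsWithin_iff.mpr ⟨tendsto_z4_exp, ?_⟩)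
  filter_upwards [eventually_lt_atBot 0] with s hs using z4_exp_pos hs

lemma hasDerivAt_quarticGap (hs : s < 0) : HasDerivAt quarticGap
    (4 * logDeriv ϑ₃ s * quarticGap s - 2 * ϑ₂ s ^ 4 * ϑ₄ s ^ 4) s := by
  refine (((hasDerivAt_ϑ₄ hs).pow 4).sub ((hasDerivAt_ϑ₂ hs).pow 4)).congr_deriv ?_
  rw [quarticGap]
  ring

end NomeModulus

section NormalizedF4

open Filter Topology

lemma eqOn_Iio_of_hasDerivAt_of_tendsto_atBot {f g f' : ℝ → ℝ} {a l : ℝ}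
    (hf : ∀ s < a, HasDerivAt f (f' s) s) (hg : ∀ s < a, HasDerivAt g (f' s) s)
    (hfl : Tendsto f atBot (𝓝 l)) (hgl : Tendsto g atBot (𝓝 l)) : Set.EqOn f g (Set.Iio a) := by
  have hderiv (s : ℝ) (hs : s < a) : HasDerivAt (f - g) 0 s := by
    simpa using (hf s hs).sub (hg s hs)
  obtain ⟨C, hC⟩ := isOpen_Iio.exists_is_const_of_deriv_eq_zero isPreconnected_Iio
    (fun s hs => (hderiv s hs).differentiableAt.differentiableWithinAt)
    (fun s hs => (hderiv s hs).deriv)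
  have hlim : Tendsto (f - g) atBot (𝓝 0) := by simpa [Pi.sub_def] using hfl.sub hgl
  have hconst : Tendsto (f - g) atBot (𝓝 C) := by
    refine tendsto_const_nhds.congr' ?_
    filter_upwards [eventually_lt_atBot a] with s hs using (hC s hs).symm
  intro s hs
  exact sub_eq_zero.mp ((hC s hs).trans (tendsto_nhds_unique hconst hlim))

/-- `(z d/dz)ᵏ F₄(x, z)` at `z = z₄(eˢ)`. -/
noncomputable def eulerF4 (x : ℝ) (k : ℕ) (s : ℝ) : ℝ :=
  frobeniusSeries (hypCoeff x) x k (logZ4 s)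

/-- `F₄(x, z₄) / θ₃⁴`, a solution of a third-order equation in `s = log q` whose homogeneous part
is `y''' = 0`. -/
noncomputable def normF4 (x s : ℝ) : ℝ := eulerF4 x 0 s / ϑ₃ s ^ 4

/-- The derivative of `normF4 x`. -/
noncomputable def normF4Deriv (x s : ℝ) : ℝ :=
  (quarticGap s * eulerF4 x 1 s - 4 * logDeriv ϑ₃ s * eulerF4 x 0 s) / ϑ₃ s ^ 4

/-- The second derivative of `normF4 x`. -/
noncomputable def normF4DerivTwo (x s : ℝ) : ℝ :=
  (quarticGap s ^ 2 * eulerF4 x 2 s -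
    (2 * (ϑ₂ s ^ 4 * ϑ₄ s ^ 4) + 4 * logDeriv ϑ₃ s * quarticGap s) * eulerF4 x 1 s +
    (8 * logDeriv ϑ₃ s ^ 2 - ϑ₂ s ^ 4 * ϑ₄ s ^ 4 / 2) * eulerF4 x 0 s) / ϑ₃ s ^ 4

variable {x s : ℝ}

lemma hasDerivAt_eulerF4 (hx : 0 ≤ x) (k : ℕ) (hs : s < -π) :
    HasDerivAt (eulerF4 x k) (eulerF4 x (k + 1) s * quarticGap s) s :=
  (hasDerivAt_frobeniusSeries (hasPolynomialGrowth_hypCoeff hx) hx k (logZ4_neg hs)).comp s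
    (hasDerivAt_logZ4 (neg_of_lt_neg_pi hs))

lemma quarticGap_sq_mul_eulerF4_three (hx : 0 ≤ x) (hs : s < -π) :
    quarticGap s ^ 2 * eulerF4 x 3 s = ϑ₃ s ^ 8 * x ^ 3 * exp (x * logZ4 s) +
      4 * (ϑ₂ s ^ 4 * ϑ₄ s ^ 4) *
        (3 / 2 * eulerF4 x 2 s + 3 / 4 * eulerF4 x 1 s + 1 / 8 * eulerF4 x 0 s) := by
  have h0 := neg_of_lt_neg_pi hs
  have h3 := (ϑ₃_pos h0).ne'
  have hode : eulerF4 x 3 s = x ^ 3 * exp (x * logZ4 s) + z4 (exp s) *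
      (eulerF4 x 3 s + 3 / 2 * eulerF4 x 2 s + 3 / 4 * eulerF4 x 1 s + 1 / 8 * eulerF4 x 0 s) := by
    rw [← Real.exp_log (z4_exp_pos h0)]
    exact frobeniusSeries_hypCoeff_three hx (logZ4_neg hs)
  have hz : ϑ₃ s ^ 8 * z4 (exp s) = 4 * (ϑ₂ s ^ 4 * ϑ₄ s ^ 4) := by
    rw [z4_exp h0]
    field_simp
  rw [← ϑ₃_pow_eight_mul_one_sub_z4 h0, ← hz]
  linear_combination ϑ₃ s ^ 8 * hode

lemma hasDerivAt_normF4 (hx : 0 ≤ x) (hs : s < -π) :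
    HasDerivAt (normF4 x) (normF4Deriv x s) s := by
  have h0 := neg_of_lt_neg_pi hs
  have h3 := (ϑ₃_pos h0).ne'
  refine ((hasDerivAt_eulerF4 hx 0 hs).div ((hasDerivAt_ϑ₃ h0).pow 4)
    (pow_ne_zero 4 h3)).congr_deriv ?_
  simp only [Pi.pow_apply]
  rw [normF4Deriv]
  field_simp
  ring

lemma hasDerivAt_normF4Deriv (hx : 0 ≤ x) (hs : s < -π) :
    HasDerivAt (normF4Deriv x) (normF4DerivTwo x s) s := by
  have h0 := neg_of_lt_neg_pi hs
  have h3 := (ϑ₃_pos h0).ne'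
  refine ((((hasDerivAt_quarticGap h0).mul (hasDerivAt_eulerF4 hx 1 hs)).sub
    (((hasDerivAt_logDeriv_ϑ₃ h0).const_mul 4).mul (hasDerivAt_eulerF4 hx 0 hs))).div
    ((hasDerivAt_ϑ₃ h0).pow 4) (pow_ne_zero 4 h3)).congr_deriv ?_
  simp only [Pi.pow_apply, Pi.mul_apply, Pi.sub_apply]
  rw [normF4DerivTwo]
  field_simp
  ring

lemma hasDerivAt_normF4DerivTwo (hx : 0 ≤ x) (hs : s < -π) : HasDerivAt (normF4DerivTwo x)
    (x ^ 3 * exp (x * logZ4 s) * quarticGap s * ϑ₃ s ^ 4) s := by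
  have h0 := neg_of_lt_neg_pi hs
  have h3 := (ϑ₃_pos h0).ne'
  have hprod := ((hasDerivAt_ϑ₂ h0).pow 4).mul ((hasDerivAt_ϑ₄ h0).pow 4)
  have hgap := hasDerivAt_quarticGap h0
  have hlog := hasDerivAt_logDeriv_ϑ₃ h0
  refine (((((hgap.pow 2).mul (hasDerivAt_eulerF4 hx 2 hs)).sub
    (((hprod.const_mul 2).add ((hlog.const_mul 4).mul hgap)).mul (hasDerivAt_eulerF4 hx 1 hs))).add
    ((((hlog.pow 2).const_mul 8).sub (hprod.div_const 2)).mul (hasDerivAt_eulerF4 hx 0 hs))).div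
    ((hasDerivAt_ϑ₃ h0).pow 4) (pow_ne_zero 4 h3)).congr_deriv ?_
  simp only [Pi.pow_apply, Pi.mul_apply, Pi.sub_apply, Pi.add_apply]
  rw [div_eq_iff (pow_ne_zero 2 (pow_ne_zero 4 h3))]
  have hgap_def : quarticGap s = ϑ₄ s ^ 4 - ϑ₂ s ^ 4 := rfl
  linear_combination ϑ₃ s ^ 4 * quarticGap s * quarticGap_sq_mul_eulerF4_three hx hs +
    ϑ₂ s ^ 4 * ϑ₄ s ^ 4 * ϑ₃ s ^ 4 * (2 * eulerF4 x 1 s + eulerF4 x 0 s / 2) * hgap_def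

lemma tendsto_eulerF4 (hx : 0 ≤ x) (k : ℕ) :
    Tendsto (eulerF4 x k) atBot (𝓝 (if x = 0 ∧ k = 0 then 1 else 0)) := by
  rw [← hypCoeff_zero x]
  exact (tendsto_frobeniusSeries_atBot (hasPolynomialGrowth_hypCoeff hx) hx k).comp tendsto_logZ4

lemma tendsto_normF4 (hx : 0 ≤ x) :
    Tendsto (normF4 x) atBot (𝓝 (if x = 0 then 1 else 0)) := by
  simpa [Pi.div_def] using! (tendsto_eulerF4 hx 0).div (tendsto_ϑ₃.pow 4) (by norm_num)

lemma tendsto_normF4Deriv (hx : 0 ≤ x) : Tendsto (normF4Deriv x) atBot (𝓝 0) := by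
  simpa [Pi.div_def] using!
    ((tendsto_quarticGap.mul (tendsto_eulerF4 hx 1)).sub
      ((tendsto_logDeriv_ϑ₃.const_mul 4).mul (tendsto_eulerF4 hx 0))).div
        (tendsto_ϑ₃.pow 4) (by norm_num)

lemma tendsto_normF4DerivTwo (hx : 0 ≤ x) : Tendsto (normF4DerivTwo x) atBot (𝓝 0) := by
  have hprod := (tendsto_ϑ₂.pow 4).mul (tendsto_ϑ₄.pow 4)
  simpa [Pi.div_def] using!
    ((((tendsto_quarticGap.pow 2).mul (tendsto_eulerF4 hx 2)).sub (((hprod.const_mul 2).add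
      ((tendsto_logDeriv_ϑ₃.const_mul 4).mul tendsto_quarticGap)).mul (tendsto_eulerF4 hx 1))).add
      ((((tendsto_logDeriv_ϑ₃.pow 2).const_mul 8).sub (hprod.div_const 2)).mul
        (tendsto_eulerF4 hx 0))).div (tendsto_ϑ₃.pow 4) (by norm_num)

lemma normF4_eqOn_of_jet (hx : 0 ≤ x) {g : ℕ → ℝ → ℝ}
    (hg : ∀ k, ∀ s < -π, HasDerivAt (g k) (g (k + 1) s) s)
    (hg3 : ∀ s < -π, g 3 s = x ^ 3 * exp (x * logZ4 s) * quarticGap s * ϑ₃ s ^ 4)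
    (hlim : ∀ k, Tendsto (g k) atBot (𝓝 (if x = 0 ∧ k = 0 then 1 else 0))) :
    Set.EqOn (normF4 x) (g 0) (Set.Iio (-π)) := by
  have htwo : Set.EqOn (normF4DerivTwo x) (g 2) (Set.Iio (-π)) :=
    eqOn_Iio_of_hasDerivAt_of_tendsto_atBot (fun s hs => hasDerivAt_normF4DerivTwo hx hs)
      (fun s hs => (hg 2 s hs).congr_deriv (hg3 s hs)) (tendsto_normF4DerivTwo hx)
      (by simpa using hlim 2)
  have hone : Set.EqOn (normF4Deriv x) (g 1) (Set.Iio (-π)) :=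
    eqOn_Iio_of_hasDerivAt_of_tendsto_atBot (fun s hs => hasDerivAt_normF4Deriv hx hs)
      (fun s hs => (hg 1 s hs).congr_deriv (htwo hs).symm) (tendsto_normF4Deriv hx)
      (by simpa using hlim 1)
  exact eqOn_Iio_of_hasDerivAt_of_tendsto_atBot (fun s hs => hasDerivAt_normF4 hx hs)
    (fun s hs => (hg 0 s hs).congr_deriv (hone hs).symm) (tendsto_normF4 hx)
    (by simpa using hlim 0)

lemma normF4_zero (hs : s < -π) : normF4 0 s = 1 := by
  refine normF4_eqOn_of_jet le_rfl (g := fun k _ => if k = 0 then 1 else 0) (fun k s _ => ?_)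
    (fun s _ => by simp) (fun k => by simp) hs
  simpa using hasDerivAt_const s (if k = 0 then (1 : ℝ) else 0)

lemma normF4_half (hs : s < -π) :
    normF4 (1 / 2) s = frobeniusSeries oddSigmaCoeff (1 / 2) 0 s := by
  have hhalf : (0 : ℝ) ≤ 1 / 2 := by norm_num
  refine normF4_eqOn_of_jet hhalf (fun k s hs => hasDerivAt_frobeniusSeries
    hasPolynomialGrowth_oddSigmaCoeff hhalf k (neg_of_lt_neg_pi hs)) (fun s hs => ?_)
    (fun k => ?_) hs
  · have h0 := neg_of_lt_neg_pi hs
    have h3 := (ϑ₃_pos h0).ne'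
    rw [frobeniusSeries_oddSigmaCoeff_three h0, exp_half_mul_logZ4 h0, quarticGap]
    field_simp
    ring
  · simpa using tendsto_frobeniusSeries_atBot hasPolynomialGrowth_oddSigmaCoeff hhalf k

lemma F4_z4_exp (x : ℝ) (hs : s < 0) : F4 x (z4 (exp s)) = normF4 x s * ϑ₃ s ^ 4 := by
  rw [F4_eq_frobeniusSeries x (z4_exp_pos hs), normF4, div_mul_cancel₀ _
    (pow_ne_zero 4 (ϑ₃_pos hs).ne'), eulerF4, logZ4]

lemma frobeniusSeries_oddSigmaCoeff_zero (s : ℝ) :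
    frobeniusSeries oddSigmaCoeff (1 / 2) 0 s = 8 * √(exp s) *
      ∑' n : ℕ, (sigma3 (2 * n + 1) : ℝ) * (-exp s) ^ n / (2 * (n : ℝ) + 1) ^ 3 := by
  rw [← tsum_mul_left]
  refine tsum_congr fun n => ?_
  rw [exp_natCast_add_half_mul, oddSigmaCoeff, Real.exp_half, neg_pow (exp s)]
  ring

end NormalizedF4

theorem stmt_4 :
    ∀ q ∈ Set.Ioo (0 : ℝ) (Real.exp (-π)),
      (0 < z4 q ∧ z4 q < 1) ∧
      F4 (1 / 2) (z4 q) =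
        F4 0 (z4 q) * (8 * Real.sqrt q *
          ∑' n : ℕ, (sigma3 (2 * n + 1) : ℝ) * (-q) ^ n / (2 * (n : ℝ) + 1) ^ 3) := by
  rintro q ⟨hq, hqπ⟩
  obtain ⟨s, rfl⟩ : ∃ s, exp s = q := ⟨log q, Real.exp_log hq⟩
  have hs : s < -π := Real.exp_lt_exp.mp hqπ
  have hs0 := neg_of_lt_neg_pi hs
  refine ⟨⟨z4_exp_pos hs0, z4_exp_lt_one hs⟩, ?_⟩
  rw [F4_z4_exp _ hs0, F4_z4_exp _ hs0, normF4_zero hs, normF4_half hs,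
    frobeniusSeries_oddSigmaCoeff_zero]
  ring
end
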